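/- arXiv:1209.3074 — 9 statements merged into one kernel-verified Lean document; each statement's English description precedes it below -/
import Mathlib

section
/- Let N ≥ 3 be an integer, a ∈ ℝ, and let f : ℝ → ℝ be continuous with f(0) = 0; set F(s) = ∫₀^s f(t) dt. Let u : ℝ^N → ℝ be a C² function satisfying −Δu(x) + a·u(x) = f(u(x)) for every x ∈ ℝ^N, and assume there are constants C, c > 0 such that |u(x)| + ‖∇u(x)‖ ≤ C·exp(−c‖x‖) for all x ∈ ℝ^N. Then u satisfies the Pohozaev identity ((N−2)/2)·∫_{ℝ^N} ‖∇u(x)‖² dx = N·∫_{ℝ^N} ( F(u(x)) − (a/2)·u(x)² ) dx. -/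
open MeasureTheory Real

/-- The Laplacian of `u` at `x`: the trace of the second derivative,
computed as the sum of pure second derivatives along the coordinate directions. -/
noncomputable def lap {N : ℕ} (u : EuclideanSpace ℝ (Fin N) → ℝ)
    (x : EuclideanSpace ℝ (Fin N)) : ℝ :=
  ∑ i, iteratedFDeriv ℝ 2 u x ![EuclideanSpace.single i 1, EuclideanSpace.single i 1]


theorem integrable_expdecay (N : ℕ) (c : ℝ) (hc : 0 < c) :
    Integrable (fun x : EuclideanSpace ℝ (Fin N) => (1 + ‖x‖) * Real.exp (-c * ‖x‖)) := by
  have h1 : Integrable (fun x : EuclideanSpace ℝ (Fin N) => (1 + ‖x‖) ^ (-((N:ℝ) + 1))) :=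
    integrable_one_add_norm (by simp)
  refine (h1.const_mul ((N+2).factorial * Real.exp c / c ^ (N+2))).mono' (by fun_prop) ?_
  refine Filter.Eventually.of_forall fun x => ?_
  have ht : 0 ≤ ‖x‖ := norm_nonneg x
  generalize ‖x‖ = t at ht
  have h2 := Real.pow_div_factorial_le_exp (c * (1 + t)) (by positivity) (N + 2)
  have h3 : (1 + t) ^ (-((N:ℝ) + 1)) = ((1 + t) ^ (N+1))⁻¹ := by
    rw [Real.rpow_neg (by positivity)]; norm_cast
  have h4 : Real.exp (-c * t) = Real.exp c * (Real.exp (c * (1 + t)))⁻¹ := by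
    rw [← Real.exp_neg, ← Real.exp_add]; congr 1; ring
  rw [h3, Real.norm_of_nonneg (by positivity), h4]
  have h5 : (Real.exp (c * (1 + t)))⁻¹ ≤ ((c * (1 + t)) ^ (N+2) / (N+2).factorial)⁻¹ :=
    inv_anti₀ (by positivity) h2
  calc (1 + t) * (Real.exp c * (Real.exp (c * (1 + t)))⁻¹)
      ≤ (1 + t) * (Real.exp c * ((c * (1 + t)) ^ (N+2) / (N+2).factorial)⁻¹) := by gcongr
    _ = _ := by
      field_simp
      rw [mul_pow]; ring

theorem cutoff_div {N : ℕ} (V : Fin N → EuclideanSpace ℝ (Fin N) → ℝ)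
    (hV : ∀ i, ContDiff ℝ 1 (V i)) (hint : ∀ i, Integrable (V i))
    (hdiv : Integrable (fun x => ∑ i, fderiv ℝ (V i) x (EuclideanSpace.single i 1))) :
    ∫ x, ∑ i, fderiv ℝ (V i) x (EuclideanSpace.single i 1) = 0 := by
  let χ : ContDiffBump (0 : EuclideanSpace ℝ (Fin N)) := ⟨1, 2, by norm_num, by norm_num⟩
  have hχ : ContDiff ℝ 1 (χ : EuclideanSpace ℝ (Fin N) → ℝ) := χ.contDiff
  have hχc : HasCompactSupport (χ : EuclideanSpace ℝ (Fin N) → ℝ) := χ.hasCompactSupport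
  obtain ⟨M, hM⟩ := (hχ.continuous_fderiv one_ne_zero).bounded_above_of_compact_support
    (hχc.fderiv (𝕜 := ℝ))
  let r : ℕ → ℝ := fun n => ((n:ℝ) + 1)⁻¹
  have hr : ∀ n, r n ≠ 0 := fun n => by positivity
  have hrp : ∀ n, 0 < r n := fun n => by positivity
  have hr0 : Filter.Tendsto r Filter.atTop (nhds 0) := by
    simpa [r] using tendsto_one_div_add_atTop_nhds_zero_nat (𝕜 := ℝ)
  let φ : ℕ → EuclideanSpace ℝ (Fin N) → ℝ := fun n x => χ (r n • x)
  have hφ : ∀ n, ContDiff ℝ 1 (φ n) := fun n => hχ.comp (contDiff_const_smul _)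
  have hφc : ∀ n, HasCompactSupport (φ n) := fun n => hχc.comp_smul (hr n)
  have hφd : ∀ n x v, fderiv ℝ (φ n) x v = r n * fderiv ℝ χ (r n • x) v := by
    intro n x v
    have h1 : HasFDerivAt (φ n) ((fderiv ℝ χ (r n • x)).comp
        (r n • ContinuousLinearMap.id ℝ _)) x :=
      ((hχ.differentiable one_ne_zero) (r n • x)).hasFDerivAt.comp x
        ((hasFDerivAt_id x).const_smul (r n))
    rw [h1.fderiv]; simp
  have hVd : ∀ i v, Continuous fun x => fderiv ℝ (V i) x v := fun i v =>
    ((hV i).continuous_fderiv one_ne_zero).clm_apply continuous_const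
  have hφdc : ∀ n v, Continuous fun x => fderiv ℝ (φ n) x v := fun n v =>
    ((hφ n).continuous_fderiv one_ne_zero).clm_apply continuous_const
  have hint1 : ∀ n i v, Integrable fun x => φ n x * fderiv ℝ (V i) x v := fun n i v =>
    ((hφ n).continuous.mul (hVd i v)).integrable_of_hasCompactSupport (hφc n).mul_right
  have hint2 : ∀ n i v, Integrable fun x => fderiv ℝ (φ n) x v * V i x := fun n i v =>
    ((hφdc n v).mul (hV i).continuous).integrable_of_hasCompactSupport
      ((hφc n).fderiv_apply (𝕜 := ℝ) v).mul_right
  have key : ∀ n, ∫ x, φ n x * ∑ i, fderiv ℝ (V i) x (EuclideanSpace.single i 1)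
      = - ∑ i, ∫ x, fderiv ℝ (φ n) x (EuclideanSpace.single i 1) * V i x := by
    intro n
    simp_rw [Finset.mul_sum]
    rw [integral_finsetSum _ (fun i _ => hint1 n i _), ← Finset.sum_neg_distrib]
    refine Finset.sum_congr rfl fun i _ => ?_
    refine integral_mul_fderiv_eq_neg_fderiv_mul_of_integrable (hint2 n i _) (hint1 n i _) ?_ 
      (fun x _ => (hφ n).differentiable one_ne_zero x)
      (fun x _ => (hV i).differentiable one_ne_zero x)
    exact ((hφ n).continuous.mul (hV i).continuous).integrable_of_hasCompactSupport
      (hφc n).mul_right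
  have lim1 : Filter.Tendsto (fun n => ∫ x, φ n x * ∑ i, fderiv ℝ (V i) x
      (EuclideanSpace.single i 1)) Filter.atTop
      (nhds (∫ x, ∑ i, fderiv ℝ (V i) x (EuclideanSpace.single i 1))) := by
    refine tendsto_integral_of_dominated_convergence _ (fun n => ?_) hdiv.norm (fun n => ?_) ?_
    · exact ((hφ n).continuous.mul (continuous_finsetSum _ fun i _ =>
        hVd i _)).aestronglyMeasurable
    · refine Filter.Eventually.of_forall fun x => ?_
      rw [norm_mul]
      refine mul_le_of_le_one_left (norm_nonneg _) ?_
      rw [Real.norm_of_nonneg χ.nonneg]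
      exact χ.le_one
    · refine Filter.Eventually.of_forall fun x => ?_
      have h1 : Filter.Tendsto (fun n => φ n x) Filter.atTop (nhds 1) := by
        have h2 : χ (0 : EuclideanSpace ℝ (Fin N)) = 1 :=
          χ.one_of_mem_closedBall (by simp [χ])
        have h3 : Filter.Tendsto (fun n => r n • x) Filter.atTop (nhds 0) := by
          simpa using hr0.smul_const x
        have := (hχ.continuous.tendsto 0).comp h3
        rwa [h2] at this
      simpa using h1.mul_const (∑ i, fderiv ℝ (V i) x (EuclideanSpace.single i 1))
  have lim2 : Filter.Tendsto (fun n => - ∑ i, ∫ x, fderiv ℝ (φ n) x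
      (EuclideanSpace.single i 1) * V i x) Filter.atTop (nhds 0) := by
    have h : ∀ i, Filter.Tendsto (fun n => ∫ x, fderiv ℝ (φ n) x
      (EuclideanSpace.single i 1) * V i x) Filter.atTop (nhds 0) := by
      intro i
      have hb : Filter.Tendsto (fun n => r n * (M * ∫ x, ‖V i x‖)) Filter.atTop (nhds 0) := by
        simpa using hr0.mul_const (M * ∫ x, ‖V i x‖)
      refine squeeze_zero_norm (fun n => ?_) hb
      rw [← integral_const_mul, ← integral_const_mul]
      refine norm_integral_le_of_norm_le (((hint i).norm.const_mul _).const_mul _) ?_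
      refine Filter.Eventually.of_forall fun x => ?_
      rw [norm_mul, hφd, norm_mul, Real.norm_of_nonneg (hrp n).le, mul_assoc]
      have h1 : ‖fderiv ℝ χ (r n • x) (EuclideanSpace.single i 1)‖ ≤ M := by
        have := (fderiv ℝ χ (r n • x)).le_opNorm (EuclideanSpace.single i 1)
        simp only [EuclideanSpace.norm_single, norm_one, mul_one] at this
        exact this.trans (hM _)
      have := (hrp n).le
      gcongr
    simpa using (tendsto_finsetSum Finset.univ fun i _ => h i).neg
  simp_rw [key] at lim1
  exact tendsto_nhds_unique lim1 lim2

theorem pohozaev_identity {N : ℕ} (hN : 3 ≤ N) (a : ℝ) (f : ℝ → ℝ)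
    (hf : Continuous f) (hf0 : f 0 = 0)
    (F : ℝ → ℝ) (hF : ∀ s : ℝ, F s = ∫ t in (0:ℝ)..s, f t)
    (u : EuclideanSpace ℝ (Fin N) → ℝ) (hu : ContDiff ℝ 2 u)
    (heq : ∀ x, -lap u x + a * u x = f (u x))
    (C c : ℝ) (hC : 0 < C) (hc : 0 < c)
    (hdecay : ∀ x, |u x| + ‖gradient u x‖ ≤ C * Real.exp (-c * ‖x‖)) :
    ((N : ℝ) - 2) / 2 * ∫ x, ‖gradient u x‖ ^ 2 =
      (N : ℝ) * ∫ x, (F (u x) - a / 2 * u x ^ 2) := by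
  -- notation
  let e : Fin N → EuclideanSpace ℝ (Fin N) := fun i => EuclideanSpace.single i 1
  have he : ∀ i, ‖e i‖ = 1 := fun i => by simp [e]
  let D := fderiv ℝ u
  let H := fderiv ℝ D
  let G : ℝ → ℝ := fun s => F s - a / 2 * s ^ 2
  have hu1 : ContDiff ℝ 1 u := hu.of_le (by norm_num)
  have hD : ContDiff ℝ 1 D := hu.fderiv_right (by norm_num)
  have hud : ∀ x, HasFDerivAt u (D x) x := fun x =>
    (hu1.differentiable one_ne_zero x).hasFDerivAt
  have hDd : ∀ x, HasFDerivAt D (H x) x := fun x =>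
    (hD.differentiable one_ne_zero x).hasFDerivAt
  have hsymm : ∀ x v w, H x v w = H x w v := fun x v w =>
    second_derivative_symmetric hud (hDd x) v w
  -- the primitive
  have hGd : ∀ s, HasDerivAt G (f s - a * s) s := by
    intro s
    have h1 : HasDerivAt F (f s) s := by
      rw [show F = fun s => ∫ t in (0:ℝ)..s, f t from funext hF]
      exact intervalIntegral.integral_hasDerivAt_right (hf.intervalIntegrable _ _)
        (hf.stronglyMeasurableAtFilter _ _) hf.continuousAt
    have h2 : HasDerivAt (fun s : ℝ => a / 2 * s ^ 2) (a * s) s := by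
      refine ((hasDerivAt_pow 2 s).const_mul (a / 2)).congr_deriv ?_
      norm_num
      ring
    exact h1.sub h2
  have hG : ContDiff ℝ 1 G := by
    rw [contDiff_one_iff_deriv]
    refine ⟨fun s => (hGd s).differentiableAt, ?_⟩
    rw [show deriv G = fun s => f s - a * s from funext fun s => (hGd s).deriv]
    fun_prop
  -- gradient
  have hgrad : ∀ x, ‖gradient u x‖ = ‖D x‖ := fun x => by simp [gradient, D]
  have hgradsq : ∀ x, ‖gradient u x‖ ^ 2 = ∑ j, D x (e j) ^ 2 := by
    intro x
    rw [EuclideanSpace.real_norm_sq_eq]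
    refine Finset.sum_congr rfl fun j _ => ?_
    have : D x (e j) = inner ℝ (gradient u x) (e j) := by simp [gradient, D]
    rw [this]
    simp only [e, EuclideanSpace.inner_single_right]
    simp
  -- bounds
  have hE1 : ∀ x : EuclideanSpace ℝ (Fin N), Real.exp (-c * ‖x‖) ≤ 1 := fun x => by
    rw [Real.exp_le_one_iff]
    have := norm_nonneg x
    nlinarith
  have hub : ∀ x, |u x| ≤ C * Real.exp (-c * ‖x‖) := fun x => by
    have := norm_nonneg (gradient u x); linarith [hdecay x]
  have hDb : ∀ x, ‖D x‖ ≤ C * Real.exp (-c * ‖x‖) := fun x => by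
    have := abs_nonneg (u x); rw [← hgrad]; linarith [hdecay x]
  have huC : ∀ x, |u x| ≤ C := fun x => (hub x).trans (by nlinarith [hE1 x])
  have hDC : ∀ x, ‖D x‖ ≤ C := fun x => (hDb x).trans (by nlinarith [hE1 x])
  have hD2 : ∀ x, ‖D x‖ ^ 2 ≤ C ^ 2 * Real.exp (-c * ‖x‖) := fun x => by
    nlinarith [hDb x, hDC x, norm_nonneg (D x)]
  obtain ⟨K, hK0, hK⟩ : ∃ K, 0 ≤ K ∧ ∀ x, |G (u x)| ≤ K * Real.exp (-c * ‖x‖) := by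
    obtain ⟨M, hM⟩ := (isCompact_Icc (a := -C) (b := C)).exists_bound_of_continuousOn
      (f := fun s => f s - a * s) (by fun_prop)
    have hM0 : 0 ≤ M := (norm_nonneg _).trans (hM 0 ⟨by linarith, hC.le⟩)
    refine ⟨M * C, by positivity, fun x => ?_⟩
    have hG0 : G 0 = 0 := by simp [G, hF]
    have := (convex_Icc (-C) C).norm_image_sub_le_of_norm_hasDerivWithin_le
      (f := G) (f' := fun s => f s - a * s) (C := M) (x := 0) (y := u x)
      (fun s _ => (hGd s).hasDerivWithinAt) hM ⟨by linarith, hC.le⟩ (abs_le.1 (huC x))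
    rw [hG0, sub_zero, sub_zero, Real.norm_eq_abs, Real.norm_eq_abs] at this
    calc _ ≤ _ := this
      _ ≤ M * (C * Real.exp (-c * ‖x‖)) := by gcongr; exact hub x
      _ = _ := by ring
  have hI := integrable_expdecay N c hc
  have hcD : Continuous D := hD.continuous
  have hcG : Continuous fun x => G (u x) := hG.continuous.comp hu.continuous
  have hIG : Integrable fun x => G (u x) := by
    refine (hI.const_mul K).mono' hcG.aestronglyMeasurable (Filter.Eventually.of_forall fun x => ?_)
    refine (hK x).trans ?_
    have := norm_nonneg x
    have : 0 ≤ ‖x‖ * Real.exp (-c * ‖x‖) := by positivity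
    nlinarith
  have hID : Integrable fun x => ‖gradient u x‖ ^ 2 := by
    simp_rw [hgrad]
    refine (hI.const_mul (C ^ 2)).mono' (by fun_prop) (Filter.Eventually.of_forall fun x => ?_)
    rw [Real.norm_of_nonneg (by positivity)]
    refine (hD2 x).trans ?_
    have := norm_nonneg x
    have : 0 ≤ ‖x‖ * Real.exp (-c * ‖x‖) := by positivity
    have := sq_nonneg C
    gcongr
    nlinarith
  -- the vector field
  let V : Fin N → EuclideanSpace ℝ (Fin N) → ℝ := fun i x =>
    D x x * D x (e i) + x i * (G (u x) - 1 / 2 * ∑ j, D x (e j) ^ 2)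
  have hVc : ∀ i, ContDiff ℝ 1 (V i) := by
    intro i
    have h1 : ContDiff ℝ 1 fun x => G (u x) := hG.comp hu1
    have h2 : ∀ j, ContDiff ℝ 1 fun x => D x (e j) := fun j => hD.clm_apply contDiff_const
    have h3 : ContDiff ℝ 1 fun x => D x x := hD.clm_apply contDiff_id
    have h4 : ContDiff ℝ 1 fun x : EuclideanSpace ℝ (Fin N) => x i := by fun_prop
    exact (h3.mul (h2 i)).add (h4.mul (h1.sub (contDiff_const.mul
      (ContDiff.sum fun j _ => (h2 j).pow 2))))
  have hVi : ∀ i, Integrable (V i) := by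
    intro i
    refine (hI.const_mul (3 / 2 * C ^ 2 + K)).mono' (hVc i).continuous.aestronglyMeasurable
      (Filter.Eventually.of_forall fun x => ?_)
    have b1 : |D x x| ≤ ‖D x‖ * ‖x‖ := (D x).le_opNorm x
    have b2 : |D x (e i)| ≤ ‖D x‖ := by
      have := (D x).le_opNorm (e i); rwa [he, mul_one] at this
    have b3 : |x i| ≤ ‖x‖ := PiLp.norm_apply_le x i
    have b4 : |G (u x) - 1 / 2 * ∑ j, D x (e j) ^ 2| ≤ (K + 1 / 2 * C ^ 2) * Real.exp (-c * ‖x‖) := by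
      rw [← hgradsq, hgrad]
      have h1 := hD2 x
      have h2 := abs_le.1 (hK x)
      have h3 := sq_nonneg ‖D x‖
      rw [abs_le]; constructor <;> linarith
    have hx := norm_nonneg x
    have hE := Real.exp_pos (-c * ‖x‖)
    calc ‖V i x‖ ≤ |D x x| * |D x (e i)| + |x i| * |G (u x) - 1 / 2 * ∑ j, D x (e j) ^ 2| := by
          rw [← abs_mul, ← abs_mul]; exact abs_add_le _ _
      _ ≤ (‖D x‖ * ‖x‖) * ‖D x‖ + ‖x‖ * ((K + 1 / 2 * C ^ 2) * Real.exp (-c * ‖x‖)) := by gcongr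
      _ = ‖D x‖ ^ 2 * ‖x‖ + ‖x‖ * ((K + 1 / 2 * C ^ 2) * Real.exp (-c * ‖x‖)) := by ring
      _ ≤ (C ^ 2 * Real.exp (-c * ‖x‖)) * ‖x‖
          + ‖x‖ * ((K + 1 / 2 * C ^ 2) * Real.exp (-c * ‖x‖)) := by gcongr; exact hD2 x
      _ = (3 / 2 * C ^ 2 + K) * (‖x‖ * Real.exp (-c * ‖x‖)) := by ring
      _ ≤ _ := by gcongr; linarith
  have hVd : ∀ i x, fderiv ℝ (V i) x (e i) =
      (H x (e i) x + D x (e i)) * D x (e i) + D x x * H x (e i) (e i)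
      + (G (u x) - 1 / 2 * ∑ j, D x (e j) ^ 2)
      + x i * ((f (u x) - a * u x) * D x (e i) - ∑ j, D x (e j) * H x (e i) (e j)) := by
    intro i x
    have h1 : HasFDerivAt (fun x => G (u x)) ((f (u x) - a * u x) • D x) x :=
      (hGd (u x)).comp_hasFDerivAt x (hud x)
    have h2 : ∀ j, HasFDerivAt (fun x => D x (e j)) _ x := fun j =>
      (hDd x).clm_apply (hasFDerivAt_const (e j) x)
    have h3 : HasFDerivAt (fun x => D x x) _ x := (hDd x).clm_apply (hasFDerivAt_id x)
    have h4 : HasFDerivAt (fun x : EuclideanSpace ℝ (Fin N) => x i)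
      (EuclideanSpace.proj i : EuclideanSpace ℝ (Fin N) →L[ℝ] ℝ) x :=
      (EuclideanSpace.proj i : EuclideanSpace ℝ (Fin N) →L[ℝ] ℝ).hasFDerivAt
    have h5 : HasFDerivAt (V i) _ x := (h3.mul (h2 i)).add (h4.mul (h1.sub
      ((HasFDerivAt.fun_sum (u := Finset.univ) fun j _ => (h2 j).pow 2).const_mul (1 / 2))))
    rw [h5.fderiv]
    have hei : (e i) i = 1 := by simp [e]
    simp [hei, Finset.mul_sum]
    ring_nf
  have hdiv : ∀ x, ∑ i, fderiv ℝ (V i) x (e i) =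
      N * G (u x) - ((N : ℝ) - 2) / 2 * ‖gradient u x‖ ^ 2 := by
    intro x
    have hx : ∑ i, x i • e i = x := by
      ext k; simp [e, Finset.sum_apply, Pi.single_apply]
    have hlin : ∀ (L : EuclideanSpace ℝ (Fin N) →L[ℝ] ℝ), L x = ∑ i, x i * L (e i) := by
      intro L
      conv_lhs => rw [← hx]
      simp
    have hlap : ∑ i, H x (e i) (e i) = a * u x - f (u x) := by
      rw [← heq x]
      simp [lap, iteratedFDeriv_two_apply, H, D, e]
    have hcross : ∑ i, H x (e i) x * D x (e i) =
        ∑ i, x i * ∑ j, D x (e j) * H x (e i) (e j) := by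
      simp_rw [Finset.mul_sum]
      rw [Finset.sum_comm]
      refine Finset.sum_congr rfl fun j _ => ?_
      rw [hlin (H x (e j)), Finset.sum_mul]
      refine Finset.sum_congr rfl fun i _ => ?_
      rw [hsymm x (e i) (e j)]; ring
    simp_rw [hVd, hgradsq]
    set S := ∑ j, D x (e j) ^ 2 with hS
    have : ∀ i, (H x (e i) x + D x (e i)) * D x (e i) + D x x * H x (e i) (e i)
      + (G (u x) - 1 / 2 * S)
      + x i * ((f (u x) - a * u x) * D x (e i) - ∑ j, D x (e j) * H x (e i) (e j))
      = H x (e i) x * D x (e i) + D x (e i) ^ 2 + D x x * H x (e i) (e i)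
      + (G (u x) - 1 / 2 * S) + (f (u x) - a * u x) * (x i * D x (e i))
      - x i * ∑ j, D x (e j) * H x (e i) (e j) := fun i => by ring
    simp_rw [this]
    rw [Finset.sum_sub_distrib, Finset.sum_add_distrib, Finset.sum_add_distrib,
      Finset.sum_add_distrib, Finset.sum_add_distrib, ← Finset.mul_sum, ← Finset.mul_sum,
      ← hlin (D x), hcross, hlap, ← hS]
    simp
    ring
  have hI2 : Integrable fun x => ∑ i, fderiv ℝ (V i) x (e i) := by
    simp_rw [hdiv]
    exact (hIG.const_mul _).sub (hID.const_mul _)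
  have hfin := cutoff_div V hVc hVi hI2
  change ∫ x, ∑ i, fderiv ℝ (V i) x (e i) = 0 at hfin
  simp_rw [hdiv] at hfin
  rw [integral_sub (hIG.const_mul _) (hID.const_mul _), integral_const_mul,
    integral_const_mul] at hfin
  change _ = (N : ℝ) * ∫ x, G (u x)
  linarith
end

section
/- Let N ≥ 3 be an integer, a ∈ ℝ, and let f : ℝ → ℝ be continuous with f(0) = 0; set F(s) = ∫₀^s f(t) dt. Let u : ℝ^N → ℝ be a C² function satisfying −Δu(x) + a·u(x) = f(u(x)) for every x ∈ ℝ^N, and assume there are constants C, c > 0 such that |u(x)| + ‖∇u(x)‖ ≤ C·exp(−c‖x‖) for all x ∈ ℝ^N. Then ∫_{ℝ^N} ‖∇u‖² dx = N·L_a(u), where L_a(u) = (1/2)∫_{ℝ^N}(‖∇u‖² + a·u²) dx − ∫_{ℝ^N} F(u) dx. -/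
open MeasureTheory Real

open Filter Topology

theorem aux_integrable_exp {N : ℕ} (c : ℝ) (hc : 0 < c) :
    Integrable (fun x : EuclideanSpace ℝ (Fin N) => Real.exp (-c * ‖x‖)) := by
  have h1 : Integrable (fun x : EuclideanSpace ℝ (Fin N) =>
      (1 + ‖x‖) ^ (-((N + 1 : ℕ) : ℝ))) := by
    apply integrable_one_add_norm
    simp
  refine (h1.const_mul (Real.exp c * (N + 1).factorial / c ^ (N + 1))).mono'
    (by fun_prop) (Eventually.of_forall fun x => ?_)
  have hx : 0 ≤ ‖x‖ := norm_nonneg x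
  have h2 := Real.pow_div_factorial_le_exp (x := c * (1 + ‖x‖)) (by positivity) (N + 1)
  rw [Real.norm_eq_abs, abs_of_pos (Real.exp_pos _), Real.rpow_neg (by positivity),
    Real.rpow_natCast]
  have h3 : Real.exp (-c * ‖x‖) = Real.exp c / Real.exp (c * (1 + ‖x‖)) := by
    rw [← Real.exp_sub]; congr 1; ring
  rw [h3]
  calc Real.exp c / Real.exp (c * (1 + ‖x‖))
      ≤ Real.exp c / ((c * (1 + ‖x‖)) ^ (N + 1) / (N + 1).factorial) := by
        gcongr
    _ = _ := by
        rw [mul_pow]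
        field_simp

theorem aux_integrable_norm_exp {N : ℕ} (c : ℝ) (hc : 0 < c) :
    Integrable (fun x : EuclideanSpace ℝ (Fin N) => ‖x‖ * Real.exp (-c * ‖x‖)) := by
  refine ((aux_integrable_exp (N := N) (c / 2) (by positivity)).const_mul (2 / c)).mono'
    (by fun_prop) (Eventually.of_forall fun x => ?_)
  have hx : 0 ≤ ‖x‖ := norm_nonneg x
  rw [Real.norm_eq_abs, abs_of_nonneg (by positivity)]
  have h1 : c / 2 * ‖x‖ ≤ Real.exp (c / 2 * ‖x‖) := by
    linarith [Real.add_one_le_exp (c / 2 * ‖x‖)]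
  have h2 : Real.exp (-(c / 2) * ‖x‖) = Real.exp (c / 2 * ‖x‖) * Real.exp (-c * ‖x‖) := by
    rw [← Real.exp_add]; congr 1; ring
  rw [h2, ← mul_assoc]
  gcongr
  calc ‖x‖ = 2 / c * (c / 2 * ‖x‖) := by field_simp
    _ ≤ _ := by gcongr

theorem aux_div {N : ℕ} (X : Fin N → EuclideanSpace ℝ (Fin N) → ℝ)
    (hX : ∀ i, ContDiff ℝ 1 (X i)) (hXi : ∀ i, Integrable (X i))
    (hD : Integrable (fun x => ∑ i, fderiv ℝ (X i) x (EuclideanSpace.single i 1))) :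
    ∫ x, ∑ i, fderiv ℝ (X i) x (EuclideanSpace.single i 1) = 0 := by
  let φ : ContDiffBump (0 : EuclideanSpace ℝ (Fin N)) := ⟨1, 2, by norm_num, by norm_num⟩
  have hφ1 : ContDiff ℝ 1 (φ : EuclideanSpace ℝ (Fin N) → ℝ) := φ.contDiff
  have hφc : HasCompactSupport (φ : EuclideanSpace ℝ (Fin N) → ℝ) := φ.hasCompactSupport
  let ε : ℕ → ℝ := fun n => 1 / ((n : ℝ) + 1)
  have hε0 : ∀ n, 0 < ε n := fun n => by positivity
  have hε : Tendsto ε atTop (𝓝 0) := tendsto_one_div_add_atTop_nhds_zero_nat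
  let η : ℕ → EuclideanSpace ℝ (Fin N) → ℝ := fun n x => φ (ε n • x)
  have hη : ∀ n, ContDiff ℝ 1 (η n) := fun n => hφ1.comp (contDiff_const_smul _)
  have hηc : ∀ n, HasCompactSupport (η n) := fun n => hφc.comp_smul (hε0 n).ne'
  have hdη : ∀ n x, fderiv ℝ (η n) x = ε n • fderiv ℝ φ (ε n • x) := fun n x =>
    fderiv_comp_smul (f := (φ : EuclideanSpace ℝ (Fin N) → ℝ)) (ε n)
  obtain ⟨K, hK⟩ := (hφc.fderiv (𝕜 := ℝ)).exists_bound_of_continuous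
    (hφ1.continuous_fderiv one_ne_zero)
  have hcη : ∀ n, Continuous (η n) := fun n => (hη n).continuous
  have hcdη : ∀ n v, Continuous (fun x => fderiv ℝ (η n) x v) := fun n v =>
    ((hη n).continuous_fderiv one_ne_zero).clm_apply continuous_const
  have hcX : ∀ i, Continuous (X i) := fun i => (hX i).continuous
  have hcdX : ∀ i v, Continuous (fun x => fderiv ℝ (X i) x v) := fun i v =>
    ((hX i).continuous_fderiv one_ne_zero).clm_apply continuous_const
  have hint : ∀ n i, Integrable
      (fun x => η n x * fderiv ℝ (X i) x (EuclideanSpace.single i 1)) := fun n i =>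
    ((hcη n).mul (hcdX i _)).integrable_of_hasCompactSupport (hηc n).mul_right
  have key : ∀ n, ∫ x, η n x * ∑ i, fderiv ℝ (X i) x (EuclideanSpace.single i 1)
      = ∑ i, - ∫ x, fderiv ℝ (η n) x (EuclideanSpace.single i 1) * X i x := by
    intro n
    simp_rw [Finset.mul_sum]
    rw [integral_finsetSum _ (fun i _ => hint n i)]
    refine Finset.sum_congr rfl fun i _ => ?_
    refine integral_mul_fderiv_eq_neg_fderiv_mul_of_integrable ?_ (hint n i) ?_
      (fun x _ => (hη n).differentiable one_ne_zero x)
      (fun x _ => (hX i).differentiable one_ne_zero x)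
    · exact ((hcdη n _).mul (hcX i)).integrable_of_hasCompactSupport
        ((hηc n).fderiv_apply ℝ _).mul_right
    · exact ((hcη n).mul (hcX i)).integrable_of_hasCompactSupport (hηc n).mul_right
  have hsc : ∀ x : EuclideanSpace ℝ (Fin N), Tendsto (fun n => ε n • x) atTop (𝓝 0) := by
    intro x
    simpa using hε.smul_const x
  have lim1 : Tendsto (fun n => ∫ x, η n x * ∑ i, fderiv ℝ (X i) x (EuclideanSpace.single i 1))
      atTop (𝓝 (∫ x, ∑ i, fderiv ℝ (X i) x (EuclideanSpace.single i 1))) := by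
    refine tendsto_integral_of_dominated_convergence
      (fun x => ‖∑ i, fderiv ℝ (X i) x (EuclideanSpace.single i 1)‖) ?_ hD.norm ?_ ?_
    · intro n
      exact (hcη n).aestronglyMeasurable.mul hD.aestronglyMeasurable
    · intro n
      refine Eventually.of_forall fun x => ?_
      rw [norm_mul]
      refine mul_le_of_le_one_left (norm_nonneg _) ?_
      rw [Real.norm_eq_abs, abs_of_nonneg φ.nonneg]
      exact φ.le_one
    · refine Eventually.of_forall fun x => ?_
      have h1 : Tendsto (fun n => η n x) atTop (𝓝 1) := by
        have h2 : φ (0 : EuclideanSpace ℝ (Fin N)) = 1 := φ.one_of_mem_closedBall (by simp [φ])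
        have := (hφ1.continuous.tendsto 0).comp (hsc x)
        rwa [h2] at this
      simpa using h1.mul_const _
  have lim2 : Tendsto (fun n => ∑ i, - ∫ x, fderiv ℝ (η n) x (EuclideanSpace.single i 1) * X i x)
      atTop (𝓝 0) := by
    rw [show (0:ℝ) = ∑ i : Fin N, - ∫ x : EuclideanSpace ℝ (Fin N), (0:ℝ) by simp]
    refine tendsto_finsetSum _ fun i _ => Tendsto.neg ?_
    have hb : ∀ n x, ‖fderiv ℝ (η n) x (EuclideanSpace.single i 1) * X i x‖
        ≤ ε n * (K * ‖X i x‖) := by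
      intro n x
      rw [norm_mul, ← mul_assoc]
      gcongr
      rw [hdη]
      calc ‖(ε n • fderiv ℝ φ (ε n • x)) (EuclideanSpace.single i 1)‖
          ≤ ‖ε n • fderiv ℝ φ (ε n • x)‖ * ‖(EuclideanSpace.single i 1 : EuclideanSpace ℝ (Fin N))‖ :=
            ContinuousLinearMap.le_opNorm _ _
        _ = ε n * ‖fderiv ℝ φ (ε n • x)‖ := by
            rw [norm_smul, Real.norm_eq_abs, abs_of_pos (hε0 n)]; simp
        _ ≤ _ := by gcongr; exact hK _
    have hK0 : 0 ≤ K := (norm_nonneg _).trans (hK 0)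
    refine tendsto_integral_of_dominated_convergence
      (fun x => K * ‖X i x‖) ?_ ((hXi i).norm.const_mul K) ?_ ?_
    · intro n
      exact ((hcdη n _).mul (hcX i)).aestronglyMeasurable
    · intro n
      refine Eventually.of_forall fun x => (hb n x).trans ?_
      refine mul_le_of_le_one_left (by positivity) ?_
      simp only [ε]
      rw [div_le_one (by positivity)]
      linarith [(Nat.cast_nonneg n : (0:ℝ) ≤ n)]
    · refine Eventually.of_forall fun x => ?_
      refine squeeze_zero_norm (fun n => hb n x) ?_
      simpa using hε.mul_const (K * ‖X i x‖)
  simp_rw [key] at lim1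
  exact tendsto_nhds_unique lim1 lim2

theorem grad_energy_eq_N_times_energy {N : ℕ} (hN : 3 ≤ N) (a : ℝ) (f : ℝ → ℝ)
    (hf : Continuous f) (hf0 : f 0 = 0)
    (F : ℝ → ℝ) (hF : ∀ s : ℝ, F s = ∫ t in (0:ℝ)..s, f t)
    (u : EuclideanSpace ℝ (Fin N) → ℝ) (hu : ContDiff ℝ 2 u)
    (heq : ∀ x, -lap u x + a * u x = f (u x))
    (C c : ℝ) (hC : 0 < C) (hc : 0 < c)
    (hdecay : ∀ x, |u x| + ‖gradient u x‖ ≤ C * Real.exp (-c * ‖x‖)) :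
    ∫ x, ‖gradient u x‖ ^ 2 =
      (N : ℝ) * ((1 / 2) * (∫ x, (‖gradient u x‖ ^ 2 + a * u x ^ 2))
        - ∫ x, F (u x)) := by
  -- basic facts
  have hFd : ∀ s, HasDerivAt F (f s) s := by
    intro s
    rw [show F = fun s => ∫ t in (0:ℝ)..s, f t from funext hF]
    exact intervalIntegral.integral_hasDerivAt_right (hf.intervalIntegrable _ _)
      (hf.stronglyMeasurableAtFilter _ _) hf.continuousAt
  have hFC : ContDiff ℝ 1 F := by
    rw [contDiff_one_iff_deriv]
    refine ⟨fun s => (hFd s).differentiableAt, ?_⟩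
    rwa [show deriv F = f from funext fun s => (hFd s).deriv]
  have hu1 : ContDiff ℝ 1 u := hu.of_le (by norm_num)
  have hud : Differentiable ℝ u := hu.differentiable two_ne_zero
  have hdu : ContDiff ℝ 1 (fderiv ℝ u) := hu.fderiv_right (by norm_num)
  have hdud : Differentiable ℝ (fderiv ℝ u) := hdu.differentiable one_ne_zero
  let e : Fin N → EuclideanSpace ℝ (Fin N) := fun i => EuclideanSpace.single i 1
  have hgrad : ∀ x, ‖gradient u x‖ ^ 2 = ∑ i, (fderiv ℝ u x (e i)) ^ 2 := by
    intro x
    rw [EuclideanSpace.real_norm_sq_eq]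
    refine Finset.sum_congr rfl fun i _ => ?_
    rw [show gradient u x i = inner ℝ (gradient u x) (e i) by
      rw [EuclideanSpace.inner_single_right]; simp, inner_gradient_left]
  have hgn : ∀ x, ‖gradient u x‖ = ‖fderiv ℝ u x‖ := fun x => by
    simp [gradient]
  have hxe : ∀ x : EuclideanSpace ℝ (Fin N), x = ∑ i, x i • e i := by
    intro x
    ext j
    simp [e, Finset.sum_apply, Pi.single_apply]
  -- the vector field
  let p : EuclideanSpace ℝ (Fin N) → ℝ := fun x => fderiv ℝ u x x
  let q : EuclideanSpace ℝ (Fin N) → ℝ := fun x =>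
    F (u x) - a / 2 * u x ^ 2 - (1 / 2) * ∑ j, (fderiv ℝ u x (e j)) ^ 2
  let X : Fin N → EuclideanSpace ℝ (Fin N) → ℝ := fun i x =>
    p x * fderiv ℝ u x (e i) + x i * q x
  have hdue : ∀ i, ContDiff ℝ 1 (fun x => fderiv ℝ u x (e i)) := fun i =>
    hdu.clm_apply contDiff_const
  have hp : ContDiff ℝ 1 p := hdu.clm_apply contDiff_id
  have hq : ContDiff ℝ 1 q :=
    ((hFC.comp hu1).sub (contDiff_const.mul (hu1.pow 2))).sub
      (contDiff_const.mul (ContDiff.sum fun j _ => (hdue j).pow 2))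
  have hxi : ∀ i, ContDiff ℝ 1 (fun x : EuclideanSpace ℝ (Fin N) => x i) := fun i =>
    (EuclideanSpace.proj (𝕜 := ℝ) i).contDiff
  have hX : ∀ i, ContDiff ℝ 1 (X i) := fun i => (hp.mul (hdue i)).add ((hxi i).mul hq)
  -- derivatives
  let H : EuclideanSpace ℝ (Fin N) → Fin N → Fin N → ℝ := fun x i j =>
    fderiv ℝ (fderiv ℝ u) x (e i) (e j)
  have hsymm : ∀ x i j, H x i j = H x j i := by
    intro x i j
    exact (hu.contDiffAt.isSymmSndFDerivAt (by simp)) (e i) (e j)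
  have hlap : ∀ x, lap u x = ∑ i, H x i i := by
    intro x
    simp only [lap, H, e]
    refine Finset.sum_congr rfl fun i _ => ?_
    rw [iteratedFDeriv_two_apply]
    simp
  have hd1 : ∀ x j, HasFDerivAt (fun x => fderiv ℝ u x (e j))
      ((fderiv ℝ (fderiv ℝ u) x).flip (e j)) x := by
    intro x j
    have := (hdud x).hasFDerivAt.clm_apply (hasFDerivAt_const (e j) x)
    simpa using this
  have hdp : ∀ x i, fderiv ℝ p x (e i) = fderiv ℝ u x (e i) + ∑ j, x j * H x i j := by
    intro x i
    have := ((hdud x).hasFDerivAt.clm_apply (hasFDerivAt_id x)).fderiv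
    have h2 : fderiv ℝ p x (e i) = fderiv ℝ u x (e i) + fderiv ℝ (fderiv ℝ u) x (e i) x := by
      change fderiv ℝ (fun y => fderiv ℝ u y (id y)) x (e i) = _
      rw [this]
      simp
    rw [h2]
    congr 1
    conv_lhs => rw [hxe x]
    simp only [map_sum, map_smul, smul_eq_mul, H]
    rw [← hxe x]
  have hdq : ∀ x i, fderiv ℝ q x (e i) =
      (f (u x) - a * u x) * fderiv ℝ u x (e i) - ∑ j, fderiv ℝ u x (e j) * H x i j := by
    intro x i
    have h1 : HasFDerivAt (fun x => F (u x)) (f (u x) • fderiv ℝ u x) x :=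
      (hFd (u x)).comp_hasFDerivAt x (hud x).hasFDerivAt
    have h2 := (((hud x).hasFDerivAt.pow 2).const_mul (a / 2))
    have h3 := (HasFDerivAt.fun_sum (u := Finset.univ)
      (fun j _ => (hd1 x j).pow 2)).const_mul (1 / 2 : ℝ)
    have h4 := ((h1.sub h2).sub h3).fderiv
    change fderiv ℝ ((((fun x => F (u x)) - fun x => a / 2 * u x ^ 2)) - fun x =>
      (1 / 2 : ℝ) * ∑ j, (fderiv ℝ u x (e j)) ^ 2) x (e i) = _
    rw [h4]
    simp [H, Finset.mul_sum]
    ring_nf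
  have hdX : ∀ x i, fderiv ℝ (X i) x (e i) =
      (fderiv ℝ p x (e i)) * fderiv ℝ u x (e i) + p x * H x i i + q x
        + x i * fderiv ℝ q x (e i) := by
    intro x i
    have h1 := (hp.differentiable one_ne_zero x).hasFDerivAt.mul (hd1 x i)
    have h0 : HasFDerivAt (fun x : EuclideanSpace ℝ (Fin N) => x i)
      (EuclideanSpace.proj (𝕜 := ℝ) i) x := (EuclideanSpace.proj (𝕜 := ℝ) i).hasFDerivAt
    have h2 := h0.mul (hq.differentiable one_ne_zero x).hasFDerivAt
    have h3 := (h1.add h2).fderiv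
    change fderiv ℝ ((p * fun x => fderiv ℝ u x (e i)) + (fun x => x i) * q) x (e i) = _
    rw [h3]
    have hei : (e i) i = 1 := by simp [e]
    simp [H, hei]
    ring
  have hpx : ∀ x, p x = ∑ i, x i * fderiv ℝ u x (e i) := by
    intro x
    change fderiv ℝ u x x = _
    conv_lhs => rw [hxe x]
    simp only [map_sum, map_smul, smul_eq_mul]
    rw [← hxe x]
  have hdiv : ∀ x, ∑ i, fderiv ℝ (X i) x (e i) =
      (1 - (N:ℝ) / 2) * ‖gradient u x‖ ^ 2 - N * a / 2 * u x ^ 2 + N * F (u x) := by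
    intro x
    have hl : f (u x) - a * u x = - ∑ i, H x i i := by rw [← hlap, ← heq]; ring
    simp_rw [hdX, hdp, hdq, hl]
    have e1 : ∑ i, ((fderiv ℝ u x (e i) + ∑ j, x j * H x i j) * fderiv ℝ u x (e i)
        + p x * H x i i + q x + x i * (-(∑ k, H x k k) * fderiv ℝ u x (e i)
          - ∑ j, fderiv ℝ u x (e j) * H x i j))
        = ∑ i, (fderiv ℝ u x (e i)) ^ 2 + ∑ i, ∑ j, x j * H x i j * fderiv ℝ u x (e i)
          + p x * ∑ i, H x i i + N * q x - (∑ k, H x k k) * ∑ i, x i * fderiv ℝ u x (e i)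
          - ∑ i, ∑ j, x i * H x i j * fderiv ℝ u x (e j) := by
      have hN : (N:ℝ) * q x = ∑ i : Fin N, q x := by simp
      rw [hN, Finset.mul_sum, Finset.mul_sum]
      simp only [← Finset.sum_add_distrib, ← Finset.sum_sub_distrib]
      refine Finset.sum_congr rfl fun i _ => ?_
      have s1 : ∑ j, x j * H x i j * fderiv ℝ u x (e i)
        = (∑ j, x j * H x i j) * fderiv ℝ u x (e i) := by rw [Finset.sum_mul]
      have s2 : ∑ j, x i * H x i j * fderiv ℝ u x (e j)
        = x i * ∑ j, fderiv ℝ u x (e j) * H x i j := by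
        rw [Finset.mul_sum]; exact Finset.sum_congr rfl fun j _ => by ring
      rw [s1, s2]
      ring
    have e2 : ∑ i, ∑ j, x j * H x i j * fderiv ℝ u x (e i)
        = ∑ i, ∑ j, x i * H x i j * fderiv ℝ u x (e j) := by
      rw [Finset.sum_comm]
      refine Finset.sum_congr rfl fun i _ => Finset.sum_congr rfl fun j _ => ?_
      rw [hsymm x j i]
    rw [e1, e2, ← hpx, hgrad]
    simp only [q]
    ring
  -- integrability
  have hE := aux_integrable_exp (N := N) c hc
  have hrE := aux_integrable_norm_exp (N := N) c hc
  have hE1 : ∀ x : EuclideanSpace ℝ (Fin N), Real.exp (-c * ‖x‖) ≤ 1 := fun x => by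
    rw [Real.exp_le_one_iff]
    nlinarith [norm_nonneg x]
  have hub : ∀ x, |u x| ≤ C * Real.exp (-c * ‖x‖) := fun x => by
    linarith [hdecay x, norm_nonneg (gradient u x)]
  have hgb : ∀ x, ‖gradient u x‖ ≤ C * Real.exp (-c * ‖x‖) := fun x => by
    linarith [hdecay x, abs_nonneg (u x)]
  have hEC : ∀ x : EuclideanSpace ℝ (Fin N), C * Real.exp (-c * ‖x‖) ≤ C := fun x =>
    mul_le_of_le_one_right hC.le (hE1 x)
  have hu2b : ∀ x, u x ^ 2 ≤ C ^ 2 * Real.exp (-c * ‖x‖) := fun x => by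
    rw [← sq_abs]
    nlinarith [hub x, hEC x, abs_nonneg (u x)]
  have hg2b : ∀ x, ‖gradient u x‖ ^ 2 ≤ C ^ 2 * Real.exp (-c * ‖x‖) := fun x => by
    nlinarith [hgb x, hEC x, norm_nonneg (gradient u x)]
  obtain ⟨M, hM⟩ := (isCompact_Icc (a := -C) (b := C)).exists_bound_of_continuousOn
    hf.continuousOn
  have hM0 : 0 ≤ M := (norm_nonneg _).trans (hM 0 (by constructor <;> linarith))
  have hFb : ∀ x, |F (u x)| ≤ M * C * Real.exp (-c * ‖x‖) := by
    intro x
    have hx := abs_le.1 ((hub x).trans (hEC x))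
    rw [hF, ← Real.norm_eq_abs]
    have := intervalIntegral.norm_integral_le_of_norm_le_const (a := 0) (b := u x) (f := f) (C := M)
      (fun t ht => hM t (by
        have h0 : (0:ℝ) ∈ Set.Icc (-C) C := by constructor <;> linarith
        exact (Set.uIcc_subset_Icc h0 ⟨hx.1, hx.2⟩) (Set.uIoc_subset_uIcc ht)))
    refine this.trans ?_
    rw [sub_zero, mul_assoc]
    gcongr
    exact hub x
  have hgc : Continuous (fun x => ‖gradient u x‖ ^ 2) := by
    simp_rw [hgn]
    exact hdu.continuous.norm.pow 2
  have iG : Integrable (fun x => ‖gradient u x‖ ^ 2) :=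
    (hE.const_mul (C ^ 2)).mono' hgc.aestronglyMeasurable (Eventually.of_forall fun x => by
      rw [Real.norm_eq_abs, abs_of_nonneg (by positivity)]; exact hg2b x)
  have iU : Integrable (fun x => u x ^ 2) :=
    (hE.const_mul (C ^ 2)).mono' (hu.continuous.pow 2).aestronglyMeasurable
      (Eventually.of_forall fun x => by
      rw [Real.norm_eq_abs, abs_of_nonneg (by positivity)]; exact hu2b x)
  have iF : Integrable (fun x => F (u x)) :=
    (hE.const_mul (M * C)).mono' (hFC.continuous.comp hu.continuous).aestronglyMeasurable
      (Eventually.of_forall fun x => hFb x)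
  have iX : ∀ i, Integrable (X i) := by
    intro i
    refine (hrE.const_mul (C ^ 2 + (M * C + |a| / 2 * C ^ 2 + 1 / 2 * C ^ 2))).mono'
      (hX i).continuous.aestronglyMeasurable (Eventually.of_forall fun x => ?_)
    have hr := norm_nonneg x
    have hx1 : |x i| ≤ ‖x‖ := by simpa using PiLp.norm_apply_le x i
    have hp1 : |p x| ≤ ‖gradient u x‖ * ‖x‖ := by
      rw [hgn]; exact (fderiv ℝ u x).le_opNorm x
    have hd1 : |fderiv ℝ u x (e i)| ≤ ‖gradient u x‖ := by
      rw [hgn]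
      have := (fderiv ℝ u x).le_opNorm (e i)
      simpa [e] using this
    have hq1 : |q x| ≤ (M * C + |a| / 2 * C ^ 2 + 1 / 2 * C ^ 2) * Real.exp (-c * ‖x‖) := by
      have hqq : q x = F (u x) - a / 2 * u x ^ 2 - 1 / 2 * ‖gradient u x‖ ^ 2 := by
        rw [hgrad]
      rw [hqq]
      have t1 : |a / 2 * u x ^ 2| ≤ |a| / 2 * (C ^ 2 * Real.exp (-c * ‖x‖)) := by
        rw [abs_mul, abs_div, abs_of_nonneg (sq_nonneg (u x)), abs_two]
        gcongr
        exact hu2b x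
      have t2 : |1 / 2 * ‖gradient u x‖ ^ 2| ≤ 1 / 2 * (C ^ 2 * Real.exp (-c * ‖x‖)) := by
        rw [abs_of_nonneg (by positivity)]
        gcongr
        exact hg2b x
      refine (abs_sub _ _).trans ?_
      have := abs_sub (F (u x)) (a / 2 * u x ^ 2)
      linarith [hFb x]
    calc ‖X i x‖ ≤ |p x * fderiv ℝ u x (e i)| + |x i * q x| := abs_add_le _ _
      _ = |p x| * |fderiv ℝ u x (e i)| + |x i| * |q x| := by rw [abs_mul, abs_mul]
      _ ≤ (‖gradient u x‖ * ‖x‖) * ‖gradient u x‖ + ‖x‖ *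
          ((M * C + |a| / 2 * C ^ 2 + 1 / 2 * C ^ 2) * Real.exp (-c * ‖x‖)) := by gcongr
      _ = ‖x‖ * ‖gradient u x‖ ^ 2 + ‖x‖ *
          ((M * C + |a| / 2 * C ^ 2 + 1 / 2 * C ^ 2) * Real.exp (-c * ‖x‖)) := by ring
      _ ≤ ‖x‖ * (C ^ 2 * Real.exp (-c * ‖x‖)) + ‖x‖ *
          ((M * C + |a| / 2 * C ^ 2 + 1 / 2 * C ^ 2) * Real.exp (-c * ‖x‖)) := by
          gcongr; exact hg2b x
      _ = _ := by ring
  have iG' := iG.const_mul (1 - (N:ℝ) / 2)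
  have iU' := iU.const_mul (N * a / 2)
  have iF' := iF.const_mul (N : ℝ)
  have hfin := aux_div X hX iX (by
    change Integrable (fun x => ∑ i, fderiv ℝ (X i) x (e i))
    simp_rw [hdiv]
    exact (iG'.sub iU').add iF')
  change ∫ x, ∑ i, fderiv ℝ (X i) x (e i) = 0 at hfin
  simp_rw [hdiv] at hfin
  have iGU : Integrable (fun x => (1 - (N:ℝ) / 2) * ‖gradient u x‖ ^ 2 - N * a / 2 * u x ^ 2) :=
    iG'.sub iU'
  rw [integral_add iGU iF', integral_sub iG' iU', integral_const_mul,
    integral_const_mul, integral_const_mul] at hfin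
  rw [integral_add iG (iU.const_mul a), integral_const_mul]
  linarith
end

section
/- Let N ≥ 3 be an integer, a ∈ ℝ, and let f : ℝ → ℝ be continuous with f(0) = 0. Let u : ℝ^N → ℝ be a C² function satisfying −Δu(x) + a·u(x) = f(u(x)) for every x ∈ ℝ^N, and assume there are constants C, c > 0 such that |u(x)| + ‖∇u(x)‖ ≤ C·exp(−c‖x‖) for all x ∈ ℝ^N. Then ∫_{ℝ^N} ‖∇u‖² dx + a·∫_{ℝ^N} u² dx = ∫_{ℝ^N} f(u(x))·u(x) dx. -/
open MeasureTheory Real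

open Filter Topology in
lemma aux_exp_integrable {N : ℕ} (hN : 3 ≤ N) {c : ℝ} (hc : 0 < c) :
    Integrable (fun x : EuclideanSpace ℝ (Fin N) => Real.exp (-c * ‖x‖)) := by
  haveI : Nonempty (Fin N) := ⟨⟨0, by omega⟩⟩
  rw [integrable_fun_norm_addHaar (volume : Measure (EuclideanSpace ℝ (Fin N)))
    (f := fun r => Real.exp (-c * r))]
  have h := integrableOn_rpow_mul_exp_neg_mul_rpow (s := ((N - 1 : ℕ) : ℝ)) (p := 1) (b := c)
    (by have : (0:ℝ) ≤ ((N - 1 : ℕ) : ℝ) := Nat.cast_nonneg _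
        linarith) one_pos hc
  refine h.congr_fun ?_ measurableSet_Ioi
  intro r hr
  simp

lemma aux_grad {N : ℕ} (u : EuclideanSpace ℝ (Fin N) → ℝ) (x : EuclideanSpace ℝ (Fin N)) :
    ‖gradient u x‖ ^ 2 = ∑ i, fderiv ℝ u x (EuclideanSpace.single i 1) ^ 2 := by
  rw [EuclideanSpace.norm_sq_eq]
  refine Finset.sum_congr rfl fun i _ => ?_
  have : fderiv ℝ u x (EuclideanSpace.single i 1) = gradient u x i := by
    have h := inner_gradient_left (𝕜 := ℝ) (f := u) (x := x) (y := EuclideanSpace.single i (1:ℝ))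
    rw [← h, EuclideanSpace.inner_single_right]
    simp
  rw [this]; simp

lemma aux_lap {N : ℕ} (u : EuclideanSpace ℝ (Fin N) → ℝ) (hu : ContDiff ℝ 2 u)
    (x : EuclideanSpace ℝ (Fin N)) :
    lap u x = ∑ i, fderiv ℝ (fun y => fderiv ℝ u y (EuclideanSpace.single i 1)) x
      (EuclideanSpace.single i 1) := by
  unfold lap
  refine Finset.sum_congr rfl fun i _ => ?_
  have hd : DifferentiableAt ℝ (fderiv ℝ u) x :=
    ((hu.fderiv_right (m := 1) (by norm_num)).differentiable (by norm_num)) x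
  rw [iteratedFDeriv_two_apply, fderiv_clm_apply hd (differentiableAt_const _)]
  simp

/-- Integration by parts with a compactly supported cutoff. -/
lemma aux_cut {N : ℕ} (u φ : EuclideanSpace ℝ (Fin N) → ℝ) (hu : ContDiff ℝ 2 u)
    (hφ : ContDiff ℝ 1 φ) (hc : HasCompactSupport φ) :
    ∫ x, φ x * (u x * lap u x) =
      - (∫ x, φ x * ‖gradient u x‖ ^ 2) -
        ∑ i, ∫ x, fderiv ℝ φ x (EuclideanSpace.single i 1) *
          (u x * fderiv ℝ u x (EuclideanSpace.single i 1)) := by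
  have hu1 : ContDiff ℝ 1 u := hu.of_le (by norm_num)
  have hdu : ∀ v, ContDiff ℝ 1 (fun y => fderiv ℝ u y v) := fun v =>
    (hu.fderiv_right (m := 1) (by norm_num)).clm_apply contDiff_const
  have hcu := hu.continuous
  have hcφ := hφ.continuous
  have hcdu : ∀ v, Continuous (fun y => fderiv ℝ u y v) := fun v => (hdu v).continuous
  have hcddu : ∀ v, Continuous (fun x => fderiv ℝ (fun y => fderiv ℝ u y v) x v) := fun v =>
    ((hdu v).continuous_fderiv (by norm_num)).clm_apply continuous_const
  have hcdφ : ∀ v, Continuous (fun x => fderiv ℝ φ x v) := fun v =>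
    (hφ.continuous_fderiv (by norm_num)).clm_apply continuous_const
  have hsdφ : ∀ v, HasCompactSupport (fun x => fderiv ℝ φ x v) := fun v => hc.fderiv_apply ℝ v
  have key : ∀ v, ∫ x, φ x * (u x * fderiv ℝ (fun y => fderiv ℝ u y v) x v) =
      - (∫ x, φ x * (fderiv ℝ u x v) ^ 2) - ∫ x, fderiv ℝ φ x v * (u x * fderiv ℝ u x v) := by
    intro v
    have hprod : ∀ x, fderiv ℝ (fun y => φ y * u y) x v =
        φ x * fderiv ℝ u x v + u x * fderiv ℝ φ x v := by
      intro x
      rw [fderiv_fun_mul (hφ.differentiable (by norm_num) x) (hu1.differentiable (by norm_num) x)]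
      simp
    have i1 : Integrable (fun x => φ x * (fderiv ℝ u x v) ^ 2) :=
      (hcφ.mul ((hcdu v).pow 2)).integrable_of_hasCompactSupport hc.mul_right
    have i2 : Integrable (fun x => fderiv ℝ φ x v * (u x * fderiv ℝ u x v)) :=
      ((hcdφ v).mul (hcu.mul (hcdu v))).integrable_of_hasCompactSupport (hsdφ v).mul_right
    have i3 : Integrable (fun x => φ x * (u x * fderiv ℝ (fun y => fderiv ℝ u y v) x v)) :=
      (hcφ.mul (hcu.mul (hcddu v))).integrable_of_hasCompactSupport hc.mul_right
    have i4 : Integrable (fun x => φ x * (u x * fderiv ℝ u x v)) :=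
      (hcφ.mul (hcu.mul (hcdu v))).integrable_of_hasCompactSupport hc.mul_right
    have e : (fun x => fderiv ℝ (fun y => φ y * u y) x v * fderiv ℝ u x v) =
        fun x => φ x * (fderiv ℝ u x v) ^ 2 + fderiv ℝ φ x v * (u x * fderiv ℝ u x v) := by
      funext x; rw [hprod]; ring
    have ibp := integral_mul_fderiv_eq_neg_fderiv_mul_of_integrable (μ := volume)
      (f := fun y => φ y * u y) (g := fun y => fderiv ℝ u y v) (v := v)
      (by rw [e]; exact i1.add i2) (by simpa only [mul_assoc] using i3)
      (by simpa only [mul_assoc] using i4)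
      (fun x _ => ((hφ.differentiable (by norm_num) x).mul (hu1.differentiable (by norm_num) x)))
      (fun x _ => (hdu v).differentiable (by norm_num) x)
    rw [e, integral_add i1 i2] at ibp
    simp only [mul_assoc] at ibp
    rw [ibp]; ring
  have j1 : ∀ i ∈ (Finset.univ : Finset (Fin N)), Integrable (fun x => φ x * (u x *
      fderiv ℝ (fun y => fderiv ℝ u y (EuclideanSpace.single i 1)) x
        (EuclideanSpace.single i 1))) := fun i _ =>
      (hcφ.mul (hcu.mul (hcddu _))).integrable_of_hasCompactSupport hc.mul_right
  have j2 : ∀ i ∈ (Finset.univ : Finset (Fin N)), Integrable (fun x => φ x *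
      (fderiv ℝ u x (EuclideanSpace.single i 1)) ^ 2) := fun i _ =>
      (hcφ.mul ((hcdu _).pow 2)).integrable_of_hasCompactSupport hc.mul_right
  simp only [aux_lap u hu, aux_grad, Finset.mul_sum]
  rw [integral_finsetSum _ j1, integral_finsetSum _ j2, ← Finset.sum_neg_distrib,
    ← Finset.sum_sub_distrib]
  exact Finset.sum_congr rfl fun i _ => key _

open Filter Topology in
theorem nehari_identity {N : ℕ} (hN : 3 ≤ N) (a : ℝ) (f : ℝ → ℝ)
    (hf : Continuous f) (hf0 : f 0 = 0)
    (u : EuclideanSpace ℝ (Fin N) → ℝ) (hu : ContDiff ℝ 2 u)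
    (heq : ∀ x, -lap u x + a * u x = f (u x))
    (C c : ℝ) (hC : 0 < C) (hc : 0 < c)
    (hdecay : ∀ x, |u x| + ‖gradient u x‖ ≤ C * Real.exp (-c * ‖x‖)) :
    (∫ x, ‖gradient u x‖ ^ 2) + a * ∫ x, u x ^ 2 = ∫ x, f (u x) * u x := by
  have hexp := (aux_exp_integrable hN hc).const_mul C
  have hcu := hu.continuous
  have hcdf : Continuous (fderiv ℝ u) := hu.continuous_fderiv (by norm_num)
  have hcg : Continuous (gradient u) :=
    (InnerProductSpace.toDual ℝ (EuclideanSpace ℝ (Fin N))).symm.continuous.comp hcdf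
  have hng : ∀ x, ‖fderiv ℝ u x‖ = ‖gradient u x‖ := fun x => by
    simp [gradient]
  have hle1 : ∀ x : EuclideanSpace ℝ (Fin N), C * Real.exp (-c * ‖x‖) ≤ C := fun x => by
    have : Real.exp (-c * ‖x‖) ≤ 1 := Real.exp_le_one_iff.2 (by
      have := mul_nonneg hc.le (norm_nonneg x); linarith)
    nlinarith
  have hub : ∀ x, |u x| ≤ C := fun x => by
    have := hdecay x; have := hle1 x; have := norm_nonneg (gradient u x); linarith
  have hgb : ∀ x, ‖gradient u x‖ ≤ C := fun x => by
    have := hdecay x; have := hle1 x; have := abs_nonneg (u x); linarith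
  have iu : Integrable u := hexp.mono' hcu.aestronglyMeasurable (.of_forall fun x => by
    have := hdecay x; have := norm_nonneg (gradient u x); rw [Real.norm_eq_abs]; linarith)
  have ig : Integrable (fun x => ‖gradient u x‖) :=
    hexp.mono' hcg.norm.aestronglyMeasurable (.of_forall fun x => by
      have := hdecay x; have := abs_nonneg (u x); rw [norm_norm]; linarith)
  have iu2 : Integrable (fun x => u x ^ 2) := by
    simp only [pow_two]
    exact iu.bdd_mul hcu.aestronglyMeasurable (.of_forall hub)
  have ig2 : Integrable (fun x => ‖gradient u x‖ ^ 2) := by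
    simp only [pow_two]
    exact ig.bdd_mul hcg.norm.aestronglyMeasurable (.of_forall fun x => by
      rw [norm_norm]; exact hgb x)
  obtain ⟨M, hM⟩ := (isCompact_Icc (a := -C) (b := C)).exists_bound_of_continuousOn
    hf.continuousOn
  have ifu : Integrable (fun x => f (u x) * u x) :=
    iu.bdd_mul (hf.comp hcu).aestronglyMeasurable
      (.of_forall fun x => hM _ (abs_le.1 (hub x)))
  have elap : ∀ x, u x * lap u x = a * u x ^ 2 - f (u x) * u x := fun x => by
    rw [← heq x]; ring
  have ilap : Integrable (fun x => u x * lap u x) := by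
    simp only [elap]; exact (iu2.const_mul a).sub ifu
  have iud : ∀ v, Integrable (fun x => u x * fderiv ℝ u x v) := fun v => by
    refine iu.mul_bdd (c := C * ‖v‖) (hcdf.clm_apply continuous_const).aestronglyMeasurable
      (.of_forall fun x => ?_)
    refine ((fderiv ℝ u x).le_opNorm v).trans ?_
    rw [hng]; gcongr; exact hgb x
  -- the cutoff
  let ψ : ContDiffBump (0 : EuclideanSpace ℝ (Fin N)) := ⟨1, 2, by norm_num, by norm_num⟩
  have hψ : ContDiff ℝ 1 ψ := ψ.contDiff
  have hψc : HasCompactSupport ψ := ψ.hasCompactSupport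
  obtain ⟨K, hK⟩ := (hψc.fderiv ℝ).exists_bound_of_continuous (hψ.continuous_fderiv (by norm_num))
  let r : ℕ → ℝ := fun n => 1 / ((n : ℝ) + 1)
  have hr0 : ∀ n, r n ≠ 0 := fun n => by positivity
  have hrt : Tendsto r atTop (𝓝 0) := tendsto_one_div_add_atTop_nhds_zero_nat
  let φ : ℕ → EuclideanSpace ℝ (Fin N) → ℝ := fun n x => ψ (r n • x)
  have hφ : ∀ n, ContDiff ℝ 1 (φ n) := fun n => hψ.comp (contDiff_const_smul _)
  have hφc : ∀ n, HasCompactSupport (φ n) := fun n => hψc.comp_smul (hr0 n)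
  have hφb : ∀ n x, ‖φ n x‖ ≤ 1 := fun n x => by
    rw [Real.norm_eq_abs, abs_of_nonneg ψ.nonneg]; exact ψ.le_one
  have hφt : ∀ x, Tendsto (fun n => φ n x) atTop (𝓝 1) := fun x => by
    have h1 : Tendsto (fun n => r n • x) atTop (𝓝 0) := by
      simpa using hrt.smul_const x
    have h2 := (hψ.continuous.tendsto 0).comp h1
    have h3 : ψ 0 = 1 := ψ.one_of_mem_closedBall (by simp [ψ])
    rw [h3] at h2
    exact h2
  have hdφ : ∀ n x v, fderiv ℝ (φ n) x v = r n * fderiv ℝ ψ (r n • x) v := fun n x v => by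
    have h1 : HasFDerivAt (φ n) _ x :=
      ((hψ.differentiable (by norm_num) (r n • x)).hasFDerivAt).comp x
        ((hasFDerivAt_id x).const_smul (r n))
    rw [h1.fderiv]; simp
  have lim : ∀ g : EuclideanSpace ℝ (Fin N) → ℝ, Integrable g →
      Tendsto (fun n => ∫ x, φ n x * g x) atTop (𝓝 (∫ x, g x)) := fun g hg => by
    refine tendsto_integral_of_dominated_convergence (fun x => ‖g x‖)
      (fun n => (hφ n).continuous.aestronglyMeasurable.mul hg.aestronglyMeasurable) hg.norm
      (fun n => .of_forall fun x => ?_) (.of_forall fun x => ?_)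
    · rw [norm_mul]
      exact mul_le_of_le_one_left (norm_nonneg _) (hφb n x)
    · simpa using (hφt x).mul_const (g x)
  have lim0 : ∀ v, Tendsto (fun n => ∫ x, fderiv ℝ (φ n) x v * (u x * fderiv ℝ u x v))
      atTop (𝓝 0) := fun v => by
    have hb : ∀ n x, ‖fderiv ℝ (φ n) x v * (u x * fderiv ℝ u x v)‖ ≤
        r n * (K * ‖v‖ * ‖u x * fderiv ℝ u x v‖) := fun n x => by
      have h1 : ‖fderiv ℝ ψ (r n • x) v‖ ≤ K * ‖v‖ :=
        ((fderiv ℝ ψ (r n • x)).le_opNorm v).trans (by gcongr; exact hK _)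
      have h2 : 0 ≤ r n := by positivity
      rw [norm_mul, hdφ, norm_mul, Real.norm_of_nonneg h2, mul_assoc]
      gcongr
    refine squeeze_zero_norm (a := fun n => r n * ∫ x, K * ‖v‖ * ‖u x * fderiv ℝ u x v‖)
      (fun n => ?_) (by simpa using hrt.mul_const _)
    rw [← integral_const_mul]
    exact norm_integral_le_of_norm_le (((iud v).norm.const_mul _).const_mul _)
      (.of_forall (hb n))
  have L := lim _ ilap
  have R := ((lim _ ig2).neg).sub (tendsto_finsetSum (Finset.univ : Finset (Fin N))
    fun i _ => lim0 (EuclideanSpace.single i 1))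
  have E := tendsto_nhds_unique (L.congr fun n => aux_cut u (φ n) hu (hφ n) (hφc n)) R
  simp only [elap, Finset.sum_const_zero, sub_zero] at E
  rw [integral_sub (iu2.const_mul a) ifu, integral_const_mul] at E
  linarith
end

section
/- Let N ≥ 3 be an integer, m > 0, κ > 0, and let p be a real number with p ≥ (N+2)/(N−2). Suppose u : ℝ^N → [0,∞) is a C² function satisfying −Δu(x) + m·u(x) = κ·u(x)^p for all x ∈ ℝ^N, and that there exist constants C, c > 0 with u(x) + ‖∇u(x)‖ ≤ C·exp(−c‖x‖) for all x ∈ ℝ^N. Then u is identically zero. -/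
open MeasureTheory Real

lemma core_div {N : ℕ} (V : Fin N → EuclideanSpace ℝ (Fin N) → ℝ)
    (hV : ∀ i, ContDiff ℝ 1 (V i)) (G : EuclideanSpace ℝ (Fin N) → ℝ)
    (hG : Integrable G) (hVG : ∀ i x, |V i x| ≤ G x)
    (w : EuclideanSpace ℝ (Fin N) → ℝ) (hw : Continuous w) (hw0 : ∀ x, 0 ≤ w x)
    (hdiv : ∀ x, ∑ i, fderiv ℝ (V i) x (EuclideanSpace.single i 1) ≤ - w x) :
    ∀ x, w x = 0 := by
  intro x0
  by_contra hx0
  let φ : ContDiffBump (0 : EuclideanSpace ℝ (Fin N)) := ⟨1, 2, by norm_num, by norm_num⟩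
  let ψ : ContDiffBump x0 := ⟨1/2, 1, by norm_num, by norm_num⟩
  have hφd : ContDiff ℝ 1 φ := φ.contDiff
  obtain ⟨K, hK⟩ := (φ.hasCompactSupport.fderiv (𝕜 := ℝ)).exists_bound_of_continuous
    (hφd.continuous_fderiv (by norm_num))
  have hK0 : 0 ≤ K := (norm_nonneg _).trans (hK 0)
  have hI : 0 < ∫ x, ψ x * w x := by
    refine Continuous.integral_pos_of_hasCompactSupport_nonneg_nonzero (x := x0)
      (ψ.continuous.mul hw) (ψ.hasCompactSupport.mul_right)
      (fun x => mul_nonneg ψ.nonneg (hw0 x)) ?_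
    have : ψ x0 = 1 := ψ.one_of_mem_closedBall (by simp [ψ])
    simpa [this] using hx0
  set I := ∫ x, ψ x * w x with hIdef
  have hG0 : 0 ≤ ∫ x, G x := by
    by_cases hN : Nonempty (Fin N)
    · obtain ⟨i⟩ := hN
      exact integral_nonneg fun x => (abs_nonneg _).trans (hVG i x)
    · exfalso
      have := not_nonempty_iff.1 hN
      have := hdiv x0
      simp at this
      exact hx0 (le_antisymm this (hw0 x0))
  have key : ∀ R : ℝ, ‖x0‖ + 1 ≤ R → I ≤ R⁻¹ * (N * (K * ∫ x, G x)) := by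
    intro R hR
    have hRpos : 0 < R := by linarith [norm_nonneg x0]
    let f : EuclideanSpace ℝ (Fin N) → ℝ := fun x => φ (R⁻¹ • x)
    have hf : ContDiff ℝ 1 f := hφd.comp (contDiff_const_smul _)
    have hfs : HasCompactSupport f :=
      φ.hasCompactSupport.comp_homeomorph (Homeomorph.smulOfNeZero R⁻¹ (by positivity))
    have hf' : ∀ x v, fderiv ℝ f x v = R⁻¹ * fderiv ℝ φ (R⁻¹ • x) v := by
      intro x v
      have h1 : HasFDerivAt (fun y : EuclideanSpace ℝ (Fin N) => R⁻¹ • y)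
        (R⁻¹ • ContinuousLinearMap.id ℝ _) x := (hasFDerivAt_id x).const_smul R⁻¹
      have h2 : HasFDerivAt φ (fderiv ℝ φ (R⁻¹ • x)) (R⁻¹ • x) :=
        ((hφd.differentiable (by norm_num)) _).hasFDerivAt
      have h3 : HasFDerivAt f _ x := h2.comp x h1
      rw [h3.fderiv]
      simp
    have hfc : Continuous f := hf.continuous
    have hVc : ∀ i, Continuous (V i) := fun i => (hV i).continuous
    have hV'c : ∀ i (v : EuclideanSpace ℝ (Fin N)), Continuous (fun x => fderiv ℝ (V i) x v) :=
      fun i v => ((hV i).continuous_fderiv (by norm_num)).clm_apply continuous_const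
    have hf'c : ∀ (v : EuclideanSpace ℝ (Fin N)), Continuous (fun x => fderiv ℝ f x v) :=
      fun v => (hf.continuous_fderiv (by norm_num)).clm_apply continuous_const
    have i1 : ∀ i (v : EuclideanSpace ℝ (Fin N)), Integrable (fun x => f x * fderiv ℝ (V i) x v) := fun i v =>
      (hfc.mul (hV'c i v)).integrable_of_hasCompactSupport hfs.mul_right
    have i2 : ∀ i (v : EuclideanSpace ℝ (Fin N)), Integrable (fun x => fderiv ℝ f x v * V i x) := fun i v =>
      ((hf'c v).mul (hVc i)).integrable_of_hasCompactSupport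
        (hfs.fderiv_apply (𝕜 := ℝ) v).mul_right
    have i3 : ∀ i, Integrable (fun x => f x * V i x) := fun i =>
      (hfc.mul (hVc i)).integrable_of_hasCompactSupport hfs.mul_right
    have ibp : ∀ i (v : EuclideanSpace ℝ (Fin N)), ∫ x, f x * fderiv ℝ (V i) x v = - ∫ x, fderiv ℝ f x v * V i x :=
      fun i v => integral_mul_fderiv_eq_neg_fderiv_mul_of_integrable (i2 i v) (i1 i v) (i3 i)
        (fun x _ => hf.differentiable (by norm_num) x)
        (fun x _ => (hV i).differentiable (by norm_num) x)
    have hb : ∀ i, ∫ x, fderiv ℝ f x (EuclideanSpace.single i 1) * V i x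
        ≤ R⁻¹ * (K * ∫ x, G x) := by
      intro i
      rw [← mul_assoc, ← integral_const_mul]
      refine integral_mono (i2 i _) (hG.const_mul _) fun x => ?_
      refine (le_abs_self _).trans ?_
      simp only [abs_mul, hf']
      have : |fderiv ℝ φ (R⁻¹ • x) (EuclideanSpace.single i 1)| ≤ K := by
        have := (fderiv ℝ φ (R⁻¹ • x)).le_opNorm (EuclideanSpace.single i (1:ℝ))
        simp only [EuclideanSpace.norm_single, norm_one, mul_one] at this
        exact this.trans (hK _)
      rw [abs_of_pos (inv_pos.2 hRpos)]
      have := hVG i x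
      gcongr
    calc I ≤ ∫ x, f x * w x := by
          refine integral_mono ((ψ.continuous.mul hw).integrable_of_hasCompactSupport
            ψ.hasCompactSupport.mul_right)
            ((hfc.mul hw).integrable_of_hasCompactSupport hfs.mul_right) fun x => ?_
          refine mul_le_mul_of_nonneg_right ?_ (hw0 x)
          by_cases hx : x ∈ Metric.ball x0 1
          · have : f x = 1 := by
              apply φ.one_of_mem_closedBall
              have h1 : ‖x - x0‖ < 1 := by simpa [dist_eq_norm] using hx
              have h2 : ‖x‖ ≤ R := by
                have := norm_add_le (x - x0) x0
                simp at this
                linarith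
              simp only [Metric.mem_closedBall, dist_zero_right, norm_smul, norm_inv,
                Real.norm_eq_abs, abs_of_pos hRpos, φ]
              rw [inv_mul_le_iff₀ hRpos]; linarith
            rw [this]; exact ψ.le_one
          · have : ψ x = 0 := ψ.zero_of_le_dist (by simpa [ψ] using hx)
            rw [this]; exact φ.nonneg
      _ ≤ ∫ x, -∑ i, f x * fderiv ℝ (V i) x (EuclideanSpace.single i 1) := by
          refine integral_mono ((hfc.mul hw).integrable_of_hasCompactSupport hfs.mul_right)
            (integrable_finsetSum _ fun i _ => i1 i _).neg fun x => ?_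
          have h1 := hdiv x
          have h2 : 0 ≤ f x := φ.nonneg
          simp only [← Finset.mul_sum]
          nlinarith
      _ = ∑ i, ∫ x, fderiv ℝ f x (EuclideanSpace.single i 1) * V i x := by
          rw [integral_neg, integral_finsetSum _ fun i _ => i1 i _]
          simp [ibp]
      _ ≤ ∑ i : Fin N, R⁻¹ * (K * ∫ x, G x) := Finset.sum_le_sum fun i _ => hb i
      _ = R⁻¹ * (N * (K * ∫ x, G x)) := by simp; ring
  set Z := (N : ℝ) * (K * ∫ x, G x) with hZ
  have hZ0 : 0 ≤ Z := by positivity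
  have hR : ‖x0‖ + 1 ≤ ‖x0‖ + 1 + Z / I := by linarith [div_nonneg hZ0 hI.le]
  have hRpos : 0 < ‖x0‖ + 1 + Z / I := by linarith [norm_nonneg x0]
  have h := key _ hR
  rw [inv_mul_eq_div, le_div_iff₀ hRpos] at h
  have : I * (Z / I) = Z := by field_simp
  nlinarith [norm_nonneg x0]

lemma integrable_G (N : ℕ) (c : ℝ) (hc : 0 < c) :
    ∃ A : ℝ, 0 ≤ A ∧ ∀ x : EuclideanSpace ℝ (Fin N),
      (1 + ‖x‖) * Real.exp (-c * ‖x‖) ^ 2 ≤ A * (1 + ‖x‖) ^ (-((N:ℝ) + 1)) := by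
  refine ⟨(N+2).factorial * Real.exp (2*c) / (2*c)^(N+2), by positivity, fun x => ?_⟩
  have hr : 0 < 1 + ‖x‖ := by positivity
  have h := Real.pow_div_factorial_le_exp (x := 2*c*(1+‖x‖)) (by positivity) (N+2)
  have e1 : (1 + ‖x‖) ^ (-((N:ℝ) + 1)) = ((1+‖x‖)^(N+1))⁻¹ := by
    rw [Real.rpow_neg hr.le]; congr 1
    exact_mod_cast Real.rpow_natCast (1+‖x‖) (N+1)
  have e2 : Real.exp (-c * ‖x‖) ^ 2 = Real.exp (2*c) * (Real.exp (2*c*(1+‖x‖)))⁻¹ := by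
    rw [← Real.exp_neg, ← Real.exp_add, ← Real.exp_nat_mul]; congr 1; push_cast; ring
  rw [e1, e2]
  rw [div_le_iff₀ (by positivity), mul_pow] at h
  rw [← div_eq_mul_inv, ← div_eq_mul_inv, div_div, mul_div_assoc', div_le_div_iff₀ (by positivity) (by positivity)]
  have e3 : (1+‖x‖)^(N+2) = (1+‖x‖)^(N+1) * (1+‖x‖) := pow_succ _ _
  rw [e3] at h
  have := mul_le_mul_of_nonneg_left h (Real.exp_pos (2*c)).le
  nlinarith

theorem no_nontrivial_solution_critical_or_supercritical {N : ℕ} (hN : 3 ≤ N)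
    (m κ p : ℝ) (hm : 0 < m) (hκ : 0 < κ)
    (hp : ((N : ℝ) + 2) / ((N : ℝ) - 2) ≤ p)
    (u : EuclideanSpace ℝ (Fin N) → ℝ) (hu : ContDiff ℝ 2 u)
    (hunonneg : ∀ x, 0 ≤ u x)
    (heq : ∀ x, -lap u x + m * u x = κ * u x ^ p)
    (C c : ℝ) (hC : 0 < C) (hc : 0 < c)
    (hdecay : ∀ x, u x + ‖gradient u x‖ ≤ C * Real.exp (-c * ‖x‖)) :
    ∀ x, u x = 0 := by
  have hN3 : (3:ℝ) ≤ N := by exact_mod_cast hN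
  have hN2 : (0:ℝ) < N - 2 := by linarith
  have hp' := hp
  rw [div_le_iff₀ hN2] at hp'
  have hp1 : 1 < p := by
    refine lt_of_lt_of_le ?_ hp
    rw [lt_div_iff₀ hN2]; linarith
  let D : Fin N → EuclideanSpace ℝ (Fin N) → ℝ :=
    fun j x => fderiv ℝ u x (EuclideanSpace.single j 1)
  have hdu : ContDiff ℝ 1 (fderiv ℝ u) := hu.fderiv_right (by norm_num)
  have hD : ∀ j, ContDiff ℝ 1 (D j) := fun j => hdu.clm_apply contDiff_const
  have hX : ∀ j, ContDiff ℝ 1 (fun x : EuclideanSpace ℝ (Fin N) => x j) := fun j =>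
    (EuclideanSpace.proj j : EuclideanSpace ℝ (Fin N) →L[ℝ] ℝ).contDiff
  have hu1 : ContDiff ℝ 1 u := hu.of_le (by norm_num)
  have hup : ContDiff ℝ 1 (fun x => u x ^ (p+1)) :=
    (contDiff_rpow_const_of_le (n := 1) (by push_cast; linarith)).comp hu1
  let V : Fin N → EuclideanSpace ℝ (Fin N) → ℝ := fun i x =>
    (∑ j, x j * D j x) * D i x - (1/2) * ((∑ j, D j x * D j x) * x i)
      + (-(m/2) * (u x * u x) + κ/(p+1) * u x ^ (p+1)) * x i
      + ((N-2)/2) * (u x * D i x)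
  have hV : ∀ i, ContDiff ℝ 1 (V i) := by
    intro i
    have s1 : ContDiff ℝ 1 (fun x : EuclideanSpace ℝ (Fin N) => ∑ j, x j * D j x) :=
      ContDiff.sum fun j _ => (hX j).mul (hD j)
    have s2 : ContDiff ℝ 1 (fun x : EuclideanSpace ℝ (Fin N) => ∑ j, D j x * D j x) :=
      ContDiff.sum fun j _ => (hD j).mul (hD j)
    exact (((s1.mul (hD i)).sub (contDiff_const.mul (s2.mul (hX i)))).add
      (((contDiff_const.mul (hu1.mul hu1)).add (contDiff_const.mul hup)).mul (hX i))).add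
      (contDiff_const.mul (hu1.mul (hD i)))
  obtain ⟨A, hA0, hA⟩ := integrable_G N c hc
  have hDb : ∀ j x, |D j x| ≤ C * Real.exp (-c * ‖x‖) := by
    intro j x
    have h1 := (fderiv ℝ u x).le_opNorm (EuclideanSpace.single j (1:ℝ))
    simp only [EuclideanSpace.norm_single, norm_one, mul_one] at h1
    have h2 : ‖gradient u x‖ = ‖fderiv ℝ u x‖ := by simp [gradient]
    have := hdecay x
    have := hunonneg x
    have h3 : |D j x| ≤ ‖fderiv ℝ u x‖ := h1
    linarith
  have hub : ∀ x, u x ≤ C * Real.exp (-c * ‖x‖) := fun x => by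
    linarith [hdecay x, norm_nonneg (gradient u x)]
  have hXb : ∀ j (x : EuclideanSpace ℝ (Fin N)), |x j| ≤ ‖x‖ := fun j x => by
    simpa using PiLp.norm_apply_le x j
  let B : ℝ := N + N/2 + m/2 + κ/(p+1) * C^(p-1) + (N-2)/2
  have hB0 : 0 ≤ B := by positivity
  have hVb : ∀ i x, |V i x| ≤ B * C^2 * A * (1 + ‖x‖) ^ (-((N:ℝ) + 1)) := by
    intro i x
    set M := C * Real.exp (-c * ‖x‖) with hM
    have hM0 : 0 ≤ M := by positivity
    have hr := norm_nonneg x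
    have b1 : |∑ j, x j * D j x| ≤ N * (‖x‖ * M) := by
      refine (Finset.abs_sum_le_sum_abs _ _).trans ?_
      refine (Finset.sum_le_card_nsmul _ _ (‖x‖ * M) fun j _ => ?_).trans (by simp)
      rw [abs_mul]; exact mul_le_mul (hXb j x) (hDb j x) (abs_nonneg _) hr
    have b2 : |∑ j, D j x * D j x| ≤ N * (M * M) := by
      refine (Finset.abs_sum_le_sum_abs _ _).trans ?_
      refine (Finset.sum_le_card_nsmul _ _ (M * M) fun j _ => ?_).trans (by simp)
      rw [abs_mul]; exact mul_le_mul (hDb j x) (hDb j x) (abs_nonneg _) hM0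
    have u0 := hunonneg x
    have b3 : u x * u x ≤ M * M := mul_le_mul (hub x) (hub x) u0 hM0
    have b4 : u x ^ (p+1) ≤ C^(p-1) * (M * M) := by
      have : u x ^ (p+1) = u x ^ (p-1) * (u x * u x) := by
        rw [← sq, ← Real.rpow_natCast (u x) 2, ← Real.rpow_add_of_nonneg u0 (by linarith) (by norm_num)]
        congr 1; push_cast; ring
      rw [this]
      have hMC : M ≤ C := by
        have : Real.exp (-c * ‖x‖) ≤ 1 := Real.exp_le_one_iff.2 (by nlinarith)
        nlinarith
      have := Real.rpow_le_rpow u0 ((hub x).trans hMC) (by linarith : 0 ≤ p - 1)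
      exact mul_le_mul this b3 (by positivity) (by positivity)
    have c1 : |(∑ j, x j * D j x) * D i x| ≤ N * (‖x‖ * M) * M := by
      rw [abs_mul]; exact mul_le_mul b1 (hDb i x) (abs_nonneg _) (by positivity)
    have c2 : |(1/2) * ((∑ j, D j x * D j x) * x i)| ≤ (1/2) * (N * (M*M) * ‖x‖) := by
      rw [abs_mul, abs_mul, abs_of_pos (by norm_num : (0:ℝ) < 1/2)]
      exact mul_le_mul_of_nonneg_left (mul_le_mul b2 (hXb i x) (abs_nonneg _) (by positivity)) (by norm_num)
    have c3 : |(-(m/2) * (u x * u x) + κ/(p+1) * u x ^ (p+1)) * x i|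
        ≤ ((m/2) * (M*M) + κ/(p+1) * (C^(p-1) * (M * M))) * ‖x‖ := by
      rw [abs_mul]
      refine mul_le_mul ?_ (hXb i x) (abs_nonneg _) (by positivity)
      refine (abs_add_le _ _).trans (add_le_add ?_ ?_)
      · rw [abs_mul, abs_neg, abs_of_pos (by positivity : 0 < m/2), abs_of_nonneg (by positivity)]
        gcongr
      · rw [abs_of_nonneg (by positivity)]
        gcongr
    have c4 : |(((N:ℝ)-2)/2) * (u x * D i x)| ≤ (((N:ℝ)-2)/2) * (M*M) := by
      rw [abs_mul, abs_of_pos (by positivity : 0 < ((N:ℝ)-2)/2), abs_mul, abs_of_nonneg u0]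
      exact mul_le_mul_of_nonneg_left (mul_le_mul (hub x) (hDb i x) (abs_nonneg _) hM0) (by positivity)
    have t : |V i x| ≤ N * (‖x‖ * M) * M + (1/2) * (N * (M*M) * ‖x‖)
        + ((m/2) * (M*M) + κ/(p+1) * (C^(p-1) * (M * M))) * ‖x‖ + (((N:ℝ)-2)/2) * (M*M) :=
      (abs_add_le _ _).trans (add_le_add ((abs_add_le _ _).trans (add_le_add
        ((abs_sub _ _).trans (add_le_add c1 c2)) c3)) c4)
    have q : 0 ≤ κ/(p+1) * C^(p-1) := by positivity
    have t2 : |V i x| ≤ B * ((1 + ‖x‖) * (M*M)) := by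
      refine t.trans ?_
      have e : B * ((1 + ‖x‖) * (M*M)) - (N * (‖x‖ * M) * M + (1/2) * (N * (M*M) * ‖x‖)
        + ((m/2) * (M*M) + κ/(p+1) * (C^(p-1) * (M * M))) * ‖x‖ + (((N:ℝ)-2)/2) * (M*M))
        = (N + N/2 + m/2 + κ/(p+1) * C^(p-1)) * (M*M) + (N-2)/2 * (M*M) * ‖x‖ := by
        simp only [B]; ring
      have : 0 ≤ (N + N/2 + m/2 + κ/(p+1) * C^(p-1)) * (M*M) + (N-2)/2 * (M*M) * ‖x‖ := by
        positivity
      linarith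
    refine t2.trans ?_
    have := mul_le_mul_of_nonneg_left (hA x) (by positivity : 0 ≤ B * C^2)
    calc _ = B * C^2 * ((1 + ‖x‖) * Real.exp (-c * ‖x‖) ^ 2) := by rw [hM]; ring
      _ ≤ _ := this
      _ = _ := by ring
  have hGi : Integrable (fun x : EuclideanSpace ℝ (Fin N) =>
      B * C^2 * A * (1 + ‖x‖) ^ (-((N:ℝ) + 1))) :=
    (integrable_one_add_norm (by simp)).const_mul _
  have hfin := core_div V hV _ hGi hVb (fun x => m * (u x * u x))
    (by have := hu.continuous; fun_prop) (fun x => by have := hunonneg x; positivity) ?_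
  · intro x
    have := hfin x
    simpa [hm.ne'] using this
  intro x
  set H : Fin N → Fin N → ℝ := fun i j =>
    fderiv ℝ (fderiv ℝ u) x (EuclideanSpace.single i 1) (EuclideanSpace.single j 1) with hH
  have hsymm : ∀ i j, H i j = H j i := fun i j =>
    (hu.contDiffAt.isSymmSndFDerivAt (by simp)) _ _
  have hlap : lap u x = ∑ i, H i i := by
    simp [lap, iteratedFDeriv_two_apply, H]
  have hux : HasFDerivAt u (fderiv ℝ u x) x := (hu1.differentiable (by norm_num) x).hasFDerivAt
  have hDx : ∀ j, HasFDerivAt (D j) ((fderiv ℝ (fderiv ℝ u) x).flip (EuclideanSpace.single j 1)) x := by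
    intro j
    have h1 : HasFDerivAt (fderiv ℝ u) (fderiv ℝ (fderiv ℝ u) x) x :=
      (hdu.differentiable (by norm_num) x).hasFDerivAt
    have h2 := h1.clm_apply (hasFDerivAt_const (EuclideanSpace.single j (1:ℝ)) x)
    rw [ContinuousLinearMap.comp_zero, zero_add] at h2
    exact h2
  have hXx : ∀ j, HasFDerivAt (fun x : EuclideanSpace ℝ (Fin N) => x j)
      (EuclideanSpace.proj j : EuclideanSpace ℝ (Fin N) →L[ℝ] ℝ) x := fun j =>
    (EuclideanSpace.proj j : EuclideanSpace ℝ (Fin N) →L[ℝ] ℝ).hasFDerivAt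
  have hupx := hux.rpow_const (p := p+1) (Or.inr (by linarith))
  have hder : ∀ i, fderiv ℝ (V i) x (EuclideanSpace.single i 1) =
      (∑ j, x j * D j x) * H i i + (D i x + ∑ j, x j * H i j) * D i x
      - (1/2) * ((∑ j, D j x * D j x) + (2 * ∑ j, D j x * H i j) * x i)
      + ((-(m/2) * (u x * u x) + κ/(p+1) * u x ^ (p+1))
         + (-m * u x + κ * u x ^ p) * D i x * x i)
      + ((N-2)/2) * (u x * H i i + D i x * D i x) := by
    intro i
    have s1 := HasFDerivAt.fun_sum (u := Finset.univ) fun j _ => (hXx j).mul (hDx j)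
    have s2 := HasFDerivAt.fun_sum (u := Finset.univ) fun j _ => (hDx j).mul (hDx j)
    have hh : HasFDerivAt (V i) _ x :=
      (((s1.mul (hDx i)).sub ((s2.mul (hXx i)).const_mul (1/2))).add
      ((((hux.mul hux).const_mul (-(m/2))).add (hupx.const_mul (κ/(p+1)))).mul (hXx i))).add
      ((hux.mul (hDx i)).const_mul (((N:ℝ)-2)/2))
    rw [hh.fderiv]
    have hDe : fderiv ℝ u x (EuclideanSpace.single i 1) = D i x := rfl
    have hHe : ∀ j, fderiv ℝ (fderiv ℝ u) x (EuclideanSpace.single i 1) (EuclideanSpace.single j 1)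
      = H i j := fun j => rfl
    have hp0 : p + 1 ≠ 0 := by linarith
    simp [hDe, hHe, Finset.sum_add_distrib]
    have hk : κ / (p + 1) * ((p + 1) * u x ^ p * D i x) = κ * u x ^ p * D i x := by
      field_simp
    rw [hk]
    ring
  have hcross : ∑ i, (∑ j, x j * H i j) * D i x = ∑ i, (∑ j, D j x * H i j) * x i := by
    simp only [Finset.sum_mul]
    rw [Finset.sum_comm]
    refine Finset.sum_congr rfl fun i _ => Finset.sum_congr rfl fun j _ => ?_
    rw [hsymm j i]; ring
  have hS : ∑ i, D i x * x i = ∑ j, x j * D j x :=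
    Finset.sum_congr rfl fun i _ => mul_comm _ _
  have hL : ∑ i, H i i = m * u x - κ * u x ^ p := by
    have := heq x
    rw [hlap] at this; linarith
  have htot : ∑ i, fderiv ℝ (V i) x (EuclideanSpace.single i 1) =
      (∑ j, x j * D j x) * (∑ i, H i i) + ((∑ j, D j x * D j x) + ∑ i, (∑ j, x j * H i j) * D i x)
      - (1/2) * (N * (∑ j, D j x * D j x) + 2 * ∑ i, (∑ j, D j x * H i j) * x i)
      + (N * (-(m/2) * (u x * u x) + κ/(p+1) * u x ^ (p+1))
         + (-m * u x + κ * u x ^ p) * ∑ i, D i x * x i)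
      + ((N-2)/2) * (u x * (∑ i, H i i) + ∑ j, D j x * D j x) := by
    simp only [hder, Finset.sum_add_distrib, Finset.sum_sub_distrib, ← Finset.mul_sum, add_mul,
      mul_assoc, Finset.sum_const, Finset.card_univ, Fintype.card_fin, nsmul_eq_mul]
    ring
  rw [htot, hcross, hS, hL]
  have hup1 : u x ^ (p+1) = u x ^ p * u x := by
    rw [Real.rpow_add_of_nonneg (hunonneg x) (by linarith) (by norm_num), Real.rpow_one]
  have hcoef : N * (κ/(p+1)) - (N-2)/2 * κ ≤ 0 := by
    have : N * (κ/(p+1)) - (N-2)/2 * κ = κ/(p+1) * (N - (N-2)/2*(p+1)) := by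
      field_simp
    rw [this]
    exact mul_nonpos_of_nonneg_of_nonpos (by positivity) (by linarith)
  have hpos : 0 ≤ u x ^ (p+1) := Real.rpow_nonneg (hunonneg x) _
  have := mul_nonpos_of_nonpos_of_nonneg hcoef hpos
  rw [hup1] at this ⊢
  linarith
end

section
/- Let N ≥ 3 be an integer, m > 0, and let f : ℝ → ℝ be continuous with f(0) = 0; set F(s) = ∫₀^s f(t) dt. Suppose there exists a C² function u : ℝ^N → [0,∞), not identically zero, satisfying −Δu(x) + m·u(x) = f(u(x)) for all x ∈ ℝ^N and such that |u(x)| + ‖∇u(x)‖ ≤ C·exp(−c‖x‖) for some constants C, c > 0 and all x. Then there exists T > 0 such that (m/2)·T² < F(T). -/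
open MeasureTheory Real

lemma bl_divergence {N : ℕ} (V V' : Fin N → EuclideanSpace ℝ (Fin N) → ℝ)
    (hVc : ∀ i, Continuous (V i)) (hV'c : ∀ i, Continuous (V' i))
    (hd : ∀ i x, HasLineDerivAt ℝ (V i) (V' i x) x (EuclideanSpace.single i 1))
    (hint : ∀ i, Integrable (V i))
    (hsign : ∀ x, ∑ i, V' i x ≤ 0) (x : EuclideanSpace ℝ (Fin N)) : ∑ i, V' i x = 0 := by
  let φ : ContDiffBump (0 : EuclideanSpace ℝ (Fin N)) := ⟨1, 2, one_pos, one_lt_two⟩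
  have hφ1 : ContDiff ℝ 1 φ := φ.contDiff
  have hφd : Differentiable ℝ φ := hφ1.differentiable (by norm_num)
  have hφ' : Continuous (fderiv ℝ φ) := hφ1.continuous_fderiv (by norm_num)
  obtain ⟨K, hK⟩ : ∃ K, ∀ x, ‖fderiv ℝ φ x‖ ≤ K :=
    (φ.hasCompactSupport.fderiv ℝ).exists_bound_of_continuous hφ'
  have hK0 : 0 ≤ K := (norm_nonneg _).trans (hK 0)
  have hcs : ∀ ε : ℝ, 0 < ε → HasCompactSupport (fun y => φ (ε • y)) := fun ε hε =>
    φ.hasCompactSupport.comp_smul hε.ne'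
  have hcont : ∀ ε : ℝ, Continuous (fun y => φ (ε • y)) := fun ε =>
    φ.continuous.comp (continuous_const_smul ε)
  have hline : ∀ (ε : ℝ) i y, HasLineDerivAt ℝ (fun y => φ (ε • y))
      (ε * fderiv ℝ φ (ε • y) (EuclideanSpace.single i 1)) y (EuclideanSpace.single i 1) := by
    intro ε i y
    have h1 : HasFDerivAt (fun y : EuclideanSpace ℝ (Fin N) => ε • y)
      (ε • ContinuousLinearMap.id ℝ _) y := (hasFDerivAt_id y).const_smul ε
    have h2 := ((hφd (ε • y)).hasFDerivAt.comp y h1).hasLineDerivAt (EuclideanSpace.single i 1)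
    simp at h2
    exact h2
  have hcont' : ∀ (ε : ℝ) i, Continuous
      (fun y => ε * fderiv ℝ φ (ε • y) (EuclideanSpace.single i (1:ℝ))) := by
    intro ε i
    exact continuous_const.mul ((hφ'.comp (continuous_const_smul ε)).clm_apply continuous_const)
  have hcs' : ∀ (ε : ℝ) i, 0 < ε → HasCompactSupport
      (fun y => ε * fderiv ℝ φ (ε • y) (EuclideanSpace.single i (1:ℝ))) := by
    intro ε i hε
    have h := (φ.hasCompactSupport.fderiv ℝ).comp_smul hε.ne'
    exact h.comp_left (g := fun L => ε * L (EuclideanSpace.single i (1:ℝ))) (by simp)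
  have hparts : ∀ (ε : ℝ) i, 0 < ε → ∫ y, φ (ε • y) * V' i y =
      - ∫ y, (ε * fderiv ℝ φ (ε • y) (EuclideanSpace.single i (1:ℝ))) * V i y := by
    intro ε i hε
    refine integral_bilinear_hasLineDerivAt_right_eq_neg_left_of_integrable
      (B := ContinuousLinearMap.mul ℝ ℝ) (v := EuclideanSpace.single i (1:ℝ)) ?_ ?_ ?_ ?_ ?_
    · exact ((hcont' ε i).mul (hVc i)).integrable_of_hasCompactSupport (hcs' ε i hε).mul_right
    · exact ((hcont ε).mul (hV'c i)).integrable_of_hasCompactSupport (hcs ε hε).mul_right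
    · exact ((hcont ε).mul (hVc i)).integrable_of_hasCompactSupport (hcs ε hε).mul_right
    · intro y _; exact hline ε i y
    · intro y _; exact hd i y
  have hbd : ∀ (ε : ℝ) i, 0 < ε → |∫ y, φ (ε • y) * V' i y| ≤ ε * (K * ∫ y, ‖V i y‖) := by
    intro ε i hε
    rw [hparts ε i hε, abs_neg, ← mul_assoc, ← integral_const_mul, ← Real.norm_eq_abs]
    refine norm_integral_le_of_norm_le ((hint i).norm.const_mul _) (Filter.Eventually.of_forall ?_)
    intro y
    rw [norm_mul, norm_mul, Real.norm_of_nonneg hε.le]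
    have h3 : ‖fderiv ℝ φ (ε • y) (EuclideanSpace.single i (1:ℝ))‖ ≤ K := by
      refine (ContinuousLinearMap.le_opNorm _ _).trans ?_
      simpa using hK (ε • y)
    gcongr
  have hi : ∀ (ε : ℝ) i, 0 < ε → Integrable (fun y => φ (ε • y) * V' i y) := fun ε i hε =>
    ((hcont ε).mul (hV'c i)).integrable_of_hasCompactSupport (hcs ε hε).mul_right
  have hsum : ∀ ε : ℝ, 0 < ε → ∫ y, φ (ε • y) * (- ∑ i, V' i y) ≤
      ε * (∑ i, K * ∫ y, ‖V i y‖) := by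
    intro ε hε
    have : (fun y => φ (ε • y) * (- ∑ i, V' i y)) = fun y => - ∑ i, φ (ε • y) * V' i y := by
      funext y; rw [mul_neg, Finset.mul_sum]
    rw [this, integral_neg, integral_finsetSum _ (fun i _ => hi ε i hε), ← Finset.sum_neg_distrib,
      Finset.mul_sum]
    exact Finset.sum_le_sum fun i _ => (neg_le_abs _).trans (hbd ε i hε)
  have hHc : Continuous (fun y => - ∑ i, V' i y) :=
    (continuous_finsetSum _ fun i _ => hV'c i).neg
  have hint2 : ∀ ε : ℝ, 0 < ε → Integrable (fun y => φ (ε • y) * (- ∑ i, V' i y)) := fun ε hε =>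
    ((hcont ε).mul hHc).integrable_of_hasCompactSupport (hcs ε hε).mul_right
  have hnn : ∀ (ε : ℝ) y, 0 ≤ φ (ε • y) * (- ∑ i, V' i y) := fun ε y =>
    mul_nonneg φ.nonneg (by linarith [hsign y])
  have hzero : ∀ δ : ℝ, 0 < δ → ∫ y, φ (δ • y) * (- ∑ i, V' i y) ≤ 0 := by
    intro δ hδ
    have hle : ∀ ε : ℝ, 0 < ε → ε ≤ δ / 2 →
        ∫ y, φ (δ • y) * (- ∑ i, V' i y) ≤ ε * (∑ i, K * ∫ y, ‖V i y‖) := by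
      intro ε hε hεδ
      refine le_trans (integral_mono (hint2 δ hδ) (hint2 ε hε) ?_) (hsum ε hε)
      intro y
      refine mul_le_mul_of_nonneg_right ?_ (by linarith [hsign y])
      by_cases hy : 2 ≤ ‖δ • y‖
      · rw [φ.zero_of_le_dist (x := δ • y) (by simpa [φ] using hy)]
        exact φ.nonneg
      · rw [φ.one_of_mem_closedBall (x := ε • y)]
        · exact φ.le_one
        · rw [norm_smul, Real.norm_of_nonneg hδ.le] at hy
          rw [mem_closedBall_zero_iff, norm_smul, Real.norm_of_nonneg hε.le]
          show _ ≤ (1:ℝ)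
          nlinarith [norm_nonneg y]
    have hlim : Filter.Tendsto (fun ε : ℝ => ε * (∑ i, K * ∫ y, ‖V i y‖))
        (nhdsWithin 0 (Set.Ioi 0)) (nhds 0) := by
      have : Filter.Tendsto (fun ε : ℝ => ε * (∑ i, K * ∫ y, ‖V i y‖)) (nhds 0)
        (nhds (0 * (∑ i, K * ∫ y, ‖V i y‖))) := (continuous_id.mul continuous_const).tendsto 0
      rw [zero_mul] at this
      exact this.mono_left nhdsWithin_le_nhds
    refine ge_of_tendsto hlim ?_
    filter_upwards [Ioc_mem_nhdsGT (half_pos hδ)] with ε hε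
    exact hle ε hε.1 hε.2
  by_contra hne
  obtain ⟨δ, hδ, hδx⟩ : ∃ δ : ℝ, 0 < δ ∧ δ * ‖x‖ ≤ 1 := by
    refine ⟨(1 + ‖x‖)⁻¹, by positivity, ?_⟩
    rw [inv_mul_le_iff₀ (by positivity)]; linarith
  have hpos := ((hcont δ).mul hHc).integral_pos_of_hasCompactSupport_nonneg_nonzero (μ := volume)
    (hcs δ hδ).mul_right (hnn δ) (x := x) (by
      show φ (δ • x) * (- ∑ i, V' i x) ≠ 0
      rw [φ.one_of_mem_closedBall (x := δ • x)]
      · simpa using hne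
      · rw [mem_closedBall_zero_iff, norm_smul, Real.norm_of_nonneg hδ.le]; exact hδx)
  exact absurd hpos (not_lt.mpr (hzero δ hδ))

lemma bl_integrable {N : ℕ} (V : EuclideanSpace ℝ (Fin N) → ℝ) (hV : Continuous V)
    (K c : ℝ) (hK : 0 ≤ K) (hc : 0 < c) (h : ∀ x, |V x| ≤ K * (‖x‖ * Real.exp (-c * ‖x‖))) :
    Integrable V := by
  have hI := integrable_one_add_norm (E := EuclideanSpace ℝ (Fin N)) (μ := volume)
    (r := (N + 1 : ℕ)) (by simp)
  let A : ℝ := (Nat.factorial (N + 2)) / (min c 1) ^ (N + 2) * Real.exp 1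
  refine (hI.const_mul (K * A)).mono' hV.aestronglyMeasurable (Filter.Eventually.of_forall ?_)
  intro x
  rw [Real.norm_eq_abs, mul_assoc]
  refine (h x).trans (mul_le_mul_of_nonneg_left ?_ hK)
  rw [Real.rpow_neg (by positivity), Real.rpow_natCast]
  set d := min c 1 with hdd
  have hd : 0 < d := lt_min hc one_pos
  set r := ‖x‖ with hr
  have hr0 : 0 ≤ r := norm_nonneg x
  have h1 := Real.pow_div_factorial_le_exp (x := d * (1 + r)) (by positivity) (N + 2)
  have h2 : Real.exp (d * (1 + r)) ≤ Real.exp 1 * Real.exp (c * r) := by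
    rw [← Real.exp_add]
    refine Real.exp_le_exp.mpr ?_
    have : d ≤ c := min_le_left _ _
    have : d ≤ 1 := min_le_right _ _
    nlinarith
  have h3 := h1.trans h2
  rw [div_le_iff₀ (by positivity), mul_pow] at h3
  rw [← div_eq_mul_inv, le_div_iff₀ (by positivity), neg_mul, Real.exp_neg]
  have h4 : r * (1 + r) ^ (N + 1) ≤ (1 + r) ^ (N + 2) := by
    rw [pow_succ' _ (N+1)]
    gcongr; linarith
  show r * (Real.exp (c * r))⁻¹ * (1 + r) ^ (N + 1) ≤ _
  have h5 : r * (Real.exp (c * r))⁻¹ * (1 + r) ^ (N + 1) =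
    (r * (1 + r) ^ (N + 1)) / Real.exp (c * r) := by ring
  rw [h5, div_le_iff₀ (Real.exp_pos _)]
  refine h4.trans ?_
  have h6 : A * Real.exp (c * r) =
    (Real.exp 1 * Real.exp (c * r) * (Nat.factorial (N + 2))) / d ^ (N + 2) := by
    simp only [A]; ring
  rw [h6, le_div_iff₀ (by positivity)]
  linarith

lemma bl_zero {N : ℕ} (hN : 0 < N) (u : EuclideanSpace ℝ (Fin N) → ℝ)
    (hd : Differentiable ℝ u) (h0 : ∀ x, fderiv ℝ u x = 0) (C c : ℝ) (hc : 0 < c)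
    (hb : ∀ x, |u x| ≤ C * Real.exp (-c * ‖x‖)) (x : EuclideanSpace ℝ (Fin N)) : u x = 0 := by
  have hconst : ∀ y, u x = u y := fun y => is_const_of_fderiv_eq_zero hd h0 x y
  let e : EuclideanSpace ℝ (Fin N) := EuclideanSpace.single ⟨0, hN⟩ 1
  have hle : ∀ t : ℝ, 0 ≤ t → |u x| ≤ C * Real.exp (-(c * t)) := by
    intro t ht
    have := hb (t • e)
    rw [← hconst, norm_smul, Real.norm_of_nonneg ht] at this
    simpa [e] using this
  have hl : Filter.Tendsto (fun t : ℝ => C * Real.exp (-(c * t))) Filter.atTop (nhds (C * 0)) :=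
    (Real.tendsto_exp_neg_atTop_nhds_zero.comp
      (Filter.tendsto_id.const_mul_atTop hc)).const_mul C
  rw [mul_zero] at hl
  have : |u x| ≤ 0 := ge_of_tendsto hl (by
    filter_upwards [Filter.eventually_ge_atTop 0] with t ht using hle t ht)
  exact abs_eq_zero.mp (le_antisymm this (abs_nonneg _))

lemma bl_algebra {N : ℕ} (x p : Fin N → ℝ) (h : Fin N → Fin N → ℝ) (hs : ∀ i j, h i j = h j i)
    (g G : ℝ) (hg : - ∑ i, h i i = g) :
    ∑ i, ((∑ j, ((if j = i then 1 else 0) * p j + x j * h j i)) * p i + (∑ j, x j * p j) * h i i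
      - (1 * ((∑ j, p j ^ 2) / 2) + x i * ((∑ j, 2 * p j * h j i) / 2))
      + (1 * G + x i * (g * p i))) = (1 - (N:ℝ) / 2) * (∑ j, p j ^ 2) + N * G := by
  have e1 : ∀ i, (∑ j, ((if j = i then 1 else 0) * p j + x j * h j i)) * p i
      = p i ^ 2 + ∑ j, x j * p i * h i j := by
    intro i
    rw [Finset.sum_add_distrib, add_mul, Finset.sum_mul]
    congr 1
    · simp; ring
    · rw [Finset.sum_mul]
      exact Finset.sum_congr rfl fun j _ => by rw [hs j i]; ring
  have e2 : ∀ i, x i * ((∑ j, 2 * p j * h j i) / 2) = ∑ j, x i * p j * h j i := by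
    intro i
    rw [Finset.sum_div, Finset.mul_sum]
    exact Finset.sum_congr rfl fun j _ => by ring
  have e3 : ∑ i, x i * (g * p i) = (∑ j, x j * p j) * g := by
    rw [Finset.sum_mul]; exact Finset.sum_congr rfl fun j _ => by ring
  simp only [e1, e2]
  simp only [Finset.sum_add_distrib, Finset.sum_sub_distrib, e3, ← Finset.mul_sum]
  rw [Finset.sum_comm (f := fun i j => x j * p i * h i j), ← hg]
  simp
  ring

theorem berestycki_lions_necessary {N : ℕ} (hN : 3 ≤ N) (m : ℝ) (hm : 0 < m)
    (f : ℝ → ℝ) (hf : Continuous f) (hf0 : f 0 = 0)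
    (F : ℝ → ℝ) (hF : ∀ s : ℝ, F s = ∫ t in (0:ℝ)..s, f t)
    (u : EuclideanSpace ℝ (Fin N) → ℝ) (hu : ContDiff ℝ 2 u)
    (hunonneg : ∀ x, 0 ≤ u x) (hune : ∃ x, u x ≠ 0)
    (heq : ∀ x, -lap u x + m * u x = f (u x))
    (C c : ℝ) (hC : 0 < C) (hc : 0 < c)
    (hdecay : ∀ x, |u x| + ‖gradient u x‖ ≤ C * Real.exp (-c * ‖x‖)) :
    ∃ T > 0, m / 2 * T ^ 2 < F T := by
  by_contra! hcon
  have hFz : F 0 = 0 := by rw [hF]; simp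
  obtain ⟨G, hGdef⟩ : ∃ G : ℝ → ℝ, ∀ s, G s = F s - m / 2 * s ^ 2 := ⟨_, fun s => rfl⟩
  have hGneg : ∀ s, 0 ≤ s → G s ≤ 0 := by
    intro s hs
    rw [hGdef]
    rcases hs.eq_or_lt with rfl | hs
    · simp [hFz]
    · linarith [hcon s hs]
  have hGd : ∀ s, HasDerivAt G (f s - m * s) s := by
    intro s
    have h1 : HasDerivAt F (f s) s := by
      have : F = fun s => ∫ t in (0:ℝ)..s, f t := funext hF
      rw [this]
      exact (hf.integral_hasStrictDerivAt 0 s).hasDerivAt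
    have h2 : HasDerivAt (fun s : ℝ => m / 2 * s ^ 2) (m * s) s := by
      have := ((hasDerivAt_id s).pow 2).const_mul (m / 2)
      refine this.congr_deriv ?_
      simp only [id]; push_cast; ring
    have : G = fun s => F s - m / 2 * s ^ 2 := funext hGdef
    rw [this]
    exact h1.sub h2
  have hGc : Continuous G := continuous_iff_continuousAt.mpr fun s => (hGd s).continuousAt
  have hgc : Continuous (fun s => f s - m * s) := by fun_prop
  obtain ⟨L, hL⟩ : ∃ L, ∀ s ∈ Set.Icc 0 C, ‖f s - m * s‖ ≤ L :=
    isCompact_Icc.exists_bound_of_continuousOn hgc.continuousOn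
  have hL0 : 0 ≤ L := (norm_nonneg _).trans (hL 0 ⟨le_rfl, hC.le⟩)
  have hGb : ∀ s ∈ Set.Icc 0 C, |G s| ≤ L * |s| := by
    intro s hs
    have := (convex_Icc 0 C).norm_image_sub_le_of_norm_hasDerivWithin_le
      (fun s _ => (hGd s).hasDerivWithinAt) hL (x := 0) (y := s) ⟨le_rfl, hC.le⟩ hs
    have hG0 : G 0 = 0 := by rw [hGdef, hFz]; simp
    simpa [hG0] using this
  -- derivatives
  have hud : Differentiable ℝ u := hu.differentiable (by norm_num)
  have hu1 : ContDiff ℝ 1 (fderiv ℝ u) := hu.fderiv_right (by norm_num)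
  have hu1d : Differentiable ℝ (fderiv ℝ u) := hu1.differentiable (by norm_num)
  have hu1c : Continuous (fderiv ℝ u) := hu1.continuous
  have hu2c : Continuous (fderiv ℝ (fderiv ℝ u)) := hu1.continuous_fderiv (by norm_num)
  obtain ⟨p, hp⟩ : ∃ p : Fin N → EuclideanSpace ℝ (Fin N) → ℝ,
    ∀ i x, p i x = fderiv ℝ u x (EuclideanSpace.single i 1) := ⟨_, fun _ _ => rfl⟩
  obtain ⟨h, hh⟩ : ∃ h : Fin N → Fin N → EuclideanSpace ℝ (Fin N) → ℝ,
    ∀ j i x, h j i x = fderiv ℝ (fderiv ℝ u) x (EuclideanSpace.single i 1)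
      (EuclideanSpace.single j 1) := ⟨_, fun _ _ _ => rfl⟩
  have hpc : ∀ i, Continuous (p i) := by
    intro i
    have : p i = fun x => fderiv ℝ u x (EuclideanSpace.single i 1) := funext (hp i)
    rw [this]
    exact hu1c.clm_apply continuous_const
  have hhc : ∀ j i, Continuous (h j i) := by
    intro j i
    have : h j i = fun x => fderiv ℝ (fderiv ℝ u) x (EuclideanSpace.single i 1)
      (EuclideanSpace.single j 1) := funext (hh j i)
    rw [this]
    exact (hu2c.clm_apply continuous_const).clm_apply continuous_const
  have hsymm : ∀ j i x, h j i x = h i j x := by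
    intro j i x
    rw [hh, hh]
    exact (hu.contDiffAt.isSymmSndFDerivAt (by simp)) _ _
  have hlap : ∀ x, lap u x = ∑ i, h i i x := by
    intro x
    rw [lap]
    refine Finset.sum_congr rfl fun i _ => ?_
    rw [iteratedFDeriv_two_apply, hh]; simp
  have hpd : ∀ j i x, HasDerivAt (fun t : ℝ => p j (x + t • EuclideanSpace.single i (1:ℝ)))
      (h j i x) 0 := by
    intro j i x
    have h1 : HasFDerivAt (p j)
        ((ContinuousLinearMap.apply ℝ ℝ (EuclideanSpace.single j (1:ℝ))).comp
          (fderiv ℝ (fderiv ℝ u) x)) x := by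
      have : p j = fun x => fderiv ℝ u x (EuclideanSpace.single j 1) := funext (hp j)
      rw [this]
      exact (ContinuousLinearMap.apply ℝ ℝ (EuclideanSpace.single j (1:ℝ))).hasFDerivAt.comp x
        (hu1d x).hasFDerivAt
    have h2 := h1.hasLineDerivAt (EuclideanSpace.single i (1:ℝ))
    rw [hh]
    exact h2
  have hudl : ∀ i x, HasDerivAt (fun t : ℝ => u (x + t • EuclideanSpace.single i (1:ℝ)))
      (p i x) 0 := by
    intro i x
    rw [hp]
    exact (hud x).hasFDerivAt.hasLineDerivAt (EuclideanSpace.single i (1:ℝ))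
  have hxd : ∀ j i (x : EuclideanSpace ℝ (Fin N)),
      HasDerivAt (fun t : ℝ => (x + t • EuclideanSpace.single i (1:ℝ) : EuclideanSpace ℝ (Fin N)) j)
      (if j = i then 1 else 0) 0 := by
    intro j i x
    have h1 : HasDerivAt (fun t : ℝ => x j + t * (if j = i then (1:ℝ) else 0))
      (1 * (if j = i then (1:ℝ) else 0)) 0 := ((hasDerivAt_id (0:ℝ)).mul_const _).const_add _
    rw [one_mul] at h1
    have h2 : (fun t : ℝ => (x + t • EuclideanSpace.single i (1:ℝ) : EuclideanSpace ℝ (Fin N)) j)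
        = fun t : ℝ => x j + t * (if j = i then (1:ℝ) else 0) := by
      funext t; simp [Pi.single_apply]
    rw [h2]; exact h1
  have hgrad : ∀ j x, p j x = gradient u x j := by
    intro j x
    have h1 : inner ℝ (gradient u x) (EuclideanSpace.single j (1:ℝ)) = p j x := by
      rw [hp]; exact inner_gradient_left
    rw [← h1, EuclideanSpace.inner_single_right]
    simp
  have hS : ∀ x, ∑ j, p j x ^ 2 = ‖gradient u x‖ ^ 2 := by
    intro x
    rw [EuclideanSpace.real_norm_sq_eq]
    exact Finset.sum_congr rfl fun j _ => by rw [hgrad]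
  have hxp : ∀ x : EuclideanSpace ℝ (Fin N), |∑ j, x j * p j x| ≤ ‖x‖ * ‖gradient u x‖ := by
    intro x
    have : ∑ j, x j * p j x = inner ℝ x (gradient u x) := by
      rw [PiLp.inner_apply]
      exact Finset.sum_congr rfl fun j _ => by rw [hgrad]; simp [mul_comm]
    rw [this]
    exact abs_real_inner_le_norm _ _
  have hcoord : ∀ (y : EuclideanSpace ℝ (Fin N)) i, |y i| ≤ ‖y‖ := fun y i => by
    simpa using PiLp.norm_apply_le y i
  let V : Fin N → EuclideanSpace ℝ (Fin N) → ℝ := fun i x =>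
    (∑ j, x j * p j x) * p i x - x i * ((∑ j, p j x ^ 2) / 2) + x i * G (u x)
  let V' : Fin N → EuclideanSpace ℝ (Fin N) → ℝ := fun i x =>
    (∑ j, ((if j = i then 1 else 0) * p j x + x j * h j i x)) * p i x
      + (∑ j, x j * p j x) * h i i x
      - (1 * ((∑ j, p j x ^ 2) / 2) + x i * ((∑ j, 2 * p j x * h j i x) / 2))
      + (1 * G (u x) + x i * ((f (u x) - m * u x) * p i x))
  have hucont : Continuous u := hu.continuous
  have hVc : ∀ i, Continuous (V i) := by
    intro i
    simp only [V]
    fun_prop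
  have hV'c : ∀ i, Continuous (V' i) := by
    intro i
    simp only [V']
    fun_prop
  have hder : ∀ i x, HasLineDerivAt ℝ (V i) (V' i x) x (EuclideanSpace.single i 1) := by
    intro i x
    have a1 := HasDerivAt.fun_sum (u := Finset.univ) fun j _ => (hxd j i x).mul (hpd j i x)
    have a2 := HasDerivAt.fun_sum (u := Finset.univ) fun j _ => (hpd j i x).pow 2
    have a3 : HasDerivAt (fun t : ℝ => G (u (x + t • EuclideanSpace.single i (1:ℝ))))
        ((f (u x) - m * u x) * p i x) 0 := by
      have := hGd (u x)
      exact HasDerivAt.comp_of_eq (h₂ := G) 0 this (hudl i x) (by simp)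
    have a4 := ((a1.mul (hpd i i x)).sub ((hxd i i x).mul (a2.div_const 2))).add
      ((hxd i i x).mul a3)
    unfold HasLineDerivAt
    refine a4.congr_deriv ?_
    simp [V']
  have hint : ∀ i, Integrable (V i) := by
    intro i
    refine bl_integrable (V i) (hVc i) ((3 / 2 * C + L) * C) c (by positivity) hc ?_
    intro x
    set D := ‖gradient u x‖ with hD
    have hD0 : 0 ≤ D := norm_nonneg _
    set E := Real.exp (-c * ‖x‖) with hE
    have hE0 : 0 < E := Real.exp_pos _
    have hE1 : E ≤ 1 := by
      rw [hE, Real.exp_le_one_iff]; nlinarith [norm_nonneg x]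
    have hdx := hdecay x
    have hDE : D ≤ C * E := by linarith [abs_nonneg (u x)]
    have huE : |u x| ≤ C * E := by linarith
    have hCE : C * E ≤ C := by nlinarith
    have hG1 : |G (u x)| ≤ L * (C * E) :=
      (hGb (u x) ⟨hunonneg x, (le_abs_self _).trans (huE.trans hCE)⟩).trans
        (mul_le_mul_of_nonneg_left huE hL0)
    have hpi : |p i x| ≤ D := by rw [hgrad]; exact hcoord _ _
    have hDD : D ^ 2 ≤ C * (C * E) := by
      rw [sq]; exact mul_le_mul (hDE.trans hCE) hDE hD0 hC.le
    have t1 : |(∑ j, x j * p j x) * p i x| ≤ ‖x‖ * (C * (C * E)) := by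
      rw [abs_mul]
      calc _ ≤ (‖x‖ * D) * D := mul_le_mul (hxp x) hpi (abs_nonneg _) (by positivity)
        _ = ‖x‖ * D ^ 2 := by ring
        _ ≤ _ := by gcongr
    have t2 : |x i * ((∑ j, p j x ^ 2) / 2)| ≤ ‖x‖ * (C * (C * E) / 2) := by
      rw [hS, abs_mul, abs_of_nonneg (a := ‖gradient u x‖ ^ 2 / 2) (by positivity)]
      have := hcoord x i
      gcongr
    have t3 : |x i * G (u x)| ≤ ‖x‖ * (L * (C * E)) := by
      rw [abs_mul]
      have := hcoord x i
      gcongr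
    calc |V i x| ≤ |(∑ j, x j * p j x) * p i x| + |x i * ((∑ j, p j x ^ 2) / 2)|
          + |x i * G (u x)| := (abs_add_le _ _).trans (by gcongr; exact abs_sub _ _)
      _ ≤ ‖x‖ * (C * (C * E)) + ‖x‖ * (C * (C * E) / 2) + ‖x‖ * (L * (C * E)) := by gcongr
      _ = _ := by ring
  have hdiv : ∀ x, ∑ i, V' i x = (1 - (N:ℝ) / 2) * ‖gradient u x‖ ^ 2 + N * G (u x) := by
    intro x
    rw [← hS]
    refine bl_algebra (fun j => x j) (fun j => p j x) (fun j i => h j i x)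
      (fun j i => hsymm j i x) _ _ ?_
    rw [← hlap]; linarith [heq x]
  have hN' : (3:ℝ) ≤ N := by exact_mod_cast hN
  have hsg : ∀ x, (N:ℝ) * G (u x) ≤ 0 := fun x =>
    mul_nonpos_of_nonneg_of_nonpos (by positivity) (hGneg _ (hunonneg x))
  have hz := bl_divergence V V' hVc hV'c hder hint (by
    intro x
    rw [hdiv]
    nlinarith [hsg x, sq_nonneg ‖gradient u x‖])
  obtain ⟨x₀, hx₀⟩ := hune
  refine hx₀ (bl_zero (by omega) u hud ?_ C c hc ?_ x₀)
  · intro x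
    have h1 := hz x
    rw [hdiv] at h1
    have h2 : ‖gradient u x‖ ^ 2 = 0 := by
      nlinarith [hsg x, sq_nonneg ‖gradient u x‖]
    have h3 : gradient u x = 0 := by simpa using h2
    rw [← toDual_gradient, h3, map_zero]
  · intro x
    linarith [hdecay x, norm_nonneg (gradient u x)]
end

section
/- (Brezis–Kato) Let N ≥ 3 be an integer and let q : ℝ^N → [0,∞) be a measurable function with ∫_{ℝ^N} q(x)^{N/2} dx < ∞. Then for every ε > 0 there exists a constant σ > 0 (depending on ε and q) such that for every compactly supported C¹ function u : ℝ^N → ℝ one has ∫_{ℝ^N} q(x)·u(x)² dx ≤ ε·∫_{ℝ^N} ‖∇u(x)‖² dx + σ·∫_{ℝ^N} u(x)² dx. -/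
open MeasureTheory Real

theorem bk_sobolev {N : ℕ} (hN : 3 ≤ N) : ∃ C : NNReal, ∃ r : NNReal,
    (r : ℝ) = 2 * N / (N - 2) ∧
    ∀ u : EuclideanSpace ℝ (Fin N) → ℝ, ContDiff ℝ 1 u → HasCompactSupport u →
      eLpNorm u r volume ≤ C * eLpNorm (fderiv ℝ u) (2 : NNReal) volume := by
  have hN' : (3 : ℝ) ≤ N := by exact_mod_cast hN
  have hN2 : (0 : ℝ) < (N : ℝ) - 2 := by linarith
  have hr0 : (0 : ℝ) ≤ 2 * N / (N - 2) := by positivity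
  refine ⟨eLpNormLESNormFDerivOfEqInnerConst
    (volume : Measure (EuclideanSpace ℝ (Fin N))) ((2 : NNReal) : ℝ), NNReal.mk (2 * N / (N - 2)) hr0, rfl, fun u hu hcu => ?_⟩
  have h1 : (1 : NNReal) ≤ 2 := by norm_num
  have h2 : 0 < Module.finrank ℝ (EuclideanSpace ℝ (Fin N)) := by
    rw [finrank_euclideanSpace_fin]; omega
  refine eLpNorm_le_eLpNorm_fderiv_of_eq_inner volume hu hcu h1 h2 ?_
  rw [finrank_euclideanSpace_fin, NNReal.coe_mk]
  push_cast
  field_simp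

set_option maxHeartbeats 1000000 in
theorem brezis_kato {N : ℕ} (hN : 3 ≤ N)
    (q : EuclideanSpace ℝ (Fin N) → ℝ) (hq_meas : Measurable q)
    (hq_nonneg : ∀ x, 0 ≤ q x)
    (hq_int : Integrable (fun x => q x ^ ((N : ℝ) / 2))) :
    ∀ ε > (0 : ℝ), ∃ σ > (0 : ℝ),
      ∀ u : EuclideanSpace ℝ (Fin N) → ℝ, ContDiff ℝ 1 u → HasCompactSupport u →
        ∫ x, q x * u x ^ 2 ≤
          ε * (∫ x, ‖gradient u x‖ ^ 2) + σ * ∫ x, u x ^ 2 := by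
  intro ε hε
  have hN' : (3 : ℝ) ≤ N := by exact_mod_cast hN
  have hN0 : (0 : ℝ) < N := by linarith
  have hN2 : (0 : ℝ) < (N : ℝ) - 2 := by linarith
  obtain ⟨C, r, hrr, hS⟩ := bk_sobolev hN
  -- truncated potential
  set g : ℕ → EuclideanSpace ℝ (Fin N) → ENNReal :=
    fun k => Set.indicator {x | (k : ℝ) < q x} (fun x => ENNReal.ofReal (q x)) with hg
  have hset : ∀ k : ℕ, MeasurableSet {x | (k : ℝ) < q x} := fun k =>
    measurableSet_lt measurable_const hq_meas
  have hgm : ∀ k, Measurable (g k) := fun k =>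
    (hq_meas.ennreal_ofReal).indicator (hset k)
  have hlim : Filter.Tendsto (fun k => ∫⁻ x, (g k x) ^ ((N : ℝ) / 2)) Filter.atTop (nhds 0) := by
    have := tendsto_lintegral_of_dominated_convergence (μ := volume)
      (F := fun k x => (g k x) ^ ((N : ℝ) / 2)) (f := fun _ => 0)
      (fun x => ENNReal.ofReal (q x ^ ((N : ℝ) / 2)))
      (fun k => (hgm k).pow_const _) ?_ ?_ ?_
    · simpa using this
    · intro k
      refine Filter.Eventually.of_forall fun x => ?_
      simp only [hg]
      rw [← ENNReal.ofReal_rpow_of_nonneg (hq_nonneg x) (by positivity)]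
      gcongr
      exact Set.indicator_le_self _ _ x
    · exact hq_int.lintegral_lt_top.ne
    · refine Filter.Eventually.of_forall fun x => ?_
      apply tendsto_const_nhds.congr'
      obtain ⟨m, hm⟩ := exists_nat_ge (q x)
      filter_upwards [Filter.eventually_ge_atTop m] with k hk
      have : ¬ ((k : ℝ) < q x) := by
        have : (m : ℝ) ≤ k := by exact_mod_cast hk
        linarith
      simp [hg, this, hN0]
  have hlim2 : Filter.Tendsto
      (fun k => (∫⁻ x, (g k x) ^ ((N : ℝ) / 2)) ^ (2 / (N : ℝ)) * (C : ENNReal) ^ 2)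
      Filter.atTop (nhds 0) := by
    have h1 := (ENNReal.continuous_rpow_const (y := 2 / (N : ℝ))).tendsto 0 |>.comp hlim
    have h2 := ENNReal.Tendsto.mul_const (b := (C : ENNReal) ^ 2) h1 (Or.inr (by simp))
    rw [ENNReal.zero_rpow_of_pos (by positivity), zero_mul] at h2
    exact h2
  obtain ⟨k, hk⟩ := (hlim2.eventually_le_const (u := ENNReal.ofReal ε) (by simpa using hε)).exists
  refine ⟨k + 1, by positivity, fun u hu hcu => ?_⟩
  have hgn : ∀ x, ‖gradient u x‖ = ‖fderiv ℝ u x‖ := fun x => by simp [gradient]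
  have hufd : Continuous (fderiv ℝ u) := hu.continuous_fderiv one_ne_zero
  have hi1 : Integrable (fun x => ‖gradient u x‖ ^ 2) := by
    simp only [hgn]
    refine Continuous.integrable_of_hasCompactSupport (by fun_prop) ?_
    exact (hcu.fderiv (𝕜 := ℝ)).comp_left (g := fun y => ‖y‖ ^ 2) (by simp)
  have hi2 : Integrable (fun x => u x ^ 2) := by
    refine Continuous.integrable_of_hasCompactSupport (hu.continuous.pow 2) ?_
    exact hcu.comp_left (g := fun y => y ^ 2) (by simp)
  have hum : Measurable u := hu.continuous.measurable
  -- Sobolev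
  have hr0 : 0 < (r : ℝ) := by rw [hrr]; positivity
  have hsob : eLpNorm u r volume ≤ C * eLpNorm (fderiv ℝ u) (2 : NNReal) volume := hS u hu hcu
  have hsq : (eLpNorm (fderiv ℝ u) (2 : NNReal) volume) ^ 2
      = ENNReal.ofReal (∫ x, ‖gradient u x‖ ^ 2) := by
    rw [ofReal_integral_eq_lintegral_ofReal hi1 (Filter.Eventually.of_forall fun x => by positivity)]
    have := eLpNorm_nnreal_pow_eq_lintegral (f := fderiv ℝ u) (μ := volume) (p := 2) (by norm_num)
    simp only [NNReal.coe_ofNat, ENNReal.rpow_ofNat] at this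
    rw [this]
    refine lintegral_congr fun x => ?_
    rw [hgn, ENNReal.ofReal_pow (norm_nonneg _), ofReal_norm]
  have hold : ∫⁻ x, g k x * ‖u x‖ₑ ^ 2 ≤
      (∫⁻ x, (g k x) ^ ((N : ℝ) / 2)) ^ (2 / (N : ℝ)) * (eLpNorm u r volume) ^ 2 := by
    have hconj : Real.HolderConjugate ((N : ℝ) / 2) (N / (N - 2)) := by
      rw [Real.holderConjugate_iff]
      refine ⟨by linarith, ?_⟩
      field_simp; ring
    have := ENNReal.lintegral_mul_le_Lp_mul_Lq volume hconj (f := g k) (g := fun x => ‖u x‖ₑ ^ 2)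
      (hgm k).aemeasurable (hum.enorm.pow_const 2).aemeasurable
    refine this.trans (le_of_eq ?_)
    rw [one_div_div, eLpNorm_eq_lintegral_rpow_enorm_toReal (by exact_mod_cast hr0.ne') (by simp)]
    congr 1
    rw [← ENNReal.rpow_natCast (_ ^ (_ : ℝ)), ← ENNReal.rpow_mul]
    simp only [ENNReal.coe_toReal, hrr, ← ENNReal.rpow_natCast, ← ENNReal.rpow_mul]
    congr 1
    · refine lintegral_congr fun x => ?_
      congr 1; push_cast; ring
    · push_cast; field_simp
  have hmain : ∫⁻ x, ENNReal.ofReal (q x * u x ^ 2) ≤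
      ENNReal.ofReal (ε * (∫ x, ‖gradient u x‖ ^ 2) + (k + 1) * ∫ x, u x ^ 2) := by
    have hn1 : 0 ≤ ∫ x, ‖gradient u x‖ ^ 2 := integral_nonneg fun x => by positivity
    have hn2 : 0 ≤ ∫ x, u x ^ 2 := integral_nonneg fun x => by positivity
    rw [ENNReal.ofReal_add (by positivity) (by positivity), ENNReal.ofReal_mul hε.le,
      ENNReal.ofReal_mul (by positivity)]
    calc ∫⁻ x, ENNReal.ofReal (q x * u x ^ 2)
        ≤ ∫⁻ x, (g k x * ‖u x‖ₑ ^ 2 + ENNReal.ofReal (k + 1) * ENNReal.ofReal (u x ^ 2)) := by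
          refine lintegral_mono fun x => ?_
          have he : ‖u x‖ₑ ^ 2 = ENNReal.ofReal (u x ^ 2) := by
            rw [← ofReal_norm, ← ENNReal.ofReal_pow (norm_nonneg _)]; simp
          rw [he, ENNReal.ofReal_mul (hq_nonneg x), ← add_mul]
          gcongr
          by_cases hx : (k : ℝ) < q x
          · simp [hg, hx]
          · simp only [hg, Set.indicator, Set.mem_ofPred_eq, hx, if_false, zero_add]
            apply ENNReal.ofReal_le_ofReal; linarith
      _ = (∫⁻ x, g k x * ‖u x‖ₑ ^ 2) + ENNReal.ofReal (k + 1) * ENNReal.ofReal (∫ x, u x ^ 2) := by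
          rw [lintegral_add_left (f := fun x => g k x * ‖u x‖ₑ ^ 2)
            ((hgm k).mul (hum.enorm.pow_const 2)),
            lintegral_const_mul _ (hum.pow_const 2).ennreal_ofReal,
            ofReal_integral_eq_lintegral_ofReal hi2
              (Filter.Eventually.of_forall fun x => by positivity)]
      _ ≤ _ := by
          gcongr
          refine hold.trans ?_
          calc _ ≤ (∫⁻ x, (g k x) ^ ((N : ℝ) / 2)) ^ (2 / (N : ℝ)) *
                (C * eLpNorm (fderiv ℝ u) (2 : NNReal) volume) ^ 2 := by gcongr
            _ = ((∫⁻ x, (g k x) ^ ((N : ℝ) / 2)) ^ (2 / (N : ℝ)) * (C : ENNReal) ^ 2) *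
                ENNReal.ofReal (∫ x, ‖gradient u x‖ ^ 2) := by
              rw [mul_pow, hsq, mul_assoc]
            _ ≤ _ := by gcongr
  rw [integral_eq_lintegral_of_nonneg_ae
    (Filter.Eventually.of_forall fun x => mul_nonneg (hq_nonneg x) (sq_nonneg _))
    (hq_meas.mul (hum.pow_const 2)).aestronglyMeasurable]
  refine ENNReal.toReal_le_of_le_ofReal ?_ hmain
  have hn1 : 0 ≤ ∫ x, ‖gradient u x‖ ^ 2 := integral_nonneg fun x => by positivity
  have hn2 : 0 ≤ ∫ x, u x ^ 2 := integral_nonneg fun x => by positivity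
  positivity
end

section
/- (Local boundedness for subsolutions, classical version) Let N ≥ 3 be an integer, and let t > N and R > 0 be real numbers. There exists a constant C > 0, depending only on N, t and R, with the following property: whenever Ω ⊆ ℝ^N is open, y ∈ ℝ^N is such that the closed ball of radius 2R about y is contained in Ω, u : Ω → ℝ is C², g : Ω → ℝ is measurable with ∫_{B(y,2R)} |g|^{t/2} dx < ∞, and −Δu(x) + u(x) ≤ g(x) for all x ∈ Ω, then for every z ∈ B(y,R) one has u(z) ≤ C·( ( ∫_{B(y,2R)} max(u,0)² dx )^{1/2} + ( ∫_{B(y,2R)} |g|^{t/2} dx )^{2/t} ). -/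
open MeasureTheory Real

lemma lap_eq {N : ℕ} (u : EuclideanSpace ℝ (Fin N) → ℝ) (x : EuclideanSpace ℝ (Fin N)) :
    lap u x = ∑ i, fderiv ℝ (fderiv ℝ u) x (EuclideanSpace.single i 1)
      (EuclideanSpace.single i 1) := by
  simp [lap, iteratedFDeriv_two_apply]

noncomputable def rho {N : ℕ} (x : EuclideanSpace ℝ (Fin N)) : ℝ := max (1 - ‖x‖ ^ 2) 0

lemma rho_cont {N : ℕ} : Continuous (rho (N := N)) := by
  unfold rho; fun_prop

lemma rho_nonneg {N : ℕ} (x : EuclideanSpace ℝ (Fin N)) : 0 ≤ rho x := le_max_right _ _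

lemma rho_le {N : ℕ} (x : EuclideanSpace ℝ (Fin N)) : rho x ≤ 1 :=
  max_le (by nlinarith [norm_nonneg x]) (by norm_num)

lemma rho_zero {N : ℕ} (x : EuclideanSpace ℝ (Fin N)) (h : 1 ≤ ‖x‖) : rho x = 0 :=
  max_eq_right (by nlinarith [norm_nonneg x])

lemma rho_supp {N : ℕ} : HasCompactSupport (rho (N := N)) :=
  HasCompactSupport.of_support_subset_isCompact (isCompact_closedBall 0 1) (by
    intro x hx
    simp only [Metric.mem_closedBall, dist_zero_right]
    by_contra h
    exact hx (rho_zero x (by linarith)))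

lemma maxsq_deriv (s : ℝ) : HasDerivAt (fun s : ℝ => (max s 0) ^ 2) (2 * max s 0) s := by
  rcases lt_trichotomy s 0 with h | h | h
  · rw [max_eq_right h.le, mul_zero]
    refine (hasDerivAt_const s (0:ℝ)).congr_of_eventuallyEq ?_
    filter_upwards [Iio_mem_nhds h] with a ha
    rw [max_eq_right (le_of_lt ha)]; norm_num
  · subst h
    rw [hasDerivAt_iff_isLittleO]
    simp only [max_self, sub_zero, mul_zero, smul_zero]
    have : (fun s : ℝ => s ^ 2) =o[nhds 0] fun s : ℝ => s := by
      simpa using (Asymptotics.isLittleO_pow_pow (𝕜 := ℝ) (m := 1) (n := 2) (by norm_num))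
    refine (Asymptotics.IsBigO.of_bound 1 (Filter.Eventually.of_forall fun s => ?_)).trans_isLittleO this
    have h1 : max s 0 ≤ |s| := max_le (le_abs_self s) (abs_nonneg s)
    have h0 : 0 ≤ max s 0 := le_max_right _ _
    simp only [norm_eq_abs, one_mul]
    rw [abs_pow, ← sq_abs (max s 0)] 
    simp only [ne_eq, OfNat.ofNat_ne_zero, not_false_eq_true, zero_pow, sub_zero, abs_pow, abs_abs]
    rw [abs_of_nonneg h0]
    gcongr
  · have := (hasDerivAt_pow 2 s)
    rw [max_eq_left h.le]
    refine HasDerivAt.congr_of_eventuallyEq (f := fun s => s ^ 2) (by simpa using this) ?_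
    filter_upwards [Ioi_mem_nhds h] with a ha
    rw [max_eq_left (le_of_lt ha)]

lemma rhosq_hasFDerivAt {N : ℕ} (x : EuclideanSpace ℝ (Fin N)) :
    HasFDerivAt (fun x : EuclideanSpace ℝ (Fin N) => rho x ^ 2)
      ((-4 * rho x) • (innerSL ℝ x)) x := by
  have h1 : HasFDerivAt (fun x : EuclideanSpace ℝ (Fin N) => 1 - ‖x‖ ^ 2)
      (-(2 • (innerSL ℝ x))) x := by
    simpa using ((hasStrictFDerivAt_norm_sq x).hasFDerivAt).const_sub 1
  have := (maxsq_deriv (1 - ‖x‖ ^ 2)).comp_hasFDerivAt x h1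
  refine this.congr_fderiv ?_
  ext v
  simp [rho]
  ring

/-- scaling integration by parts -/
lemma ibp {N : ℕ} (w : EuclideanSpace ℝ (Fin N) → ℝ) (hw : ContDiff ℝ 2 w)
    (z : EuclideanSpace ℝ (Fin N)) (r : ℝ) :
    ∫ x, rho x * fderiv ℝ w (z + r • x) x = r / 4 * ∫ x, rho x ^ 2 * lap w (z + r • x) := by
  have hw1 : ContDiff ℝ 1 (fderiv ℝ w) := hw.fderiv_right (by norm_num)
  have hc1 : Continuous (fderiv ℝ w) := hw1.continuous
  have hc2 : Continuous (fderiv ℝ (fderiv ℝ w)) := hw1.continuous_fderiv (by norm_num)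
  have hP : HasCompactSupport (fun x : EuclideanSpace ℝ (Fin N) => rho x ^ 2) := by
    have h := (rho_supp (N := N)).mul_right (f' := rho)
    have e : (fun x : EuclideanSpace ℝ (Fin N) => rho x ^ 2) = rho * rho := by
      ext x; simp [pow_two]
    rw [e]; exact h
  have hrc := rho_cont (N := N)
  set e : Fin N → EuclideanSpace ℝ (Fin N) := fun i => EuclideanSpace.single i 1 with he
  have key : ∀ i, ∫ x, rho x ^ 2 * (r * fderiv ℝ (fderiv ℝ w) (z + r • x) (e i) (e i))
      = 4 * ∫ x, rho x * (x i * fderiv ℝ w (z + r • x) (e i)) := by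
    intro i
    have hg : ∀ x, HasFDerivAt (fun x => fderiv ℝ w (z + r • x) (e i))
        ((ContinuousLinearMap.apply ℝ ℝ (e i)).comp ((fderiv ℝ (fderiv ℝ w) (z + r • x)).comp
          (r • ContinuousLinearMap.id ℝ _))) x := by
      intro x
      have h1 : HasFDerivAt (fun x : EuclideanSpace ℝ (Fin N) => z + r • x)
        (r • ContinuousLinearMap.id ℝ _) x := ((hasFDerivAt_id x).const_smul r).const_add z
      have h2 := ((hw1.differentiable (by norm_num)) (z + r • x)).hasFDerivAt.comp x h1
      exact (ContinuousLinearMap.apply ℝ ℝ (e i)).hasFDerivAt.comp x h2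
    have hf' : ∀ x : EuclideanSpace ℝ (Fin N), fderiv ℝ (fun x => rho x ^ 2) x (e i) = -4 * rho x * x i := by
      intro x
      rw [(rhosq_hasFDerivAt x).fderiv]
      simp [he, EuclideanSpace.inner_single_right]
    have hg' : ∀ x, fderiv ℝ (fun x => fderiv ℝ w (z + r • x) (e i)) x (e i)
        = r * fderiv ℝ (fderiv ℝ w) (z + r • x) (e i) (e i) := by
      intro x
      rw [(hg x).fderiv]; simp
    have hxi : Continuous (fun x : EuclideanSpace ℝ (Fin N) => x i) := by fun_prop
    have := integral_mul_fderiv_eq_neg_fderiv_mul_of_integrable (μ := volume)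
      (f := fun x : EuclideanSpace ℝ (Fin N) => rho x ^ 2) (g := fun x => fderiv ℝ w (z + r • x) (e i)) (v := e i)
      (by
        simp only [hf']
        refine Continuous.integrable_of_hasCompactSupport (by fun_prop) ?_
        simp only [mul_assoc]
        exact ((rho_supp (N := N)).mul_right).mul_left)
      (by
        simp only [hg']
        refine Continuous.integrable_of_hasCompactSupport (by fun_prop) hP.mul_right)
      (by
        refine Continuous.integrable_of_hasCompactSupport (by fun_prop) hP.mul_right)
      (fun x _ => (rhosq_hasFDerivAt x).differentiableAt)
      (fun x _ => (hg x).differentiableAt)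
    simp only [hf', hg'] at this
    rw [this, ← integral_neg, ← integral_const_mul]
    congr 1; ext x; ring
  have hx : ∀ x : EuclideanSpace ℝ (Fin N), ∀ L : EuclideanSpace ℝ (Fin N) →L[ℝ] ℝ,
      L x = ∑ i, x i * L (e i) := by
    intro x L
    conv_lhs => rw [← (EuclideanSpace.basisFun (Fin N) ℝ).sum_repr x]
    simp [he]
  have e1 : (fun x => rho x * fderiv ℝ w (z + r • x) x)
      = fun x => ∑ i, rho x * (x i * fderiv ℝ w (z + r • x) (e i)) := by
    ext x; rw [hx x, Finset.mul_sum]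
  have e2 : (fun x => r * (rho x ^ 2 * lap w (z + r • x))) =
      fun x => ∑ i, rho x ^ 2 * (r * fderiv ℝ (fderiv ℝ w) (z + r • x) (e i) (e i)) := by
    ext x; rw [lap_eq, Finset.mul_sum, Finset.mul_sum]
    refine Finset.sum_congr rfl fun i _ => ?_
    simp only [he]; ring
  have e3 : r / 4 * ∫ x, rho x ^ 2 * lap w (z + r • x)
     = 1/4 * ∫ x, r * (rho x ^ 2 * lap w (z + r • x)) := by
    rw [integral_const_mul]; ring
  rw [e3, e1, e2, integral_finsetSum, integral_finsetSum]
  · rw [Finset.sum_congr rfl fun i _ => key i, ← Finset.mul_sum]; ring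
  · intro i _
    exact Continuous.integrable_of_hasCompactSupport (by fun_prop) hP.mul_right
  · intro i _
    exact Continuous.integrable_of_hasCompactSupport (by fun_prop) rho_supp.mul_right

lemma m_deriv {N : ℕ} (w : EuclideanSpace ℝ (Fin N) → ℝ) (hw : ContDiff ℝ 2 w)
    (hs : HasCompactSupport w) (z : EuclideanSpace ℝ (Fin N)) (r : ℝ) :
    HasDerivAt (fun r : ℝ => ∫ x, rho x * w (z + r • x))
      (r / 4 * ∫ x, rho x ^ 2 * lap w (z + r • x)) r := by
  rw [← ibp w hw]
  have hc1 : Continuous (fderiv ℝ w) := hw.continuous_fderiv (by norm_num)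
  have hc := hw.continuous
  have hrc := rho_cont (N := N)
  obtain ⟨C, hC⟩ := (hs.fderiv ℝ).exists_bound_of_continuous hc1
  refine (hasDerivAt_integral_of_dominated_loc_of_deriv_le (𝕜 := ℝ) (s := Set.univ) (x₀ := r)
    (F := fun r x => rho x * w (z + r • x)) (F' := fun r x => rho x * fderiv ℝ w (z + r • x) x)
    (bound := fun x => rho x * (C * ‖x‖)) Filter.univ_mem ?_ ?_ ?_ ?_ ?_ ?_).2
  · exact Filter.Eventually.of_forall fun r => Continuous.aestronglyMeasurable (by fun_prop)
  · exact Continuous.integrable_of_hasCompactSupport (by fun_prop) rho_supp.mul_right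
  · exact Continuous.aestronglyMeasurable (by fun_prop)
  · refine Filter.Eventually.of_forall fun x r _ => ?_
    rw [norm_mul, norm_of_nonneg (rho_nonneg x)]
    gcongr
    · exact rho_nonneg x
    · exact ((fderiv ℝ w (z + r • x)).le_opNorm x).trans (by gcongr; exact hC _)
  · exact Continuous.integrable_of_hasCompactSupport (by fun_prop) rho_supp.mul_right
  · refine Filter.Eventually.of_forall fun x r _ => ?_
    have h1 : HasDerivAt (fun r : ℝ => z + r • x) x r := by
      simpa using ((hasDerivAt_id r).smul_const x).const_add z
    exact (((hw.differentiable (by norm_num)) (z + r • x)).hasFDerivAt.comp_hasDerivAt r h1).const_mul _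

lemma lap_comp {N : ℕ} (u : EuclideanSpace ℝ (Fin N) → ℝ) (hu : ContDiff ℝ 2 u)
    (φ φ' φ'' : ℝ → ℝ) (h1 : ∀ s, HasDerivAt φ (φ' s) s) (h2 : ∀ s, HasDerivAt φ' (φ'' s) s)
    (h3 : ∀ s, 0 ≤ φ'' s) (x : EuclideanSpace ℝ (Fin N)) :
    φ' (u x) * lap u x ≤ lap (fun x => φ (u x)) x := by
  have hw1 : ContDiff ℝ 1 (fderiv ℝ u) := hu.fderiv_right (by norm_num)
  have hd : ∀ x, HasFDerivAt u (fderiv ℝ u x) x := fun x => (hu.differentiable (by norm_num) x).hasFDerivAt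
  have e1 : fderiv ℝ (fun x => φ (u x)) = (fun x => φ' (u x)) • fderiv ℝ u := by
    ext1 x
    exact ((h1 (u x)).comp_hasFDerivAt x (hd x)).fderiv
  have e2 := HasFDerivAt.smul ((h2 (u x)).comp_hasFDerivAt x (hd x))
    ((hw1.differentiable (by norm_num)) x).hasFDerivAt
  rw [lap_eq, lap_eq, e1, Finset.mul_sum]
  have e3 : fderiv ℝ ((fun x => φ' (u x)) • fderiv ℝ u) x = _ := e2.fderiv
  rw [e3]
  refine Finset.sum_le_sum fun i _ => ?_
  simp only [add_apply, smul_apply, Function.comp,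
    ContinuousLinearMap.smulRight_apply, smul_eq_mul]
  have := mul_nonneg (h3 (u x)) (mul_self_nonneg (fderiv ℝ u x (EuclideanSpace.single i 1)))
  linarith [mul_assoc (φ'' (u x)) (fderiv ℝ u x (EuclideanSpace.single i 1)) (fderiv ℝ u x (EuclideanSpace.single i 1))]

/-- Young type bound -/
lemma young (a l p : ℝ) (ha : 0 ≤ a) (hl : 0 < l) (hp : 1 ≤ p) :
    a ≤ l + l ^ (1 - p) * a ^ p := by
  by_cases h : a ≤ l
  · have : 0 ≤ l ^ (1 - p) * a ^ p := by positivity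
    linarith
  · push Not at h
    have ha' : 0 < a := hl.trans h
    have : a = a ^ (1 - p) * a ^ p := by rw [← rpow_add ha']; simp
    have h2 : a ^ (1 - p) ≤ l ^ (1 - p) := rpow_le_rpow_of_nonpos hl h.le (by linarith)
    have : a ^ (1 - p) * a ^ p ≤ l ^ (1 - p) * a ^ p := by gcongr
    linarith

lemma young_int {N : ℕ} (z : EuclideanSpace ℝ (Fin N)) (R r p G a ε : ℝ) (hr : 0 < r) (hrR : r ≤ R)
    (hp : 1 ≤ p) (hG : 0 < G) (ha : 0 ≤ a) (h k : EuclideanSpace ℝ (Fin N) → ℝ)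
    (h0 : ∀ x, 0 ≤ h x) (hi : IntegrableOn (fun x => h x ^ p) (Metric.ball z R))
    (hI : ∫ x in Metric.ball z R, h x ^ p ≤ G ^ p) (hk : Integrable k)
    (hk1 : ∀ x, ‖x‖ < 1 → k x ≤ a * h (z + r • x) + ε) (hk2 : ∀ x, 1 ≤ ‖x‖ → k x ≤ 0) :
    ∫ x, k x ≤ a * (volume.real (Metric.ball (0 : EuclideanSpace ℝ (Fin N)) 1) + 1)
        * (r ^ (-(N / p : ℝ)) * G)
      + ε * volume.real (Metric.ball (0 : EuclideanSpace ℝ (Fin N)) 1) := by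
  set l := r ^ (-(N / p : ℝ)) * G with hl
  have hl0 : 0 < l := by positivity
  set F := (Metric.ball z R).indicator (fun x => h x ^ p) with hF
  have hF0 : ∀ x, 0 ≤ F x := fun x => Set.indicator_nonneg (fun x _ => rpow_nonneg (h0 x) _) x
  have hFi : Integrable F := (integrable_indicator_iff Metric.isOpen_ball.measurableSet).2 hi
  have hFi2 : Integrable (fun x => F (z + r • x)) :=
    (hFi.comp_add_left z).comp_smul hr.ne'
  have hFI : ∫ x, F (z + r • x) ≤ (r ^ N)⁻¹ * G ^ p := by
    rw [Measure.integral_comp_smul volume (fun x => F (z + x)) r, integral_add_left_eq_self F z,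
      integral_indicator Metric.isOpen_ball.measurableSet]
    simp only [finrank_euclideanSpace, Fintype.card_fin, smul_eq_mul]
    rw [abs_of_nonneg (by positivity)]
    gcongr
  have hci : Integrable ((Metric.ball (0 : EuclideanSpace ℝ (Fin N)) 1).indicator
      (fun _ => a * l + ε)) := by
    rw [integrable_indicator_iff Metric.isOpen_ball.measurableSet]
    exact integrableOn_const (by exact measure_ball_lt_top.ne) (by simp)
  have hle : ∀ x, k x ≤ (Metric.ball (0 : EuclideanSpace ℝ (Fin N)) 1).indicator
      (fun _ => a * l + ε) x + a * l ^ (1 - p) * F (z + r • x) := by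
    intro x
    by_cases hx : ‖x‖ < 1
    · have hm : x ∈ Metric.ball (0 : EuclideanSpace ℝ (Fin N)) 1 := by simpa using hx
      have hm2 : z + r • x ∈ Metric.ball z R := by
        simp only [Metric.mem_ball, dist_self_add_left, norm_smul, norm_of_nonneg hr.le]
        nlinarith [norm_nonneg x]
      rw [Set.indicator_of_mem hm, hF, Set.indicator_of_mem hm2]
      have := mul_le_mul_of_nonneg_left (young (h (z + r • x)) l p (h0 _) hl0 hp) ha
      have := hk1 x hx
      linarith [mul_assoc a (l ^ (1 - p)) (h (z + r • x) ^ p)]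
    · have hm : x ∉ Metric.ball (0 : EuclideanSpace ℝ (Fin N)) 1 := by simpa using hx
      rw [Set.indicator_of_notMem hm, zero_add]
      have h3 : 0 ≤ a * l ^ (1 - p) * F (z + r • x) := mul_nonneg (by positivity) (hF0 _)
      linarith [hk2 x (not_lt.1 hx)]
  have hmain := integral_mono hk (hci.add (hFi2.const_mul (a * l ^ (1 - p)))) hle
  simp only [Pi.add_apply] at hmain
  rw [integral_add hci (hFi2.const_mul _), integral_const_mul,
    integral_indicator_const _ Metric.isOpen_ball.measurableSet] at hmain
  have e1 : l ^ (1 - p) * ((r ^ N)⁻¹ * G ^ p) = l := by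
    have : (r ^ N)⁻¹ * G ^ p = l ^ p := by
      rw [hl, mul_rpow (by positivity) hG.le, ← rpow_mul hr.le, ← rpow_natCast, ← rpow_neg hr.le]
      congr 2
      field_simp
    rw [this, ← rpow_add hl0]; simp
  have e2 : a * l ^ (1 - p) * ∫ x, F (z + r • x) ≤ a * l := by
    calc _ ≤ a * l ^ (1 - p) * ((r ^ N)⁻¹ * G ^ p) := by gcongr
      _ = a * l := by rw [mul_assoc, e1]
  simp only [smul_eq_mul] at hmain
  nlinarith

/-- key estimate for a global C² function -/
lemma key_est {N : ℕ} (w : EuclideanSpace ℝ (Fin N) → ℝ) (hw : ContDiff ℝ 2 w)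
    (hs : HasCompactSupport w) (z : EuclideanSpace ℝ (Fin N)) (R p G S ε V : ℝ) (hR : 0 < R)
    (hV : V = volume.real (Metric.ball (0 : EuclideanSpace ℝ (Fin N)) 1))
    (hp1 : 1 ≤ p) (hp : (N : ℝ) / p < 2) (hG : 0 < G) (hS : 0 < S) (hε : 0 ≤ ε)
    (g v : EuclideanSpace ℝ (Fin N) → ℝ)
    (hg : IntegrableOn (fun x => |g x| ^ p) (Metric.ball z R))
    (hgI : ∫ x in Metric.ball z R, |g x| ^ p ≤ G ^ p)
    (hv0 : ∀ x, 0 ≤ v x)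
    (hv : IntegrableOn (fun x => v x ^ (2:ℝ)) (Metric.ball z R))
    (hvI : ∫ x in Metric.ball z R, v x ^ (2:ℝ) ≤ S ^ (2:ℝ))
    (hwv : ∀ x ∈ Metric.ball z R, w x ≤ 2 * v x)
    (hlap : ∀ x ∈ Metric.ball z R, -lap w x ≤ 2 * |g x| + ε) :
    w z * (∫ x : EuclideanSpace ℝ (Fin N), rho x) ≤
      2 * (V + 1) * R ^ (-(N / 2 : ℝ)) * S
      + (V + 1) / (2 * (2 - N / p)) * R ^ (2 - N / p : ℝ) * G + ε * V / 8 * R ^ 2 := by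
  have hrc := rho_cont (N := N)
  have hw1 : ContDiff ℝ 1 (fderiv ℝ w) := hw.fderiv_right (by norm_num)
  have hc2 : Continuous (fderiv ℝ (fderiv ℝ w)) := hw1.continuous_fderiv (by norm_num)
  have hcl : Continuous (lap w) := by
    have : lap w = fun x => ∑ i, fderiv ℝ (fderiv ℝ w) x (EuclideanSpace.single i 1)
      (EuclideanSpace.single i 1) := by ext x; exact lap_eq w x
    rw [this]; fun_prop
  have hc := hw.continuous
  set q : ℝ := 2 - N / p with hq
  have hq0 : 0 < q := by linarith
  set m : ℝ → ℝ := fun r => ∫ x, rho x * w (z + r • x) with hm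
  set M : ℝ → ℝ := fun r => m r + ((V + 1) / (2 * q) * G * r ^ q + ε * V / 8 * r ^ 2) with hM
  have hmem : ∀ r x, 0 < r → r ≤ R → ‖x‖ < 1 → z + r • x ∈ Metric.ball z R := by
    intro r x hr hrR hx
    simp only [Metric.mem_ball, dist_self_add_left, norm_smul, norm_of_nonneg hr.le]
    nlinarith [norm_nonneg x]
  have hV0 : 0 ≤ V := by rw [hV]; positivity
  have hMd : ∀ r, 0 < r → HasDerivAt M (r / 4 * (∫ x, rho x ^ 2 * lap w (z + r • x))
      + ((V + 1) / (2 * q) * G * (q * r ^ (q - 1)) + ε * V / 8 * (2 * r))) r := by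
    intro r hr
    refine (m_deriv w hw hs z r).add (HasDerivAt.add ?_ ?_)
    · exact (hasDerivAt_rpow_const (Or.inl hr.ne')).const_mul _
    · simpa using (hasDerivAt_pow 2 r).const_mul (ε * V / 8)
  have hmono : MonotoneOn M (Set.Icc 0 R) := by
    refine monotoneOn_of_deriv_nonneg (convex_Icc 0 R) ?_ ?_ ?_
    · have h1 : Continuous m := continuous_iff_continuousAt.2 fun r =>
        (m_deriv w hw hs z r).continuousAt
      have h2 : Continuous (fun r : ℝ => r ^ q) := continuous_rpow_const hq0.le
      exact Continuous.continuousOn (by fun_prop)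
    · intro r hr
      rw [interior_Icc] at hr
      exact (hMd r hr.1).differentiableAt.differentiableWithinAt
    · intro r hr
      rw [interior_Icc] at hr
      obtain ⟨hr0, hrR⟩ := hr
      rw [(hMd r hr0).deriv]
      have hY := young_int z R r p G 2 ε hr0 hrR.le hp1 hG (by norm_num) (fun x => |g x|)
        (fun x => -(rho x ^ 2 * lap w (z + r • x))) (fun x => abs_nonneg _) hg hgI
        (by
          refine Integrable.neg ?_
          refine Continuous.integrable_of_hasCompactSupport (by fun_prop) ?_
          simp only [pow_two, mul_assoc]
          exact rho_supp.mul_right)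
        (by
          intro x hx
          have h1 := hlap _ (hmem r x hr0 hrR.le hx)
          have h2 : 0 ≤ 2 * |g (z + r • x)| + ε := by positivity
          have h3 : rho x ^ 2 ≤ 1 := pow_le_one₀ (rho_nonneg x) (rho_le x)
          have h4 : 0 ≤ rho x ^ 2 := by positivity
          show -(rho x ^ 2 * lap w (z + r • x)) ≤ 2 * |g (z + r • x)| + ε
          nlinarith)
        (by
          intro x hx
          simp [rho_zero x hx])
      rw [← hV, integral_neg] at hY
      have e1 : r * r ^ (-(N / p : ℝ)) = r ^ (q - 1) := by
        nth_rewrite 1 [← rpow_one r]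
        rw [← rpow_add hr0]; congr 1; rw [hq]; ring
      have e2 : (V + 1) / (2 * q) * G * (q * r ^ (q - 1)) = r / 4 * (2 * (V + 1) * (r ^ (-(N / p : ℝ)) * G)) := by
        rw [← e1]; field_simp; ring
      rw [e2]
      have : 0 ≤ r / 4 * ((∫ x, rho x ^ 2 * lap w (z + r • x)) + (2 * (V + 1) * (r ^ (-(N / p : ℝ)) * G) + ε * V)) :=
        mul_nonneg (by positivity) (by linarith)
      linarith
  have h0R := hmono (Set.left_mem_Icc.2 hR.le) (Set.right_mem_Icc.2 hR.le) hR.le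
  have hM0 : M 0 = w z * ∫ x : EuclideanSpace ℝ (Fin N), rho x := by
    simp only [hM, hm, zero_rpow hq0.ne', zero_smul, add_zero, mul_zero, integral_mul_const]
    norm_num [mul_comm]
  have hYR := young_int z R R 2 S 2 0 hR le_rfl (by norm_num) hS (by norm_num) v
        (fun x => rho x * w (z + R • x)) hv0 hv hvI
        (Continuous.integrable_of_hasCompactSupport (by fun_prop) rho_supp.mul_right)
        (by
          intro x hx
          have h1 := hwv _ (hmem R x hR le_rfl hx)
          have h2 := hv0 (z + R • x)
          show rho x * w (z + R • x) ≤ _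
          nlinarith [rho_nonneg x, rho_le x])
        (by
          intro x hx
          simp [rho_zero x hx])
  rw [← hV] at hYR
  rw [hM0] at h0R
  simp only [hM, hm] at h0R
  linarith

lemma phi_facts (ε : ℝ) (hε : 0 < ε) (s : ℝ) :
    HasDerivAt (fun s : ℝ => √(s ^ 2 + ε ^ 2) - ε + s) (s / √(s ^ 2 + ε ^ 2) + 1) s ∧
    HasDerivAt (fun s : ℝ => s / √(s ^ 2 + ε ^ 2) + 1)
      ((1 * √(s ^ 2 + ε ^ 2) - s * (s / √(s ^ 2 + ε ^ 2))) / √(s ^ 2 + ε ^ 2) ^ 2) s ∧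
    0 ≤ (1 * √(s ^ 2 + ε ^ 2) - s * (s / √(s ^ 2 + ε ^ 2))) / √(s ^ 2 + ε ^ 2) ^ 2 := by
  have hpos : 0 < s ^ 2 + ε ^ 2 := by positivity
  have hq : 0 < √(s ^ 2 + ε ^ 2) := sqrt_pos.2 hpos
  have hqq : √(s ^ 2 + ε ^ 2) ^ 2 = s ^ 2 + ε ^ 2 := sq_sqrt hpos.le
  have h1 : HasDerivAt (fun s : ℝ => √(s ^ 2 + ε ^ 2)) (s / √(s ^ 2 + ε ^ 2)) s := by
    have := ((hasDerivAt_pow 2 s).add_const (ε ^ 2)).sqrt hpos.ne'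
    refine this.congr_deriv ?_
    field_simp
    norm_num
  refine ⟨(h1.sub_const ε).add (hasDerivAt_id s), ?_, ?_⟩
  · exact ((hasDerivAt_id s).div h1 hq.ne').add_const 1
  · refine div_nonneg ?_ (by positivity)
    have : 1 * √(s ^ 2 + ε ^ 2) - s * (s / √(s ^ 2 + ε ^ 2)) = ε ^ 2 / √(s ^ 2 + ε ^ 2) := by
      field_simp
      rw [hqq]; ring
    rw [this]; positivity

lemma phi_bound (ε : ℝ) (hε : 0 < ε) (s L g : ℝ) (h : -L + s ≤ g) :
    -((s / √(s ^ 2 + ε ^ 2) + 1) * L) ≤ 2 * |g| + ε := by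
  have hpos : 0 < s ^ 2 + ε ^ 2 := by positivity
  have hq : 0 < √(s ^ 2 + ε ^ 2) := sqrt_pos.2 hpos
  have hqq : √(s ^ 2 + ε ^ 2) ^ 2 = s ^ 2 + ε ^ 2 := sq_sqrt hpos.le
  have hqs : |s| ≤ √(s ^ 2 + ε ^ 2) := by
    rw [← sqrt_sq_eq_abs]; exact sqrt_le_sqrt (by nlinarith)
  have hqe : √(s ^ 2 + ε ^ 2) ≤ |s| + ε := by
    refine sqrt_le_iff.2 ⟨by positivity, ?_⟩
    nlinarith [sq_abs s, abs_nonneg s]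
  set q := √(s ^ 2 + ε ^ 2)
  set d := s / q with hd
  have hdq : d * q = s := by rw [hd]; field_simp
  have hd1 : |d| ≤ 1 := by
    rw [hd, abs_div, abs_of_pos hq]; exact (div_le_one hq).2 hqs
  obtain ⟨ha, hb⟩ := abs_le.1 hd1
  have h1 : -((d + 1) * L) ≤ (d + 1) * (g - s) := by nlinarith
  have h2 : (d + 1) * g ≤ 2 * |g| := by
    nlinarith [le_abs_self g, abs_nonneg g]
  have h3 : (d + 1) * (-s) ≤ ε := by
    rcases le_total 0 s with hs | hs
    · nlinarith
    · rw [abs_of_nonpos hs] at hqe hqs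
      have hdn : d ≤ 0 := div_nonpos_of_nonpos_of_nonneg hs hq.le
      nlinarith
  linarith

theorem local_boundedness_subsolution {N : ℕ} (hN : 3 ≤ N) (t R : ℝ)
    (ht : (N : ℝ) < t) (hR : 0 < R) :
    ∃ C > (0 : ℝ), ∀ (Ω : Set (EuclideanSpace ℝ (Fin N))), IsOpen Ω →
      ∀ y : EuclideanSpace ℝ (Fin N), Metric.closedBall y (2 * R) ⊆ Ω →
      ∀ u g : EuclideanSpace ℝ (Fin N) → ℝ, ContDiffOn ℝ 2 u Ω →
        AEMeasurable g (volume.restrict (Metric.ball y (2 * R))) →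
        IntegrableOn (fun x => |g x| ^ (t / 2)) (Metric.ball y (2 * R)) →
        (∀ x ∈ Ω, -lap u x + u x ≤ g x) →
        ∀ z ∈ Metric.ball y R,
          u z ≤ C * ((∫ x in Metric.ball y (2 * R), max (u x) 0 ^ 2) ^ ((1:ℝ)/2)
            + (∫ x in Metric.ball y (2 * R), |g x| ^ (t / 2)) ^ (2 / t)) := by
  have hN' : (3 : ℝ) ≤ N := by exact_mod_cast hN
  have ht0 : 0 < t := by linarith
  set V := volume.real (Metric.ball (0 : EuclideanSpace ℝ (Fin N)) 1) with hV
  have hV0 : 0 ≤ V := by rw [hV]; positivity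
  set ρ0 := ∫ x : EuclideanSpace ℝ (Fin N), rho x with hρ
  have hρ0 : 0 < ρ0 := rho_cont.integral_pos_of_hasCompactSupport_nonneg_nonzero
    (x := 0) rho_supp rho_nonneg (by simp [rho])
  have hp : (N : ℝ) / (t / 2) < 2 := by
    rw [div_lt_iff₀ (by positivity)]; linarith
  set A := 2 * (V + 1) * R ^ (-(N / 2 : ℝ)) with hA
  set B := (V + 1) / (2 * (2 - N / (t / 2))) * R ^ (2 - N / (t / 2) : ℝ) with hB
  have hA0 : 0 < A := by positivity
  have hB0 : 0 < B := by
    have : 0 < 2 - N / (t / 2) := by linarith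
    positivity
  refine ⟨(A + B) / (2 * ρ0), by positivity, ?_⟩
  intro Ω hΩ y hy u g hu _ hg hsub z hz
  set S0 := (∫ x in Metric.ball y (2 * R), max (u x) 0 ^ 2) ^ ((1:ℝ)/2) with hS0
  set G0 := (∫ x in Metric.ball y (2 * R), |g x| ^ (t / 2)) ^ (2 / t) with hG0
  have hS00 : 0 ≤ S0 := rpow_nonneg (integral_nonneg fun x => by positivity) _
  have hG00 : 0 ≤ G0 := rpow_nonneg (integral_nonneg fun x => by positivity) _
  rw [Metric.mem_ball] at hz
  have hsubset : Metric.ball z R ⊆ Metric.ball y (2 * R) :=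
    Metric.ball_subset_ball' (by linarith)
  -- the cutoff
  let χ : ContDiffBump y := ⟨R + dist z y, 2 * R, by positivity, by linarith⟩
  have hχ1 : ∀ x ∈ Metric.ball z R, χ x = 1 := by
    intro x hx
    refine χ.one_of_mem_closedBall ?_
    have := dist_triangle x z y
    rw [Metric.mem_ball] at hx
    show dist x y ≤ R + dist z y
    linarith
  set v : EuclideanSpace ℝ (Fin N) → ℝ := fun x => χ x * u x with hv
  have hvs : HasCompactSupport v := χ.hasCompactSupport.mul_right
  have hvc : ContDiff ℝ 2 v := by
    rw [contDiff_iff_contDiffAt]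
    intro x
    by_cases hx : x ∈ Ω
    · exact (χ.contDiff.contDiffAt).mul (hu.contDiffAt (hΩ.mem_nhds hx))
    · have hx' : x ∉ tsupport χ := by
        rw [χ.tsupport_eq]; exact fun h => hx (hy h)
      refine (contDiffAt_const (c := (0:ℝ))).congr_of_eventuallyEq ?_
      filter_upwards [(isClosed_tsupport χ).isOpen_compl.mem_nhds hx'] with a ha
      simp [hv, image_eq_zero_of_notMem_tsupport ha]
  have hvu : ∀ x ∈ Metric.ball z R, v x = u x := fun x hx => by simp [hv, hχ1 x hx]
  have hlapv : ∀ x ∈ Metric.ball z R, lap v x = lap u x := by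
    intro x hx
    have : v =ᶠ[nhds x] u := by
      filter_upwards [Metric.isOpen_ball.mem_nhds hx] with a ha using hvu a ha
    simp only [lap, (this.iteratedFDeriv ℝ 2).self_of_nhds]
  have hui : IntegrableOn (fun x => max (u x) 0 ^ 2) (Metric.ball y (2 * R)) := by
    refine IntegrableOn.mono_set ?_ Metric.ball_subset_closedBall
    refine ContinuousOn.integrableOn_compact (isCompact_closedBall _ _) ?_
    exact ((hu.continuousOn.mono hy).sup continuousOn_const).pow 2
  have hgS : ∀ ε > 0, ∫ x in Metric.ball z R, |g x| ^ (t / 2) ≤ (G0 + ε) ^ (t / 2) := by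
    intro ε hε
    have h0 : 0 ≤ ∫ x in Metric.ball y (2 * R), |g x| ^ (t / 2) :=
      integral_nonneg fun x => by positivity
    calc _ ≤ ∫ x in Metric.ball y (2 * R), |g x| ^ (t / 2) :=
          setIntegral_mono_set hg (Filter.Eventually.of_forall fun x => by positivity)
            hsubset.eventuallyLE
      _ = G0 ^ (t / 2) := by
          rw [hG0, ← rpow_mul h0]
          have : 2 / t * (t / 2) = 1 := by field_simp
          rw [this, rpow_one]
      _ ≤ _ := by gcongr; linarith
  have huS : ∀ ε > 0, ∫ x in Metric.ball z R, max (u x) 0 ^ 2 ≤ (S0 + ε) ^ (2:ℝ) := by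
    intro ε hε
    have h0 : 0 ≤ ∫ x in Metric.ball y (2 * R), max (u x) 0 ^ 2 :=
      integral_nonneg fun x => by positivity
    calc _ ≤ ∫ x in Metric.ball y (2 * R), max (u x) 0 ^ 2 :=
          setIntegral_mono_set hui (Filter.Eventually.of_forall fun x => by positivity)
            hsubset.eventuallyLE
      _ = S0 ^ (2:ℝ) := by
          rw [hS0, ← rpow_mul h0]
          norm_num
      _ ≤ _ := by gcongr; linarith
  have hzz : z ∈ Metric.ball z R := Metric.mem_ball_self hR
  have main : ∀ ε > 0, 2 * ρ0 * u z ≤ A * S0 + B * G0 + ε * (A + B + V / 8 * R ^ 2 + ρ0) := by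
    intro ε hε
    have hφc : ContDiff ℝ 2 (fun x => √(v x ^ 2 + ε ^ 2) - ε + v x) :=
      (((hvc.pow 2).add contDiff_const).sqrt (fun x => by positivity) |>.sub contDiff_const).add hvc
    have hφs : HasCompactSupport (fun x => √(v x ^ 2 + ε ^ 2) - ε + v x) :=
      hvs.comp_left (g := fun s => √(s ^ 2 + ε ^ 2) - ε + s) (by simp [sqrt_sq hε.le])
    have := key_est (fun x => √(v x ^ 2 + ε ^ 2) - ε + v x) hφc hφs z R (t / 2) (G0 + ε) (S0 + ε)
      ε V hR hV (by linarith) hp (by positivity) (by positivity) hε.le g (fun x => max (u x) 0)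
      (hg.mono_set hsubset) (hgS ε hε) (fun x => le_max_right _ _)
      (by simpa only [rpow_two] using hui.mono_set hsubset) (by simpa only [rpow_two] using huS ε hε)
      (by
        intro x hx
        show √(v x ^ 2 + ε ^ 2) - ε + v x ≤ 2 * max (u x) 0
        rw [hvu x hx]
        have hqe : √(u x ^ 2 + ε ^ 2) ≤ |u x| + ε := by
          refine sqrt_le_iff.2 ⟨by positivity, ?_⟩
          nlinarith [sq_abs (u x), abs_nonneg (u x)]
        rcases le_total 0 (u x) with h | h
        · rw [max_eq_left h]; rw [abs_of_nonneg h] at hqe; linarith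
        · rw [max_eq_right h]; rw [abs_of_nonpos h] at hqe; linarith)
      (by
        intro x hx
        have h1 := lap_comp v hvc (fun s => √(s ^ 2 + ε ^ 2) - ε + s)
          (fun s => s / √(s ^ 2 + ε ^ 2) + 1) _ (fun s => (phi_facts ε hε s).1)
          (fun s => (phi_facts ε hε s).2.1) (fun s => (phi_facts ε hε s).2.2) x
        have h2 := phi_bound ε hε (v x) (lap v x) (g x) (by
          rw [hlapv x hx, hvu x hx]
          exact hsub x (hy (Metric.ball_subset_closedBall (hsubset hx))))
        exact (neg_le_neg h1).trans h2)
    simp only [hvu z hzz, ← hρ, ← hA, ← hB] at this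
    have hq : u z ≤ √(u z ^ 2 + ε ^ 2) := by
      refine le_sqrt_of_sq_le ?_
      nlinarith
    have h5 : (2 * u z - ε) * ρ0 ≤ (√(u z ^ 2 + ε ^ 2) - ε + u z) * ρ0 := by
      gcongr; linarith
    linarith
  have hD : 0 < A + B + V / 8 * R ^ 2 + ρ0 := by positivity
  have fin : 2 * ρ0 * u z ≤ A * S0 + B * G0 := by
    refine le_of_forall_pos_le_add fun ε hε => ?_
    have := main (ε / (A + B + V / 8 * R ^ 2 + ρ0)) (by positivity)
    rwa [div_mul_cancel₀ _ hD.ne'] at this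
  rw [div_mul_eq_mul_div, le_div_iff₀ (by positivity)]
  nlinarith [mul_nonneg hA0.le hG00, mul_nonneg hB0.le hS00]
end

section
/- (Vanishing lemma) Let N ≥ 3 be an integer, set 2* = 2N/(N−2), and let R > 0 and M > 0. Let (u_n) be a sequence of compactly supported C¹ functions ℝ^N → ℝ satisfying ∫_{ℝ^N}(‖∇u_n‖² + u_n²) dx ≤ M for all n. If lim_{n→∞} sup_{x ∈ ℝ^N} ∫_{B(x,R)} |u_n(y)|^{2*} dy = 0, then lim_{n→∞} ∫_{ℝ^N} |u_n(x)|^{2*} dx = 0. -/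
open MeasureTheory Real Filter

open scoped ENNReal NNReal in
lemma aux_tonelli {E : Type*} [NormedAddCommGroup E] [NormedSpace ℝ E] [FiniteDimensional ℝ E]
    [MeasureSpace E] [BorelSpace E] [(volume : Measure E).IsAddHaarMeasure]
    (f g : E → ℝ≥0∞) (hf : Measurable f) (hg : Measurable g) :
    ∫⁻ x : E, ∫⁻ y : E, f (y - x) * g y = (∫⁻ x : E, f x) * ∫⁻ y : E, g y := by
  rw [lintegral_lintegral_swap]
  · have : ∀ y : E, ∫⁻ x : E, f (y - x) * g y = (∫⁻ x : E, f x) * g y := by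
      intro y
      rw [lintegral_mul_const _ (by fun_prop)]
      rw [lintegral_sub_left_eq_self (μ := volume) f y]
    simp_rw [this]
    rw [lintegral_const_mul _ hg]
  · apply Measurable.aemeasurable
    simp only [Function.uncurry_def]
    fun_prop

open scoped ENNReal NNReal in
lemma aux_cs (a b c d t : ℝ) (ht0 : 0 ≤ t) (ht : t ≤ a * b + c * d) :
    ENNReal.ofReal t ^ 2 ≤ (ENNReal.ofReal a ^ 2 + ENNReal.ofReal c ^ 2) *
      (ENNReal.ofReal b ^ 2 + ENNReal.ofReal d ^ 2) ∨ a < 0 ∨ b < 0 ∨ c < 0 ∨ d < 0 := by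
  by_cases h : a < 0 ∨ b < 0 ∨ c < 0 ∨ d < 0
  · exact Or.inr h
  · left
    push Not at h
    obtain ⟨ha, hb, hc, hd⟩ := h
    rw [← ENNReal.ofReal_pow ht0, ← ENNReal.ofReal_pow ha, ← ENNReal.ofReal_pow hb,
      ← ENNReal.ofReal_pow hc, ← ENNReal.ofReal_pow hd, ← ENNReal.ofReal_add (by positivity) (by positivity),
      ← ENNReal.ofReal_add (by positivity) (by positivity), ← ENNReal.ofReal_mul (by positivity)]
    apply ENNReal.ofReal_le_ofReal
    have : t ^ 2 ≤ (a * b + c * d) ^ 2 := by gcongr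
    nlinarith [sq_nonneg (a * d - c * b)]

open scoped ENNReal NNReal in
lemma aux_key {N : ℕ} (R : ℝ) (hR : 0 < R) (hN : 3 ≤ N) (q : ℝ≥0)
    (hq2 : 2 < q) (hq : (q : ℝ)⁻¹ = ((2 : ℝ≥0) : ℝ)⁻¹ - (N : ℝ)⁻¹) :
    ∃ K : ℝ≥0∞, K ≠ ⊤ ∧ ∀ u : EuclideanSpace ℝ (Fin N) → ℝ, ContDiff ℝ 1 u →
      HasCompactSupport u → ∀ S : ℝ≥0∞,
      (∀ x, ∫⁻ y in Metric.ball x R, ‖u y‖ₑ ^ (q : ℝ) ≤ S) →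
      ∫⁻ y, ‖u y‖ₑ ^ (q : ℝ) ≤
        K * S ^ (1 - 2 / (q : ℝ)) * ∫⁻ y, (‖fderiv ℝ u y‖ₑ ^ 2 + ‖u y‖ₑ ^ 2) := by
  let φ : ContDiffBump (0 : EuclideanSpace ℝ (Fin N)) := ⟨R / 2, R, by positivity, by linarith⟩
  have hφ : ContDiff ℝ 1 φ := φ.contDiff
  have hφc : HasCompactSupport φ := φ.hasCompactSupport
  have hq0' : (2 : ℝ) < q := by exact_mod_cast hq2
  have hq0 : (0 : ℝ) < q := by linarith
  have hDφ : Continuous (fderiv ℝ φ) := hφ.continuous_fderiv (by norm_num)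
  have hφcont : Continuous φ := hφ.continuous
  have mφ : Measurable (fun x => ‖φ x‖ₑ ^ (q : ℝ)) := by fun_prop
  have mF : Measurable (fun x => ‖φ x‖ₑ ^ 2 + ‖fderiv ℝ φ x‖ₑ ^ 2) := by fun_prop
  set A := ∫⁻ x, ‖φ x‖ₑ ^ (q : ℝ) with hA
  set B := ∫⁻ x, (‖φ x‖ₑ ^ 2 + ‖fderiv ℝ φ x‖ₑ ^ 2) with hB
  let C : ℝ≥0∞ := (eLpNormLESNormFDerivOfEqInnerConst
    (volume : Measure (EuclideanSpace ℝ (Fin N))) ((2 : ℝ≥0) : ℝ) : ℝ≥0)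
  have hA0 : A ≠ 0 := by
    intro h
    rw [hA, lintegral_eq_zero_iff mφ] at h
    have h1 : volume (Metric.ball (0 : EuclideanSpace ℝ (Fin N)) R) = 0 := by
      refine measure_mono_null ?_ h
      intro x hx
      have : φ x ≠ 0 := (φ.pos_of_mem_ball hx).ne'
      simp [hq0, this]
    exact (Metric.measure_ball_pos volume _ hR).ne' h1
  have hAt : A ≠ ⊤ := by
    have := (hφcont.memLp_of_hasCompactSupport (p := q) (μ := volume) hφc).eLpNorm_lt_top
    have h2 := lintegral_rpow_enorm_lt_top_of_eLpNorm_lt_top (p := (q : ℝ≥0∞))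
      (by simpa using hq0.ne') (by simp) this
    exact h2.ne
  have hsq : ∀ {F : Type} [NormedAddCommGroup F] (v : EuclideanSpace ℝ (Fin N) → F),
      Continuous v → HasCompactSupport v → ∫⁻ x, ‖v x‖ₑ ^ 2 ≠ ⊤ := by
    intro F _ v hv hvc
    have := (hv.memLp_of_hasCompactSupport (p := 2) (μ := volume) hvc).eLpNorm_lt_top
    have h2 := lintegral_rpow_enorm_lt_top_of_eLpNorm_lt_top (p := 2)
      (by simp) (by simp) this
    simpa using h2.ne
  have hBt : B ≠ ⊤ := by
    rw [hB, lintegral_add_left (by fun_prop)]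
    exact ENNReal.add_ne_top.2 ⟨hsq _ hφcont hφc, hsq _ hDφ (hφc.fderiv ℝ)⟩
  refine ⟨A⁻¹ * (C ^ 2 * B), ENNReal.mul_ne_top (by simpa using hA0)
    (ENNReal.mul_ne_top (by simp [C]) hBt), ?_⟩
  intro u hu huc S hS
  have hDu : Continuous (fderiv ℝ u) := hu.continuous_fderiv (by norm_num)
  have hucont : Continuous u := hu.continuous
  set G := ∫⁻ y, (‖fderiv ℝ u y‖ₑ ^ 2 + ‖u y‖ₑ ^ 2) with hG
  have hloc : ∀ x : EuclideanSpace ℝ (Fin N),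
      ∫⁻ y, ‖φ (y - x)‖ₑ ^ (q : ℝ) * ‖u y‖ₑ ^ (q : ℝ) ≤
      S ^ (1 - 2 / (q : ℝ)) * C ^ 2 * ∫⁻ y, (‖φ (y - x)‖ₑ ^ 2 + ‖fderiv ℝ φ (y - x)‖ₑ ^ 2) *
        (‖fderiv ℝ u y‖ₑ ^ 2 + ‖u y‖ₑ ^ 2) := by
    intro x
    let w : EuclideanSpace ℝ (Fin N) → ℝ := fun y => φ (y - x) * u y
    have hw : ContDiff ℝ 1 w := (hφ.comp (contDiff_id.sub contDiff_const)).mul hu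
    have hwc : HasCompactSupport w := huc.mul_left
    set I := ∫⁻ y, ‖w y‖ₑ ^ (q : ℝ) with hI
    have e1 : ∫⁻ y, ‖φ (y - x)‖ₑ ^ (q : ℝ) * ‖u y‖ₑ ^ (q : ℝ) = I := by
      rw [hI]; congr 1; ext y
      rw [← ENNReal.mul_rpow_of_nonneg _ _ hq0.le, ← enorm_mul]
    have hIS : I ≤ S := by
      refine le_trans ?_ (hS x)
      rw [← lintegral_indicator measurableSet_ball]
      apply lintegral_mono
      intro y
      by_cases hy : y ∈ Metric.ball x R
      · simp only [Set.indicator_of_mem hy]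
        apply ENNReal.rpow_le_rpow _ hq0.le
        simp only [w, enorm_mul]
        calc _ ≤ 1 * ‖u y‖ₑ := by
              gcongr
              rw [← enorm_one (G := ℝ), enorm_le_iff_norm_le, Real.norm_of_nonneg φ.nonneg, norm_one]
              exact φ.le_one
          _ = _ := one_mul _
      · have : φ (y - x) = 0 := by
          apply φ.zero_of_le_dist
          simp only [Metric.mem_ball, not_lt] at hy
          simpa [dist_eq_norm] using hy
        simp [Set.indicator_of_notMem hy, w, this, hq0]
    have hsob := eLpNorm_le_eLpNorm_fderiv_of_eq_inner
      (volume : Measure (EuclideanSpace ℝ (Fin N))) hw hwc (p := 2) (p' := q) (by norm_num)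
      (by simp; omega) (by simpa using hq)
    have e2 : I ^ (2 / (q : ℝ)) ≤ C ^ 2 * ∫⁻ y, ‖fderiv ℝ w y‖ₑ ^ 2 := by
      have h1 : eLpNorm w q volume = I ^ (1 / (q : ℝ)) := by
        rw [eLpNorm_eq_lintegral_rpow_enorm_toReal (by simpa using hq0.ne') (by simp)]
        simp [hI]
      have h2 : eLpNorm (fderiv ℝ w) ((2 : ℝ≥0) : ℝ≥0∞) volume ^ 2 = ∫⁻ y, ‖fderiv ℝ w y‖ₑ ^ 2 := by
        rw [eLpNorm_eq_lintegral_rpow_enorm_toReal (by simp) (by simp)]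
        rw [← ENNReal.rpow_natCast, ← ENNReal.rpow_mul]
        simp
      rw [← h2, ← mul_pow]
      calc I ^ (2 / (q : ℝ)) = (I ^ (1 / (q : ℝ))) ^ 2 := by
            rw [← ENNReal.rpow_natCast, ← ENNReal.rpow_mul]; congr 1; push_cast; ring
        _ ≤ _ := by rw [← h1]; gcongr
    have h2q : 2 / (q : ℝ) < 1 := by rw [div_lt_one hq0]; exact hq0'
    have e3 : I = I ^ (1 - 2 / (q : ℝ)) * I ^ (2 / (q : ℝ)) := by
      rw [← ENNReal.rpow_add_of_nonneg _ _ (by linarith) (by positivity)]; simp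
    rw [e1, e3, mul_assoc]
    have hpt : ∀ y, ‖fderiv ℝ w y‖ₑ ^ 2 ≤ (‖φ (y - x)‖ₑ ^ 2 + ‖fderiv ℝ φ (y - x)‖ₑ ^ 2) *
        (‖fderiv ℝ u y‖ₑ ^ 2 + ‖u y‖ₑ ^ 2) := by
      intro y
      have hd1 : HasFDerivAt (fun y => φ (y - x)) (fderiv ℝ φ (y - x)) y := by
        have := (hφ.differentiable (by norm_num) (y - x)).hasFDerivAt
        exact (HasFDerivAt.comp y this ((hasFDerivAt_id y).sub_const x))
      have hd2 : HasFDerivAt u (fderiv ℝ u y) y := (hu.differentiable (by norm_num) y).hasFDerivAt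
      have hd : fderiv ℝ w y = _ := (hd1.mul hd2).fderiv
      have hn : ‖fderiv ℝ w y‖ ≤ ‖φ (y - x)‖ * ‖fderiv ℝ u y‖ + ‖fderiv ℝ φ (y - x)‖ * ‖u y‖ := by
        rw [hd]
        refine (norm_add_le _ _).trans ?_
        rw [norm_smul, norm_smul, mul_comm ‖u y‖]
      have := aux_cs _ _ _ _ _ (norm_nonneg _) hn
      simp only [ofReal_norm] at this
      rcases this with h | h | h | h | h
      · exact h
      all_goals exact absurd h (not_lt.2 (norm_nonneg _))
    refine mul_le_mul' ?_ ?_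
    · exact ENNReal.rpow_le_rpow hIS (by linarith)
    · refine e2.trans ?_
      gcongr with y
      exact hpt y
  have hint := lintegral_mono (μ := volume) hloc
  rw [aux_tonelli (fun x => ‖φ x‖ₑ ^ (q : ℝ)) (fun y => ‖u y‖ₑ ^ (q : ℝ)) mφ (by fun_prop),
    lintegral_const_mul _ (by
      apply Measurable.lintegral_prod_right' (f := fun p : EuclideanSpace ℝ (Fin N) × EuclideanSpace ℝ (Fin N) => (‖φ (p.2 - p.1)‖ₑ ^ 2 + ‖fderiv ℝ φ (p.2 - p.1)‖ₑ ^ 2) *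
        (‖fderiv ℝ u p.2‖ₑ ^ 2 + ‖u p.2‖ₑ ^ 2))
      fun_prop),
    aux_tonelli (fun x => ‖φ x‖ₑ ^ 2 + ‖fderiv ℝ φ x‖ₑ ^ 2)
      (fun y => ‖fderiv ℝ u y‖ₑ ^ 2 + ‖u y‖ₑ ^ 2) mF (by fun_prop)] at hint
  rw [← hA, ← hB, ← hG] at hint
  set J := ∫⁻ y, ‖u y‖ₑ ^ (q : ℝ)
  calc J = A⁻¹ * (A * J) := by rw [← mul_assoc, ENNReal.inv_mul_cancel hA0 hAt, one_mul]
    _ ≤ A⁻¹ * (S ^ (1 - 2 / (q : ℝ)) * C ^ 2 * (B * G)) := by gcongr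
    _ = _ := by ring

open scoped ENNReal NNReal in
theorem vanishing_lemma {N : ℕ} (hN : 3 ≤ N) (R M : ℝ) (hR : 0 < R) (hM : 0 < M)
    (u : ℕ → EuclideanSpace ℝ (Fin N) → ℝ)
    (hu : ∀ n, ContDiff ℝ 1 (u n)) (hsupp : ∀ n, HasCompactSupport (u n))
    (hbound : ∀ n, ∫ x, (‖gradient (u n) x‖ ^ 2 + u n x ^ 2) ≤ M)
    (hvanish : Tendsto
      (fun n => ⨆ x : EuclideanSpace ℝ (Fin N),
        ∫ y in Metric.ball x R, |u n y| ^ (2 * (N : ℝ) / ((N : ℝ) - 2)))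
      atTop (nhds 0)) :
    Tendsto (fun n => ∫ x, |u n x| ^ (2 * (N : ℝ) / ((N : ℝ) - 2)))
      atTop (nhds 0) := by
  have hN' : (3 : ℝ) ≤ N := by exact_mod_cast hN
  have hpos : 0 < 2 * (N : ℝ) / ((N : ℝ) - 2) := div_pos (by linarith) (by linarith)
  obtain ⟨q, hqdef⟩ : ∃ q : ℝ≥0, (q : ℝ) = 2 * (N : ℝ) / ((N : ℝ) - 2) := ⟨⟨_, hpos.le⟩, rfl⟩
  have hq2 : (2 : ℝ) < q := by
    rw [hqdef, lt_div_iff₀ (by linarith)]; linarith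
  have hqi : (q : ℝ)⁻¹ = ((2 : ℝ≥0) : ℝ)⁻¹ - (N : ℝ)⁻¹ := by
    rw [hqdef]
    have : (N : ℝ) - 2 ≠ 0 := by linarith
    have : (N : ℝ) ≠ 0 := by linarith
    push_cast
    field_simp
  simp only [← hqdef] at hpos hvanish ⊢
  have hq0 : (0 : ℝ) < q := hpos
  obtain ⟨K, hK, hkey⟩ := aux_key R hR hN q (by exact_mod_cast hq2) hqi
  have hcont : ∀ n, Continuous (fun x => |u n x| ^ (q : ℝ)) := fun n =>
    ((hu n).continuous.abs).rpow_const (fun _ => Or.inr hq0.le)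
  have hint : ∀ n, Integrable (fun x => |u n x| ^ (q : ℝ)) := by
    intro n
    apply (hcont n).integrable_of_hasCompactSupport
    exact (hsupp n).comp_left (g := fun t : ℝ => |t| ^ (q : ℝ)) (by simp [hq0.ne'])
  have hnn : ∀ n x, 0 ≤ |u n x| ^ (q : ℝ) := fun n x => by positivity
  have hen : ∀ n x, ENNReal.ofReal (|u n x| ^ (q : ℝ)) = ‖u n x‖ₑ ^ (q : ℝ) := by
    intro n x
    rw [← ENNReal.ofReal_rpow_of_nonneg (abs_nonneg _) hq0.le, ← Real.norm_eq_abs, ofReal_norm]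
  set s : ℕ → ℝ := fun n => ⨆ x : EuclideanSpace ℝ (Fin N),
        ∫ y in Metric.ball x R, |u n y| ^ (q : ℝ) with hs
  have hmain : ∀ n, ENNReal.ofReal (∫ x, |u n x| ^ (q : ℝ)) ≤
      K * ENNReal.ofReal (s n) ^ (1 - 2 / (q : ℝ)) * ENNReal.ofReal M := by
    intro n
    rw [ofReal_integral_eq_lintegral_ofReal (hint n) (Eventually.of_forall (hnn n))]
    simp_rw [hen]
    refine (hkey (u n) (hu n) (hsupp n) (ENNReal.ofReal (s n)) ?_).trans ?_
    · intro x
      simp_rw [← hen]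
      rw [← ofReal_integral_eq_lintegral_ofReal (hint n).integrableOn
        (Eventually.of_forall (hnn n))]
      apply ENNReal.ofReal_le_ofReal
      apply le_ciSup (f := fun x => ∫ y in Metric.ball x R, |u n y| ^ (q : ℝ)) _ x
      refine ⟨∫ y, |u n y| ^ (q : ℝ), ?_⟩
      rintro _ ⟨z, rfl⟩
      exact setIntegral_le_integral (hint n) (Eventually.of_forall (hnn n))
    · gcongr
      refine le_trans (le_of_eq ?_) (ENNReal.ofReal_le_ofReal (hbound n))
      have hg : ∀ x, ‖gradient (u n) x‖ = ‖fderiv ℝ (u n) x‖ := fun x => by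
        simp [gradient]
      simp_rw [hg]
      have hDu : Continuous (fderiv ℝ (u n)) := (hu n).continuous_fderiv (by norm_num)
      have hucont : Continuous (u n) := (hu n).continuous
      rw [ofReal_integral_eq_lintegral_ofReal]
      · congr 1; ext x
        rw [ENNReal.ofReal_add (by positivity) (by positivity), ENNReal.ofReal_pow (norm_nonneg _),
          ofReal_norm, ← sq_abs, ENNReal.ofReal_pow (abs_nonneg _), ← Real.norm_eq_abs, ofReal_norm]
      · apply Continuous.integrable_of_hasCompactSupport (by fun_prop)
        apply HasCompactSupport.add
        · exact ((hsupp n).fderiv ℝ).comp_left (g := fun t => ‖t‖ ^ 2) (by simp)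
        · exact (hsupp n).comp_left (g := fun t : ℝ => t ^ 2) (by simp)
      · exact Eventually.of_forall fun x => by positivity
  have he : 0 < 1 - 2 / (q : ℝ) := by
    have : 2 / (q : ℝ) < 1 := by rw [div_lt_one hq0]; exact hq2
    linarith
  have hlim : Tendsto (fun n => K * ENNReal.ofReal (s n) ^ (1 - 2 / (q : ℝ)) * ENNReal.ofReal M)
      atTop (nhds 0) := by
    have h1 : Tendsto (fun n => ENNReal.ofReal (s n)) atTop (nhds 0) := by
      simpa using ENNReal.tendsto_ofReal hvanish
    have h2 := h1.ennrpow_const (1 - 2 / (q : ℝ))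
    rw [ENNReal.zero_rpow_of_pos he] at h2
    have h3 := ENNReal.Tendsto.const_mul h2 (Or.inr hK)
    have h4 := ENNReal.Tendsto.mul_const h3 (b := ENNReal.ofReal M) (Or.inr ENNReal.ofReal_ne_top)
    simpa using h4
  have h5 := tendsto_of_tendsto_of_tendsto_of_le_of_le tendsto_const_nhds hlim
    (fun n => zero_le) hmain
  have h6 := (ENNReal.tendsto_toReal ENNReal.zero_ne_top).comp h5
  refine Tendsto.congr ?_ (by simpa using h6)
  intro n
  exact ENNReal.toReal_ofReal (integral_nonneg (hnn n))
end

section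
/- Let N ≥ 1 be an integer and R > 0. Let u : ℝ^N → ℝ be a bounded C² function such that u(x) > 0 for all x ∈ ℝ^N, u(x) → 0 as ‖x‖ → ∞, and −Δu(x) + (1/2)·u(x) ≤ 0 for all x with ‖x‖ ≥ R. Then there exists a constant M > 0 such that u(x) ≤ M·exp(−‖x‖/2) for all x ∈ ℝ^N. -/
open MeasureTheory Real Filter

lemma second_deriv_nonpos_of_isLocalMax (p p' : ℝ → ℝ) (c : ℝ)
    (hp : ∀ t, HasDerivAt p (p' t) t) (hp' : HasDerivAt p' c 0)
    (hmax : ∀ t, p t ≤ p 0) : c ≤ 0 := by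
  by_contra! hc
  have hd : deriv p = p' := funext fun t => (hp t).deriv
  have hlm : IsLocalMax p 0 := Filter.Eventually.of_forall hmax
  have hmin : IsLocalMin p 0 := by
    apply isLocalMin_of_deriv_deriv_pos
    · rw [hd, hp'.deriv]; exact hc
    · exact hlm.deriv_eq_zero
    · exact (hp 0).continuousAt
  have hconst : p =ᶠ[nhds 0] fun _ => p 0 := by
    filter_upwards [hmin] with t ht
    exact le_antisymm (hmax t) ht
  have h2 : deriv p =ᶠ[nhds 0] fun _ => 0 := by
    have := hconst.deriv
    simpa using this
  have h3 := h2.deriv_eq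
  rw [hd, hp'.deriv] at h3
  simp at h3
  linarith

lemma u_line {N : ℕ} (u : EuclideanSpace ℝ (Fin N) → ℝ) (hu : ContDiff ℝ 2 u)
    (x e : EuclideanSpace ℝ (Fin N)) :
    (∀ t : ℝ, HasDerivAt (fun t : ℝ => u (x + t • e)) (fderiv ℝ u (x + t • e) e) t) ∧
    HasDerivAt (fun t : ℝ => fderiv ℝ u (x + t • e) e) (iteratedFDeriv ℝ 2 u x ![e, e]) 0 := by
  have hl : ∀ t : ℝ, HasDerivAt (fun t : ℝ => x + t • e) e t := by
    intro t
    simpa using ((hasDerivAt_id t).smul_const e).const_add x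
  have hd : Differentiable ℝ u := hu.differentiable (by norm_num)
  have hd2 : Differentiable ℝ (fderiv ℝ u) :=
    (hu.fderiv_right (m := 1) (by norm_num)).differentiable (by norm_num)
  refine ⟨fun t => (hd _).hasFDerivAt.comp_hasDerivAt t (hl t), ?_⟩
  have h1 := (hd2 (x + (0:ℝ) • e)).hasFDerivAt.comp_hasDerivAt 0 (hl 0)
  have h2 := h1.clm_apply (hasDerivAt_const (0:ℝ) e)
  rw [iteratedFDeriv_two_apply]
  simpa using h2

lemma w_line (a b : ℝ) (hab : ∀ t : ℝ, 0 < a + 2 * b * t + t ^ 2) :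
    (∀ t : ℝ, HasDerivAt (fun t : ℝ => Real.exp (-√(a + 2 * b * t + t ^ 2) / 2))
      (Real.exp (-√(a + 2 * b * t + t ^ 2) / 2) * (-((b + t) / √(a + 2 * b * t + t ^ 2)) / 2)) t) ∧
    HasDerivAt (fun t : ℝ => Real.exp (-√(a + 2 * b * t + t ^ 2) / 2) *
      (-((b + t) / √(a + 2 * b * t + t ^ 2)) / 2))
      (Real.exp (-√a / 2) * (b ^ 2 / (4 * √a ^ 2) - (1 / √a - b ^ 2 / √a ^ 3) / 2)) 0 := by
  have hq : ∀ t : ℝ, HasDerivAt (fun t : ℝ => a + 2 * b * t + t ^ 2) (2 * b + 2 * t) t := by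
    intro t
    have := (((hasDerivAt_id t).const_mul (2 * b)).const_add a).add ((hasDerivAt_id t).pow 2)
    exact this.congr_deriv (by simp)
  have hs : ∀ t : ℝ, HasDerivAt (fun t : ℝ => √(a + 2 * b * t + t ^ 2))
      ((b + t) / √(a + 2 * b * t + t ^ 2)) t := by
    intro t
    have := (hq t).sqrt (hab t).ne'
    convert this using 1
    have : √(a + 2 * b * t + t ^ 2) ≠ 0 := (Real.sqrt_pos.2 (hab t)).ne'
    field_simp
  have he : ∀ t : ℝ, HasDerivAt (fun t : ℝ => Real.exp (-√(a + 2 * b * t + t ^ 2) / 2))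
      (Real.exp (-√(a + 2 * b * t + t ^ 2) / 2) * (-((b + t) / √(a + 2 * b * t + t ^ 2)) / 2)) t :=
    fun t => ((hs t).neg.div_const 2).exp
  refine ⟨he, ?_⟩
  have ha : 0 < √a := Real.sqrt_pos.2 (by simpa using hab 0)
  have hb : HasDerivAt (fun t : ℝ => b + t) 1 0 := (hasDerivAt_id (0:ℝ)).const_add b
  have := (he 0).mul (((hb.div (hs 0) (by simpa using ha.ne')).neg).div_const 2)
  refine this.congr_deriv ?_
  simp
  field_simp
  ring

theorem exponential_decay_comparison {N : ℕ} (hN : 1 ≤ N) (R : ℝ) (hR : 0 < R)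
    (u : EuclideanSpace ℝ (Fin N) → ℝ) (hu : ContDiff ℝ 2 u)
    (hbdd : ∃ B : ℝ, ∀ x, |u x| ≤ B)
    (hpos : ∀ x, 0 < u x)
    (hlim : Tendsto u (cocompact (EuclideanSpace ℝ (Fin N))) (nhds 0))
    (hsub : ∀ x, R ≤ ‖x‖ → -lap u x + (1 / 2) * u x ≤ 0) :
    ∃ M > (0 : ℝ), ∀ x, u x ≤ M * Real.exp (-‖x‖ / 2) := by
  obtain ⟨B, hB⟩ := hbdd
  have hB0 : 0 < B := (hpos 0).trans_le ((le_abs_self _).trans (hB 0))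
  set M : ℝ := B * Real.exp (√(1 + R ^ 2) / 2) with hM
  have hM0 : 0 < M := by positivity
  set w : EuclideanSpace ℝ (Fin N) → ℝ := fun x => Real.exp (-√(1 + ‖x‖ ^ 2) / 2) with hw
  have hwc : Continuous w := by rw [hw]; fun_prop
  suffices H : ∀ x, u x ≤ M * w x by
    refine ⟨M, hM0, fun x => (H x).trans ?_⟩
    simp only [hw]
    have : ‖x‖ ≤ √(1 + ‖x‖ ^ 2) := Real.le_sqrt_of_sq_le (by linarith)
    gcongr
  by_contra! hcon
  obtain ⟨y, hy⟩ := hcon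
  have hfc : Continuous fun x => u x - M * w x := hu.continuous.sub (hwc.const_mul M |> fun h => h)
  obtain ⟨z, hz⟩ := hfc.exists_forall_ge' y (by
    have := hlim.eventually (gt_mem_nhds (sub_pos.2 hy))
    filter_upwards [this] with x hx
    have : 0 < M * w x := mul_pos hM0 (Real.exp_pos _)
    linarith)
  have hzpos : M * w z < u z := by have := hz y; linarith
  have hzR : R ≤ ‖z‖ := by
    by_contra! h
    have h1 : √(1 + ‖z‖ ^ 2) ≤ √(1 + R ^ 2) := by gcongr
    have h2 : B ≤ M * w z := by
      rw [hM, hw, mul_assoc, ← Real.exp_add]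
      apply le_mul_of_one_le_right hB0.le
      apply Real.one_le_exp
      linarith
    have := (le_abs_self _).trans (hB z)
    linarith
  have hsz := hsub z hzR
  set s := √(1 + ‖z‖ ^ 2) with hs
  have hs0 : 0 < s := Real.sqrt_pos.2 (by positivity)
  have hs2 : s ^ 2 = 1 + ‖z‖ ^ 2 := Real.sq_sqrt (by positivity)
  have key : ∀ i, iteratedFDeriv ℝ 2 u z ![EuclideanSpace.single i 1, EuclideanSpace.single i 1]
      ≤ M * (w z * (z i ^ 2 / (4 * s ^ 2) - (1 / s - z i ^ 2 / s ^ 3) / 2)) := by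
    intro i
    set e : EuclideanSpace ℝ (Fin N) := EuclideanSpace.single i 1 with he
    have hn : ∀ t : ℝ, 1 + ‖z + t • e‖ ^ 2 = (1 + ‖z‖ ^ 2) + 2 * z i * t + t ^ 2 := by
      intro t
      rw [norm_add_sq_real, inner_smul_right, norm_smul, he, EuclideanSpace.inner_single_right]
      simp
      ring
    obtain ⟨hu1, hu2⟩ := u_line u hu z e
    obtain ⟨hw1, hw2⟩ := w_line (1 + ‖z‖ ^ 2) (z i) (fun t => by rw [← hn]; positivity)
    have := second_deriv_nonpos_of_isLocalMax _ _ _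
      (fun t => (hu1 t).sub ((hw1 t).const_mul M)) (hu2.sub (hw2.const_mul M)) (by
        intro t
        have := hz (z + t • e)
        simp only [hw, hn] at this
        simpa using this)
    linarith
  have hsum : lap u z ≤ M * (w z * (‖z‖ ^ 2 / (4 * s ^ 2) - (N / s - ‖z‖ ^ 2 / s ^ 3) / 2)) := by
    refine (Finset.sum_le_sum fun i _ => key i).trans_eq ?_
    rw [← Finset.mul_sum, ← Finset.mul_sum, Finset.sum_sub_distrib, ← Finset.sum_div,
      ← Finset.sum_div, Finset.sum_sub_distrib, ← Finset.sum_div, EuclideanSpace.real_norm_sq_eq]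
    simp [div_eq_mul_inv, Finset.sum_mul]
  have hbr : ‖z‖ ^ 2 / (4 * s ^ 2) - (N / s - ‖z‖ ^ 2 / s ^ 3) / 2 ≤ 1 / 4 := by
    have h1 : ‖z‖ ^ 2 / (4 * s ^ 2) ≤ 1 / 4 := by
      rw [div_le_div_iff₀ (by positivity) (by norm_num)]; linarith
    have h2 : ‖z‖ ^ 2 / s ^ 3 ≤ 1 / s := by
      rw [div_le_div_iff₀ (by positivity) hs0]
      nlinarith
    have h3 : 1 / s ≤ N / s := by
      have : (1:ℝ) ≤ N := by exact_mod_cast hN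
      gcongr
    linarith
  have hw0 : 0 < w z := Real.exp_pos _
  have h4 : M * (w z * (‖z‖ ^ 2 / (4 * s ^ 2) - (N / s - ‖z‖ ^ 2 / s ^ 3) / 2))
      ≤ M * (w z * (1 / 4)) := by gcongr
  have := mul_pos hM0 hw0
  linarith
end
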